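/- arXiv:1405.3194 — 11 statements merged into one kernel-verified Lean document; each statement's English description precedes it below -/
import Mathlib

section
/- For every positive integer k, the alternating quadratic sine sum satisfies ∑_{n=1}^{2k} (-1)^n * sin(π n² / (4k)) = (-1)^k * √(k/2). -/
open Finset Real

noncomputable def FF (z : ℂ) : ℂ := ∑' n : ℤ, Complex.exp (-π * z * (n : ℂ) ^ 2)

lemma FF_feq {a : ℂ} (ha : 0 < a.re) : FF a = 1 / a ^ (1 / 2 : ℂ) * FF (1 / a) := by
  unfold FF
  rw [Complex.tsum_exp_neg_mul_int_sq ha]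
  simp only [mul_one_div]

lemma FF_add (M : ℕ) (z : ℂ) : FF (z + Complex.I * (2 * M)) = FF z := by
  unfold FF
  refine tsum_congr fun n => ?_
  rw [Complex.exp_eq_exp_iff_exists_int]
  refine ⟨-(M * n ^ 2), ?_⟩
  push_cast
  ring

lemma FF_eq_theta (z : ℂ) : FF z = jacobiTheta (Complex.I * z) := by
  unfold FF jacobiTheta
  refine tsum_congr fun n => ?_
  congr 1
  linear_combination (-π * z * (n : ℂ) ^ 2) * Complex.I_mul_I

open Filter Topology in
lemma FF_tendsto (c : ℝ) : Tendsto (fun t : ℝ => FF (t + Complex.I * c)) atTop (𝓝 1) := by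
  have h := isBigO_at_im_infty_jacobiTheta_sub_one
  have h1 : Tendsto (fun τ : ℂ => rexp (-π * τ.im)) (comap Complex.im atTop) (𝓝 0) := by
    refine Real.tendsto_exp_atBot.comp ?_
    exact (tendsto_id.const_mul_atTop_of_neg (by linarith [pi_pos])).comp tendsto_comap
  have h2 := h.trans_tendsto h1
  have h3 : Tendsto (fun t : ℝ => Complex.I * (t + Complex.I * c)) atTop
      (comap Complex.im atTop) := by
    rw [tendsto_comap_iff]
    refine tendsto_id.congr fun t => ?_
    simp
  have h4 := (h2.comp h3).add_const 1
  simpa [FF_eq_theta, Function.comp_def] using h4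

lemma sum_split (M : ℕ) (hM : 0 < M) (t : ℝ) (ht : 0 < t) :
    FF (1 / ((2 * M : ℝ) ^ 2 * t : ℝ) - Complex.I / (2 * M)) =
      (t : ℂ) ^ (1 / 2 : ℂ) * ∑ r : Fin (2 * M), Complex.exp (π * Complex.I * (r : ℂ) ^ 2 / (2 * M)) *
        (HurwitzZeta.cosKernel ((((r : ℕ) : ℝ) / (2 * M) : ℝ)) t : ℂ) := by
  have : NeZero (2 * M) := ⟨by omega⟩
  have hMR : (M : ℝ) ≠ 0 := by positivity
  have hMC : (M : ℂ) ≠ 0 := by exact_mod_cast hMR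
  have htC : (t : ℂ) ≠ 0 := by exact_mod_cast ht.ne'
  set a : ℂ := 1 / ((2 * M : ℝ) ^ 2 * t : ℝ) - Complex.I / (2 * M) with ha
  have hare : 0 < a.re := by
    have : a.re = 1 / ((2 * M : ℝ) ^ 2 * t) := by
      have : a = ((1 / ((2 * M : ℝ) ^ 2 * t) : ℝ) : ℂ) - Complex.I * ((1 / (2 * M) : ℝ) : ℂ) := by
        rw [ha]; push_cast; ring
      rw [this, Complex.sub_re, Complex.ofReal_re, Complex.re_mul_ofReal]; simp
    rw [this]; positivity
  have key : ∀ (q : ℤ) (r : Fin (2 * M)),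
      Complex.exp (-π * a * ((q * (2 * M : ℕ) + (r : ℕ) : ℤ) : ℂ) ^ 2) =
      Complex.exp (π * Complex.I * (r : ℂ) ^ 2 / (2 * M)) *
        (rexp (-π * (q + (((r : ℕ) : ℝ) / (2 * M) : ℝ)) ^ 2 * (1 / t)) : ℂ) := by
    intro q r
    push_cast
    rw [← Complex.exp_add, Complex.exp_eq_exp_iff_exists_int]
    refine ⟨M * q ^ 2 + q * r, ?_⟩
    rw [ha]
    push_cast
    field_simp
    ring
  have hs : Summable fun n : ℤ => Complex.exp (-π * a * (n : ℂ) ^ 2) := by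
    have := (hasSum_jacobiTheta₂_term 0 (τ := Complex.I * a) (by simpa using hare)).summable
    refine this.congr fun n => ?_
    rw [jacobiTheta₂_term]
    congr 1
    linear_combination (-π * a * (n : ℂ) ^ 2) * -Complex.I_mul_I
  unfold FF
  rw [← (Int.divModEquiv (2 * M)).symm.tsum_eq, ← (Equiv.prodComm _ _).tsum_eq]
  rw [Summable.tsum_prod, tsum_fintype, Finset.mul_sum]
  · refine Finset.sum_congr rfl fun r _ => ?_
    have h := (Complex.hasSum_ofReal.mpr
      (HurwitzZeta.hasSum_int_evenKernel (((r : ℕ) : ℝ) / (2 * M)) (one_div_pos.mpr ht))).mul_left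
        (Complex.exp (π * Complex.I * (r : ℂ) ^ 2 / (2 * M)))
    rw [HurwitzZeta.evenKernel_functional_equation] at h
    have h2 : (1 / (1 / t) ^ (1 / 2 : ℝ) : ℝ) = t ^ (1 / 2 : ℝ) := by
      rw [one_div t, Real.inv_rpow ht.le]; simp
    rw [h2, one_div_one_div, Complex.ofReal_mul, Complex.ofReal_cpow ht.le] at h
    rw [mul_left_comm]
    push_cast at h ⊢
    rw [← h.tsum_eq]
    refine tsum_congr fun q => ?_
    have := key q r
    push_cast at this
    simpa using this
  · exact (Equiv.summable_iff (Equiv.prodComm _ _)).mpr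
      ((Equiv.summable_iff (Int.divModEquiv (2 * M)).symm).mpr hs)

lemma real_mul_cpow {r : ℝ} (hr : 0 < r) {z : ℂ} (hz : z ≠ 0) (s : ℂ) :
    ((r : ℂ) * z) ^ s = (r : ℂ) ^ s * z ^ s := by
  have hr' : (r : ℂ) ≠ 0 := by exact_mod_cast hr.ne'
  rw [Complex.cpow_def_of_ne_zero (mul_ne_zero hr' hz), Complex.cpow_def_of_ne_zero hr',
    Complex.cpow_def_of_ne_zero hz, Complex.log_ofReal_mul hr hz, ← Complex.exp_add,
    Complex.ofReal_log hr.le]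
  ring_nf

lemma ident (M : ℕ) (hM : 0 < M) (t : ℝ) (ht : 0 < t) :
    ∑ r : Fin (2 * M), Complex.exp (π * Complex.I * (r : ℂ) ^ 2 / (2 * M)) *
        (HurwitzZeta.cosKernel ((((r : ℕ) : ℝ) / (2 * M) : ℝ)) t : ℂ) =
    1 / (((1 / (2 * M) ^ 2 : ℝ) : ℂ) * ((1 / t : ℝ) : ℂ) - Complex.I / (2 * M)) ^ (1 / 2 : ℂ) *
      (1 / (1 / (1 + Complex.I * (1 / (2 * M) : ℝ) * (1 / t : ℝ))) ^ (1 / 2 : ℂ)) *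
      FF (t + Complex.I * (1 / (2 * M) : ℝ)) := by
  have h := sum_split M hM t ht
  have hMR : (M : ℝ) ≠ 0 := by positivity
  have hMC : (M : ℂ) ≠ 0 := by exact_mod_cast hMR
  have htC : (t : ℂ) ≠ 0 := by exact_mod_cast ht.ne'
  have hu : (t + Complex.I * (1 / (2 * M) : ℝ) : ℂ).re = t := by simp
  have hu0 : (t + Complex.I * (1 / (2 * M) : ℝ) : ℂ) ≠ 0 := by
    intro h0; rw [h0] at hu; simp at hu; exact ht.ne hu
  have hv0 : (1 + Complex.I * (1 / (2 * M) : ℝ) * (1 / t : ℝ) : ℂ) ≠ 0 := by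
    intro h0; apply hu0
    have : (t + Complex.I * (1 / (2 * M) : ℝ) : ℂ) =
      t * (1 + Complex.I * (1 / (2 * M) : ℝ) * (1 / t : ℝ)) := by
        push_cast; field_simp
    rw [this, h0, mul_zero]
  set a : ℂ := 1 / ((2 * M : ℝ) ^ 2 * t : ℝ) - Complex.I / (2 * M) with ha
  have ha' : ((1 / (2 * M) ^ 2 : ℝ) : ℂ) * ((1 / t : ℝ) : ℂ) - Complex.I / (2 * M) = a := by
    rw [ha]; push_cast; field_simp
  have hare : 0 < a.re := by
    have : a.re = 1 / ((2 * M : ℝ) ^ 2 * t) := by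
      have : a = ((1 / ((2 * M : ℝ) ^ 2 * t) : ℝ) : ℂ) - Complex.I * ((1 / (2 * M) : ℝ) : ℂ) := by
        rw [ha]; push_cast; ring
      rw [this, Complex.sub_re, Complex.ofReal_re, Complex.re_mul_ofReal]; simp
    rw [this]; positivity
  have ha0 : a ≠ 0 := by intro h0; rw [h0] at hare; simp at hare
  set u : ℂ := t + Complex.I * (1 / (2 * M) : ℝ) with hudef
  set v : ℂ := 1 + Complex.I * (1 / (2 * M) : ℝ) * (1 / t : ℝ) with hv
  have huv : 1 / u = ((1 / t : ℝ) : ℂ) * (1 / v) := by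
    have : u = t * v := by
      rw [hudef, hv]; push_cast; field_simp
    rw [this]; push_cast; field_simp
  have hau : 1 / a = 1 / u + Complex.I * (2 * M) := by
    have hmul : a * (1 + Complex.I * (2 * M) * u) = u := by
      rw [ha, hudef]; push_cast; field_simp
      ring_nf
      simp only [Complex.I_sq, Complex.I_pow_three]
      ring
    field_simp
    linear_combination -hmul
  have hure : 0 < (1 / u).re := by
    rw [one_div, Complex.inv_re, hu]
    exact div_pos ht (Complex.normSq_pos.mpr hu0)
  rw [FF_feq hare, hau, FF_add, FF_feq hure, one_div_one_div, huv,
    real_mul_cpow (one_div_pos.mpr ht) (one_div_ne_zero hv0)] at h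
  have ht2 : (((1 / t : ℝ) : ℂ)) ^ (1 / 2 : ℂ) = 1 / (t : ℂ) ^ (1 / 2 : ℂ) := by
    have e : (1 / 2 : ℂ) = ((1 / 2 : ℝ) : ℂ) := by push_cast; rfl
    rw [e, ← Complex.ofReal_cpow ht.le, ← Complex.ofReal_cpow (one_div_pos.mpr ht).le,
      one_div t, Real.inv_rpow ht.le]
    push_cast; simp
  have ht3 : (t : ℂ) ^ (1 / 2 : ℂ) ≠ 0 := by
    rw [Ne, Complex.cpow_eq_zero_iff]; simp [htC]
  rw [ha']
  apply mul_left_cancel₀ ht3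
  rw [← h, ht2]
  field_simp

open Filter Topology in
lemma gauss (M : ℕ) (hM : 0 < M) :
    ∑ r : Fin (2 * M), Complex.exp (π * Complex.I * (r : ℂ) ^ 2 / (2 * M)) =
      1 / (-Complex.I / (2 * M)) ^ (1 / 2 : ℂ) := by
  have hMR : (0 : ℝ) < M := by positivity
  have hcos : ∀ x : UnitAddCircle, Tendsto (HurwitzZeta.cosKernel x) atTop (𝓝 1) := by
    intro x
    obtain ⟨p, hp, h⟩ := HurwitzZeta.isBigO_atTop_cosKernel_sub x
    have h1 : Tendsto (fun t : ℝ => rexp (-p * t)) atTop (𝓝 0) :=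
      Real.tendsto_exp_atBot.comp (tendsto_id.const_mul_atTop_of_neg (by linarith))
    simpa using (h.trans_tendsto h1).add_const 1
  have hL : Tendsto (fun t : ℝ => ∑ r : Fin (2 * M),
      Complex.exp (π * Complex.I * (r : ℂ) ^ 2 / (2 * M)) *
        (HurwitzZeta.cosKernel ((((r : ℕ) : ℝ) / (2 * M) : ℝ)) t : ℂ)) atTop
      (𝓝 (∑ r : Fin (2 * M), Complex.exp (π * Complex.I * (r : ℂ) ^ 2 / (2 * M)) * (1 : ℝ))) := by
    refine tendsto_finsetSum _ fun r _ => ?_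
    exact ((Complex.continuous_ofReal.tendsto _).comp (hcos _)).const_mul _
  have hinv : Tendsto (fun t : ℝ => ((1 / t : ℝ) : ℂ)) atTop (𝓝 0) := by
    have : Tendsto (fun t : ℝ => (1 / t : ℝ)) atTop (𝓝 0) := by
      simpa using tendsto_inv_atTop_zero (𝕜 := ℝ)
    have h0 := (Complex.continuous_ofReal.tendsto 0).comp this
    rw [Complex.ofReal_zero] at h0
    exact h0
  have hslit : (-Complex.I / (2 * M)) ∈ Complex.slitPlane := by
    right
    have : (-Complex.I / (2 * M)) = Complex.I * ((-(1 / (2 * M)) : ℝ) : ℂ) := by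
      push_cast; ring
    rw [this, Complex.im_mul_ofReal]
    simp [hMR.ne']
  have h1 : Tendsto (fun t : ℝ => 1 / (((1 / (2 * M) ^ 2 : ℝ) : ℂ) * ((1 / t : ℝ) : ℂ)
      - Complex.I / (2 * M)) ^ (1 / 2 : ℂ)) atTop (𝓝 (1 / (-Complex.I / (2 * M)) ^ (1 / 2 : ℂ))) := by
    refine Tendsto.div tendsto_const_nhds ?_ ?_
    · refine Tendsto.cpow ?_ tendsto_const_nhds hslit
      have := (hinv.const_mul (((1 / (2 * M) ^ 2 : ℝ) : ℂ))).sub_const (Complex.I / (2 * M))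
      convert this using 2
      ring
    · rw [Ne, Complex.cpow_eq_zero_iff]
      exact fun h => Complex.slitPlane_ne_zero hslit h.1
  have h2 : Tendsto (fun t : ℝ => (1 / (1 / (1 + Complex.I * (1 / (2 * M) : ℝ) * (1 / t : ℝ)))
      ^ (1 / 2 : ℂ) : ℂ)) atTop (𝓝 1) := by
    have h0 : Tendsto (fun t : ℝ => (1 / (1 + Complex.I * (1 / (2 * M) : ℝ) * (1 / t : ℝ)) : ℂ))
        atTop (𝓝 1) := by
      have := ((hinv.const_mul (Complex.I * (1 / (2 * M) : ℝ))).const_add 1).inv₀ (by simp)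
      simpa using this
    have := (h0.cpow (tendsto_const_nhds (x := (1 / 2 : ℂ))) (by simp)).inv₀ (by simp)
    simpa using this
  have hR := (h1.mul h2).mul (FF_tendsto (1 / (2 * M)))
  have := tendsto_nhds_unique (hL.congr' ((eventually_gt_atTop 0).mono fun t ht => ident M hM t ht)) hR
  simpa using this

lemma gauss_im (M : ℕ) (hM : 0 < M) :
    ∑ r ∈ Finset.range (2 * M), Real.sin (π * (r : ℝ) ^ 2 / (2 * M)) = √M := by
  have hMR : (0 : ℝ) < M := by positivity
  have h := gauss M hM
  have hc : (-Complex.I / (2 * M)) = ((1 / (2 * M) : ℝ) : ℂ) * -Complex.I := by push_cast; ring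
  have hI : (-Complex.I) ^ (1 / 2 : ℂ) = Complex.exp (((-(π / 4) : ℝ) : ℂ) * Complex.I) := by
    rw [Complex.cpow_def_of_ne_zero (by simp), Complex.log_neg_I]
    push_cast; ring_nf
  have hr : (((1 / (2 * M) : ℝ) : ℂ)) ^ (1 / 2 : ℂ) = ((√(1 / (2 * M)) : ℝ) : ℂ) := by
    rw [Real.sqrt_eq_rpow, Complex.ofReal_cpow (by positivity)]; push_cast; rfl
  rw [hc, real_mul_cpow (by positivity) (by simp), hI, hr, one_div, mul_inv, ← Complex.exp_neg,
    ← Complex.ofReal_inv] at h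
  have h' := congrArg Complex.im h
  rw [Complex.im_ofReal_mul, Complex.im_sum, ← neg_mul, ← Complex.ofReal_neg,
    Complex.exp_ofReal_mul_I_im, neg_neg, Real.sin_pi_div_four] at h'
  rw [← Fin.sum_univ_eq_sum_range (fun r : ℕ => Real.sin (π * (r : ℝ) ^ 2 / (2 * M))) (2 * M)]
  have e : ∀ r : Fin (2 * M), (Complex.exp (π * Complex.I * (r : ℂ) ^ 2 / (2 * M))).im =
      Real.sin (π * ((r : ℕ) : ℝ) ^ 2 / (2 * M)) := by
    intro r
    rw [← Complex.exp_ofReal_mul_I_im]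
    congr 2
    push_cast; ring
  simp only [e] at h'
  rw [h', ← Real.sqrt_inv, one_div, inv_inv, Real.sqrt_mul (by norm_num)]
  have : √(2 : ℝ) * √2 = 2 := Real.mul_self_sqrt (by norm_num)
  linear_combination √(M : ℝ) / 2 * this

theorem alternating_quadratic_sine_sum (k : ℕ) (hk : 0 < k) :
    ∑ n ∈ Finset.Icc 1 (2 * k), (-1 : ℝ) ^ n * Real.sin (π * (n : ℝ) ^ 2 / (4 * k)) =
      (-1 : ℝ) ^ k * Real.sqrt ((k : ℝ) / 2) := by
  have hkR : (0 : ℝ) < k := by positivity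
  have h := gauss_im (2 * k) (by omega)
  set f : ℕ → ℝ := fun n => Real.sin (π * (n : ℝ) ^ 2 / (4 * k)) with hf
  have h : ∑ r ∈ Finset.range (2 * k + 2 * k), f r = √(2 * k) := by
    have e : 2 * (2 * k) = 2 * k + 2 * k := by ring
    rw [e] at h
    push_cast at h
    rw [← h]
    refine Finset.sum_congr rfl fun r _ => ?_
    have e2 : π * (r : ℝ) ^ 2 / (4 * k) = π * (r : ℝ) ^ 2 / (2 * (2 * k)) := by ring
    simp only [hf]
    rw [e2]
  -- reflection
  have hrefl : ∀ m n : ℕ, m + n = 4 * k → f m = f n := by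
    intro m n hmn
    have hm : (m : ℝ) = 4 * k - n := by
      have : (m : ℝ) + n = 4 * k := by exact_mod_cast hmn
      linarith
    simp only [hf]
    rw [hm, ← Real.sin_add_int_mul_two_pi (π * (n : ℝ) ^ 2 / (4 * k)) (2 * k - n)]
    congr 1
    push_cast
    field_simp
    ring
  have hf0 : f 0 = 0 := by simp [hf]
  have hf2 : f (2 * k) = 0 := by
    simp only [hf]
    rw [← Real.sin_nat_mul_pi k]
    congr 1
    push_cast
    field_simp
    ring
  have hterm : ∀ n : ℕ, (-1 : ℝ) ^ n * f n = (-1) ^ k * f (2 * k + n) := by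
    intro n
    have : π * ((2 * k + n : ℕ) : ℝ) ^ 2 / (4 * k) =
        π * (n : ℝ) ^ 2 / (4 * k) + ((k + n : ℕ) : ℝ) * π := by
      push_cast; field_simp; ring
    simp only [hf]
    rw [this, Real.sin_add_nat_mul_pi, pow_add, ← mul_assoc, ← mul_assoc, ← pow_add, ← two_mul,
      pow_mul]
    simp
  have hIcc : ∑ n ∈ Finset.Icc 1 (2 * k), (-1 : ℝ) ^ n * f n =
      ∑ n ∈ Finset.range (2 * k), (-1 : ℝ) ^ n * f n := by
    rw [← Finset.sum_subset (s₁ := Finset.Ico 1 (2 * k)), Finset.range_eq_Ico,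
      Finset.sum_eq_sum_Ico_succ_bot (a := 0) (by omega), hf0]
    · simp
    · intro x; simp; omega
    · intro x hx hx'
      have : x = 2 * k := by simp at hx hx'; omega
      rw [this, hf2, mul_zero]
  have hA : ∑ n ∈ Finset.range (2 * k), f n = ∑ n ∈ Finset.range (2 * k), f (2 * k + n) := by
    have h1 := Finset.sum_range_succ f (2 * k)
    have h2 := Finset.sum_range_succ' (fun n => f (2 * k + n)) (2 * k)
    have h3 := Finset.sum_range_succ (fun n => f (2 * k + n)) (2 * k)
    have h4 := Finset.sum_range_reflect (fun n => f (2 * k + n)) (2 * k + 1)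
    have h5 : f (2 * k + 2 * k) = 0 := by rw [hrefl _ 0 (by omega), hf0]
    have h6 : ∑ j ∈ Finset.range (2 * k + 1), f (2 * k + (2 * k + 1 - 1 - j)) =
        ∑ j ∈ Finset.range (2 * k + 1), f j := by
      refine Finset.sum_congr rfl fun j hj => hrefl _ _ ?_
      simp at hj; omega
    rw [hf2] at h1
    rw [h5] at h3
    linarith
  rw [Finset.sum_range_add, hA] at h
  have hsq : √(2 * k : ℝ) = 2 * √((k : ℝ) / 2) := by
    rw [show (2 * k : ℝ) = 2 ^ 2 * (k / 2) by ring, Real.sqrt_mul (by norm_num),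
      Real.sqrt_sq (by norm_num)]
  change ∑ n ∈ Finset.Icc 1 (2 * k), (-1 : ℝ) ^ n * f n = _
  rw [hIcc, Finset.sum_congr rfl fun n _ => hterm n, ← Finset.mul_sum]
  congr 1
  linarith
end

section
/- For every positive integer k, the alternating quadratic cosine sum satisfies ∑_{n=1}^{2k-2} (-1)^n * cos(π n² / (2(2k-1))) = -(-1)^k * √(2k-1)/2 - 1/2. -/
open Finset Real

lemma aqc_theta_tendsto (x : ℝ) (τ : ℝ → ℂ) (h : ∀ t, (τ t).im = t ^ 2) :
    Filter.Tendsto (fun t => jacobiTheta₂ x (τ t)) Filter.atTop (nhds 1) := by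
  have hnorm : ∀ (t : ℝ) (n : ℤ), ‖jacobiTheta₂_term n x (τ t)‖ = rexp (-π * n ^ 2 * t ^ 2) := by
    intro t n
    rw [norm_jacobiTheta₂_term, h]
    simp
  have hs : Summable (fun n : ℤ => rexp (-π * n ^ 2 * 1 ^ 2)) := by
    have := ((summable_jacobiTheta₂_term_iff 0 Complex.I).2 (by simp)).norm
    refine this.congr fun n => ?_
    rw [norm_jacobiTheta₂_term]
    simp
  have key : Filter.Tendsto (fun t => ∑' n : ℤ, jacobiTheta₂_term n x (τ t)) Filter.atTop
      (nhds (∑' n : ℤ, if n = 0 then (1 : ℂ) else 0)) := by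
    refine tendsto_tsum_of_dominated_convergence hs ?_ ?_
    · intro n
      split_ifs with hn
      · subst hn
        simp [jacobiTheta₂_term]
      · rw [tendsto_zero_iff_norm_tendsto_zero]
        simp_rw [hnorm]
        refine Real.tendsto_exp_atBot.comp ?_
        refine Filter.Tendsto.const_mul_atTop_of_neg ?_ (Filter.tendsto_pow_atTop two_ne_zero)
        have : (0 : ℝ) < (n : ℝ) ^ 2 := by positivity
        nlinarith [pi_pos]
    · filter_upwards [Filter.eventually_ge_atTop 1] with t ht n
      rw [hnorm]
      refine Real.exp_le_exp.2 ?_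
      have h1 : (1 : ℝ) ^ 2 ≤ t ^ 2 := by gcongr
      have h2 : 0 ≤ π * (n : ℝ) ^ 2 := by positivity
      nlinarith
  rw [tsum_ite_eq] at key
  exact key

lemma aqc_cpow_scale (r : ℝ) (hr : 0 < r) (x : ℂ) (hx : x ≠ 0) :
    (((r ^ 2 : ℝ) : ℂ) * x) ^ (1 / 2 : ℂ) = r * x ^ (1 / 2 : ℂ) := by
  have hr2 : 0 < r ^ 2 := by positivity
  have hc : ((r ^ 2 : ℝ) : ℂ) ≠ 0 := by exact_mod_cast hr2.ne'
  rw [Complex.cpow_def_of_ne_zero (mul_ne_zero hc hx), Complex.log_ofReal_mul hr2 hx,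
    Complex.cpow_def_of_ne_zero hx, add_mul, Complex.exp_add]
  congr 1
  rw [Real.log_pow]
  push_cast
  rw [show (2 * (Real.log r : ℂ) * (1 / 2)) = (Real.log r : ℂ) by ring, ← Complex.ofReal_exp,
    Real.exp_log hr]

lemma aqc_residue (M : ℕ) (hM : 0 < M) (r : ℕ) (t : ℝ) (ht : 0 < t) :
    ∑' m : ℤ, Complex.exp (-π / (t ^ 2 : ℂ) * (m + r / M) ^ 2)
      = t * jacobiTheta₂ ((-(r / M : ℝ) : ℝ)) (Complex.I * t ^ 2) := by
  have ha : 0 < ((t ^ 2 : ℝ) : ℂ).re := by rw [Complex.ofReal_re]; positivity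
  have h := Complex.tsum_exp_neg_quadratic ha (-Complex.I * (r / M))
  have hs := aqc_cpow_scale t ht 1 one_ne_zero
  rw [mul_one, Complex.one_cpow, mul_one] at hs
  have htc : (t : ℂ) ≠ 0 := by exact_mod_cast ht.ne'
  rw [hs] at h
  have h1 : jacobiTheta₂ ((-(r / M : ℝ) : ℝ)) (Complex.I * t ^ 2) =
      ∑' n : ℤ, Complex.exp (-π * ((t ^ 2 : ℝ) : ℂ) * n ^ 2 + 2 * π * (-Complex.I * (r / M)) * n) := by
    unfold jacobiTheta₂ jacobiTheta₂_term
    refine tsum_congr fun n => ?_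
    congr 1
    push_cast
    linear_combination (π * n ^ 2 * t ^ 2 : ℂ) * Complex.I_sq
  rw [h1, h, ← mul_assoc, mul_one_div_cancel htc, one_mul]
  refine tsum_congr fun n => ?_
  congr 1
  have : Complex.I * (-Complex.I * (r / M)) = (r / M : ℂ) := by
    linear_combination (-(r / M) : ℂ) * Complex.I_sq
  rw [this]
  push_cast
  ring

lemma aqc_split (M : ℕ) (hM : 0 < M) (hev : Even M) (t : ℝ) (ht : 0 < t) :
    jacobiTheta₂ 0 (1 / M + Complex.I / (M ^ 2 * t ^ 2)) =
      t * ∑ r ∈ range M, Complex.exp (π * Complex.I * r ^ 2 / M) *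
        jacobiTheta₂ ((-(r / M : ℝ) : ℝ)) (Complex.I * t ^ 2) := by
  have : NeZero M := ⟨hM.ne'⟩
  have htc : (t : ℂ) ≠ 0 := by exact_mod_cast ht.ne'
  have hMc : (M : ℂ) ≠ 0 := by exact_mod_cast hM.ne'
  set τ : ℂ := 1 / M + Complex.I / (M ^ 2 * t ^ 2) with hτ
  have him : 0 < τ.im := by
    have : τ = ((1 / M : ℝ) : ℂ) + ((1 / (M ^ 2 * t ^ 2) : ℝ) : ℂ) * Complex.I := by
      rw [hτ]; push_cast; ring
    rw [this, Complex.add_im, Complex.ofReal_im, Complex.im_ofReal_mul, Complex.I_im]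
    have : (0 : ℝ) < M := by exact_mod_cast hM
    positivity
  have hsum := (summable_jacobiTheta₂_term_iff 0 τ).2 him
  have hsum2 := (Int.divModEquiv M).symm.summable_iff.2 hsum
  have e1 : jacobiTheta₂ 0 τ = ∑' p : ℤ × Fin M, jacobiTheta₂_term ((Int.divModEquiv M).symm p) 0 τ :=
    ((Int.divModEquiv M).symm.tsum_eq (fun n => jacobiTheta₂_term n 0 τ)).symm
  have hsum3 := (Equiv.prodComm (Fin M) ℤ).summable_iff.2 hsum2
  have e2 := hsum3.tsum_prod
  simp only [Function.comp_def] at e2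
  rw [e1, ← (Equiv.prodComm (Fin M) ℤ).tsum_eq, e2, tsum_fintype,
    Finset.mul_sum, ← Fin.sum_univ_eq_sum_range (fun r : ℕ => (t : ℂ) * (Complex.exp (π * Complex.I * r ^ 2 / M) *
        jacobiTheta₂ ((-(r / M : ℝ) : ℝ)) (Complex.I * t ^ 2)))]
  refine Finset.sum_congr rfl fun r _ => ?_
  rw [mul_left_comm, ← aqc_residue M hM r t ht, ← tsum_mul_left]
  refine tsum_congr fun m => ?_
  simp only [Function.comp, Equiv.prodComm_apply, Prod.swap, Int.divModEquiv_symm_apply,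
    jacobiTheta₂_term]
  rw [← Complex.exp_add, Complex.exp_eq_exp_iff_exists_int]
  obtain ⟨q, hq⟩ := hev
  refine ⟨m ^ 2 * q + m * r, ?_⟩
  have hq' : (M : ℂ) = q + q := by exact_mod_cast hq
  have hq2 : (q : ℂ) = M / 2 := by rw [hq']; ring
  rw [hτ]
  push_cast
  rw [hq2]
  field_simp
  linear_combination (((m : ℂ) * M + r) ^ 2) * Complex.I_sq

lemma aqc_theta_shift (τ : ℂ) (N : ℕ) : jacobiTheta₂ 0 (τ + 2 * N) = jacobiTheta₂ 0 τ := by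
  induction N with
  | zero => simp
  | succ n ih =>
    rw [← ih, ← jacobiTheta₂_add_right 0 (τ + 2 * n)]
    congr 1
    push_cast
    ring

lemma aqc_funeq (M : ℕ) (hM : 0 < M) (hev : Even M) (t : ℝ) (ht : 0 < t) :
    jacobiTheta₂ 0 (1 / M + Complex.I / (M ^ 2 * t ^ 2)) =
      t * (1 / (-Complex.I * (1 / M + Complex.I / (M ^ 2 * t ^ 2))) ^ (1 / 2 : ℂ) *
        (1 / (1 / (1 + Complex.I / (M * t ^ 2))) ^ (1 / 2 : ℂ)) *
        jacobiTheta₂ ((0 : ℝ)) (-1 / M + Complex.I * t ^ 2)) := by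
  have htc : (t : ℂ) ≠ 0 := by exact_mod_cast ht.ne'
  have hMc : (M : ℂ) ≠ 0 := by exact_mod_cast hM.ne'
  have hMr : (0 : ℝ) < M := by exact_mod_cast hM
  have hd : (1 + Complex.I / (M * t ^ 2)) ≠ 0 := by
    intro h
    have := congrArg Complex.re h
    have h2 : Complex.I / (M * t ^ 2) = ((1 / (M * t ^ 2) : ℝ) : ℂ) * Complex.I := by
      push_cast; ring
    rw [h2] at this
    simp [-Complex.ofReal_div, -Complex.ofReal_mul] at this
  have hd2 : (M * t ^ 2 + Complex.I : ℂ) ≠ 0 := by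
    intro h
    apply hd
    field_simp
    rw [h, mul_zero]
  set τ : ℂ := 1 / M + Complex.I / (M ^ 2 * t ^ 2) with hτ
  have hτ' : τ = (M * t ^ 2 + Complex.I) / (M ^ 2 * t ^ 2) := by rw [hτ]; field_simp
  have hτ0 : τ ≠ 0 := by
    rw [hτ']
    exact div_ne_zero hd2 (by positivity)
  obtain ⟨q, hq⟩ := hev
  have hq' : (M : ℂ) = 2 * q := by
    rw [two_mul]; exact_mod_cast hq
  have f1 := jacobiTheta₂_functional_equation 0 τ
  rw [zero_div, ← aqc_theta_shift (-1 / τ) q, ← hq'] at f1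
  have hσ : -1 / τ + M = Complex.I * M / (M * t ^ 2 + Complex.I) := by
    rw [hτ']
    field_simp
    ring
  have f2 := jacobiTheta₂_functional_equation 0 (-1 / τ + M)
  have hσ2 : -1 / (-1 / τ + M) = -1 / M + Complex.I * t ^ 2 := by
    rw [hσ]
    field_simp
    linear_combination (-(M * t ^ 2) : ℂ) * Complex.I_sq
  have hσ3 : -Complex.I * (-1 / τ + M) =
      ((t⁻¹ ^ 2 : ℝ) : ℂ) * (1 / (1 + Complex.I / (M * t ^ 2))) := by
    rw [hσ]
    push_cast
    field_simp
    linear_combination (-1 : ℂ) * Complex.I_sq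
  rw [hσ2, hσ3, aqc_cpow_scale _ (inv_pos.2 ht) _ (one_div_ne_zero hd), zero_div] at f2
  rw [f1, f2]
  simp only [Complex.ofReal_zero, Complex.ofReal_inv]
  simp
  ring

lemma aqc_gauss (M : ℕ) (hM : 0 < M) (hev : Even M) :
    ∑ r ∈ range M, Complex.exp (π * Complex.I * r ^ 2 / M) =
      1 / (-Complex.I * (1 / M)) ^ (1 / 2 : ℂ) := by
  have hMr : (0 : ℝ) < M := by exact_mod_cast hM
  have hMc : (M : ℂ) ≠ 0 := by exact_mod_cast hM.ne'
  have l1 : Filter.Tendsto (fun t : ℝ => ∑ r ∈ range M, Complex.exp (π * Complex.I * r ^ 2 / M) *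
        jacobiTheta₂ ((-(r / M : ℝ) : ℝ)) (Complex.I * t ^ 2)) Filter.atTop
        (nhds (∑ r ∈ range M, Complex.exp (π * Complex.I * r ^ 2 / M) * 1)) := by
    refine tendsto_finsetSum _ fun r _ => ?_
    refine Filter.Tendsto.const_mul _ (aqc_theta_tendsto _ _ fun t => ?_)
    rw [← Complex.ofReal_pow]
    simp [-Complex.ofReal_pow]
  have hz : Filter.Tendsto (fun t : ℝ => (((t ^ 2)⁻¹ : ℝ) : ℂ)) Filter.atTop (nhds 0) := by
    rw [← Complex.ofReal_zero]
    exact (Complex.continuous_ofReal.tendsto 0).comp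
      (tendsto_inv_atTop_zero.comp (Filter.tendsto_pow_atTop two_ne_zero))
  have l2 : Filter.Tendsto (fun t : ℝ =>
      1 / (-Complex.I * (1 / M + Complex.I / (M ^ 2 * t ^ 2))) ^ (1 / 2 : ℂ) *
        (1 / (1 / (1 + Complex.I / (M * t ^ 2))) ^ (1 / 2 : ℂ)) *
        jacobiTheta₂ ((0 : ℝ)) (-1 / M + Complex.I * t ^ 2)) Filter.atTop
      (nhds (1 / (-Complex.I * (1 / M)) ^ (1 / 2 : ℂ) * 1 * 1)) := by
    refine Filter.Tendsto.mul (Filter.Tendsto.mul ?_ ?_) (aqc_theta_tendsto _ _ fun t => ?_)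
    · have hc : ContinuousAt (fun z : ℂ => 1 / (-Complex.I * (1 / M + Complex.I / M ^ 2 * z)) ^ (1 / 2 : ℂ)) 0 := by
        have hne : -Complex.I * (1 / M + Complex.I / M ^ 2 * 0) ≠ 0 := by
          simp [hMc]
        refine ContinuousAt.div continuousAt_const (ContinuousAt.cpow (by fun_prop) continuousAt_const ?_) ?_
        · right
          have : -Complex.I * (1 / M + Complex.I / M ^ 2 * 0) = ((-(1 / M) : ℝ) : ℂ) * Complex.I := by
            push_cast; ring
          rw [this, Complex.im_ofReal_mul, Complex.I_im]
          simp [hM.ne']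
        · rw [Ne, Complex.cpow_eq_zero_iff]
          tauto
      have := hc.tendsto.comp hz
      simp only [mul_zero, add_zero] at this
      refine this.congr fun t => ?_
      simp only [Function.comp]
      push_cast
      congr 4
      ring
    · have hc : ContinuousAt (fun z : ℂ => 1 / (1 / (1 + Complex.I / M * z)) ^ (1 / 2 : ℂ)) 0 := by
        refine ContinuousAt.div continuousAt_const (ContinuousAt.cpow
          (ContinuousAt.div continuousAt_const (by fun_prop) (by simp)) continuousAt_const ?_) ?_
        · left; simp
        · simp
      have := hc.tendsto.comp hz
      simp only [mul_zero, add_zero, div_one, Complex.one_cpow] at this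
      refine this.congr fun t => ?_
      simp only [Function.comp]
      push_cast
      congr 4
      ring
    · have : (-1 / M + Complex.I * t ^ 2 : ℂ) = ((-1 / M : ℝ) : ℂ) + ((t ^ 2 : ℝ) : ℂ) * Complex.I := by
        push_cast; ring
      rw [this, Complex.add_im, Complex.ofReal_im, Complex.im_ofReal_mul, Complex.I_im]
      ring
  simp only [mul_one] at l1 l2
  refine tendsto_nhds_unique l1 (l2.congr' ?_)
  filter_upwards [Filter.eventually_gt_atTop 0] with t ht
  have htc : (t : ℂ) ≠ 0 := by exact_mod_cast ht.ne'
  exact mul_left_cancel₀ htc ((aqc_funeq M hM hev t ht).symm.trans (aqc_split M hM hev t ht))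

lemma aqc_gauss' (N : ℕ) (hN : 0 < N) :
    ∑ r ∈ range (2 * N), Complex.exp (((π * r ^ 2 / (2 * N) : ℝ) : ℂ) * Complex.I) =
      (√N : ℂ) * (1 + Complex.I) := by
  have h := aqc_gauss (2 * N) (by omega) (even_two_mul N)
  have hNr : (0 : ℝ) < N := by exact_mod_cast hN
  have e : ∀ r ∈ range (2 * N), Complex.exp (((π * r ^ 2 / (2 * N) : ℝ) : ℂ) * Complex.I) =
      Complex.exp (π * Complex.I * r ^ 2 / (2 * N : ℕ)) := by
    intro r _
    congr 1
    push_cast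
    ring
  rw [Finset.sum_congr rfl e, h]
  have hs : 0 < √(2 * N : ℝ) := by positivity
  have e2 : -Complex.I * (1 / (2 * N : ℕ)) = (((√(2 * N : ℝ))⁻¹ ^ 2 : ℝ) : ℂ) * (-Complex.I) := by
    rw [inv_pow, Real.sq_sqrt (by positivity)]
    push_cast
    ring
  rw [e2, aqc_cpow_scale _ (inv_pos.2 hs) _ (by simp),
    Complex.cpow_def_of_ne_zero (by simp), Complex.log_neg_I]
  have e3 : Complex.exp (-(π / 2) * Complex.I * (1 / 2)) = ((√2 / 2 : ℝ) : ℂ) * (1 - Complex.I) := by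
    rw [show (-(π / 2) * Complex.I * (1 / 2) : ℂ) = ((-(π / 4) : ℝ) : ℂ) * Complex.I by push_cast; ring,
      Complex.exp_mul_I, ← Complex.ofReal_cos, ← Complex.ofReal_sin, Real.cos_neg, Real.sin_neg,
      Real.cos_pi_div_four, Real.sin_pi_div_four]
    push_cast
    ring
  rw [e3, Real.sqrt_mul (by norm_num)]
  have h2 : ((√2 : ℝ) : ℂ) ≠ 0 := by
    have : 0 < √(2 : ℝ) := by positivity
    exact_mod_cast this.ne'
  have h3 : ((√N : ℝ) : ℂ) ≠ 0 := by
    have : 0 < √(N : ℝ) := by positivity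
    exact_mod_cast this.ne'
  have h4 : (1 - Complex.I) ≠ 0 := by
    intro h
    have := congrArg Complex.re h
    simp at this
  push_cast
  field_simp
  linear_combination Complex.I_sq

theorem alternating_quadratic_cosine_sum (k : ℕ) (hk : 0 < k) :
    ∑ n ∈ Finset.Icc 1 (2 * k - 2), (-1 : ℝ) ^ n *
        Real.cos (π * (n : ℝ) ^ 2 / (2 * (2 * (k : ℝ) - 1))) =
      -(-1 : ℝ) ^ k * Real.sqrt (2 * (k : ℝ) - 1) / 2 - 1 / 2 := by
  obtain ⟨j, rfl⟩ : ∃ j, k = j + 1 := ⟨k - 1, by omega⟩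
  obtain ⟨N, hN⟩ : ∃ N, N = 2 * j + 1 := ⟨_, rfl⟩
  have hNr : (N : ℝ) = 2 * j + 1 := by rw [hN]; push_cast; ring
  have hN0 : (N : ℝ) ≠ 0 := by rw [hNr]; positivity
  have hNk : 2 * ((j + 1 : ℕ) : ℝ) - 1 = N := by rw [hNr]; push_cast; ring
  rw [hNk]
  set f : ℕ → ℝ := fun n => (-1 : ℝ) ^ n * Real.cos (π * (n : ℝ) ^ 2 / (2 * N)) with hf
  -- shifted real part of the Gauss sum
  have hg : ∑ r ∈ range (N + N), Real.cos (π * r ^ 2 / (2 * N) - π * N / 2) =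
      (-1) ^ j * √N := by
    have h := aqc_gauss' N (by omega)
    rw [two_mul] at h
    have hre := congrArg Complex.re h
    have him := congrArg Complex.im h
    rw [Complex.re_sum] at hre
    rw [Complex.im_sum] at him
    simp only [Complex.exp_ofReal_mul_I_re, Complex.exp_ofReal_mul_I_im,
      Complex.re_ofReal_mul, Complex.im_ofReal_mul] at hre him
    simp only [Complex.add_re, Complex.add_im, Complex.one_re, Complex.one_im, Complex.I_re,
      Complex.I_im, add_zero, zero_add, mul_one] at hre him
    have ha : π * N / 2 = π / 2 + j * π := by rw [hNr]; ring
    simp_rw [Real.cos_sub, Finset.sum_add_distrib, ← Finset.sum_mul]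
    rw [hre, him, ha, Real.cos_add_nat_mul_pi, Real.sin_add_nat_mul_pi]
    simp
    ring
  have hplus : ∀ i ∈ range N, Real.cos (π * ((N + i : ℕ) : ℝ) ^ 2 / (2 * N) - π * N / 2) = f i := by
    intro i _
    have : π * ((N + i : ℕ) : ℝ) ^ 2 / (2 * N) - π * N / 2 = π * (i : ℝ) ^ 2 / (2 * N) + i * π := by
      push_cast
      field_simp
      ring
    rw [this, Real.cos_add_nat_mul_pi]
  have hminus : ∀ i ∈ range N, Real.cos (π * ((N - 1 - i : ℕ) : ℝ) ^ 2 / (2 * N) - π * N / 2) =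
      f (i + 1) := by
    intro i hi
    have hi' := Finset.mem_range.1 hi
    have hc : ((N - 1 - i : ℕ) : ℝ) = N - (i + 1 : ℕ) := by
      rw [← Nat.cast_sub (by omega)]
      congr 1
      omega
    have : π * ((N - 1 - i : ℕ) : ℝ) ^ 2 / (2 * N) - π * N / 2 =
        π * ((i + 1 : ℕ) : ℝ) ^ 2 / (2 * N) - (i + 1 : ℕ) * π := by
      rw [hc]
      field_simp
      ring
    rw [this, Real.cos_sub_nat_mul_pi]
  rw [Finset.sum_range_add, Finset.sum_congr rfl hplus,
    ← Finset.sum_range_reflect, Finset.sum_congr rfl hminus] at hg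
  have hfN : f N = 0 := by
    have : π * (N : ℝ) ^ 2 / (2 * N) = π / 2 + j * π := by
      field_simp
      rw [hNr]; ring
    simp only [hf]
    rw [this, Real.cos_add_nat_mul_pi]
    simp
  have hf0 : f 0 = 1 := by simp [hf]
  have hI : ∑ n ∈ Finset.Icc 1 (2 * (j + 1) - 2), f n = ∑ i ∈ range (2 * j), f (i + 1) := by
    rw [Finset.range_eq_Ico, Finset.sum_Ico_add' f 0 (2 * j) 1]
    congr 1
  have hs1 : ∑ i ∈ range N, f (i + 1) = ∑ i ∈ range (2 * j), f (i + 1) := by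
    rw [hN, Finset.sum_range_succ, ← hN, hfN, add_zero]
  have hs2 : ∑ i ∈ range N, f i = ∑ i ∈ range (2 * j), f (i + 1) + 1 := by
    rw [hN, Finset.sum_range_succ', hf0]
  rw [hs1, hs2] at hg
  rw [hI, pow_succ]
  linarith
end

section
/- For every positive integer k, ∑_{n=1}^{2k} (-1)^n * cos(π n² / (4k)) = (-1 + (-1)^k + √(2k) * (-1)^k)/2. -/
open Finset Real

namespace AQC
open Complex

/-- the square root used in the functional equation -/
lemma sqrt_mul {r : ℝ} (hr : 0 < r) (w : ℂ) (hw : w ≠ 0) :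
    ((r : ℂ) * w) ^ (1 / 2 : ℂ) = (Real.sqrt r : ℂ) * w ^ (1 / 2 : ℂ) := by
  have hr' : (r : ℂ) ≠ 0 := by exact_mod_cast hr.ne'
  rw [cpow_def_of_ne_zero (mul_ne_zero hr' hw), cpow_def_of_ne_zero hw, Complex.log_ofReal_mul hr hw,
    add_mul, Complex.exp_add, Real.sqrt_eq_rpow, Complex.ofReal_cpow hr.le,
    cpow_def_of_ne_zero hr', Complex.ofReal_log hr.le]
  norm_num

lemma sqrt_real {r : ℝ} (hr : 0 < r) :
    (r : ℂ) ^ (1 / 2 : ℂ) = (Real.sqrt r : ℂ) := by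
  have := sqrt_mul hr 1 one_ne_zero
  simpa using this

/-- splitting a sum over the integers into residue classes -/
lemma tsum_split (N : ℕ) (hN : 0 < N) (F : ℤ → ℂ) (hF : Summable F) :
    ∑' n, F n = ∑ m ∈ Finset.range N, ∑' j : ℤ, F (j * N + m) := by
  have : NeZero N := ⟨hN.ne'⟩
  have e := (((Int.divModEquiv N).trans (Equiv.prodComm _ _)).symm).tsum_eq F
  rw [← e, Summable.tsum_prod, tsum_fintype, ← Fin.sum_univ_eq_sum_range
    (fun m => ∑' j : ℤ, F (j * N + m))]
  · rfl
  · exact (Equiv.summable_iff (((Int.divModEquiv N).trans (Equiv.prodComm _ _)).symm)).2 hF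

/-- shift of a full period sum -/
lemma sum_shift (N : ℕ) (g : ℤ → ℂ) (hg : ∀ n, g (n + N) = g n) (n : ℤ) :
    ∑ m ∈ Finset.range N, g (m + n) = ∑ m ∈ Finset.range N, g m := by
  have step : ∀ n : ℤ, ∑ m ∈ Finset.range N, g (m + (n + 1)) = ∑ m ∈ Finset.range N, g (m + n) := by
    intro n
    have h1 := Finset.sum_range_succ (fun m : ℕ => g (m + n)) N
    have h2 := Finset.sum_range_succ' (fun m : ℕ => g (m + n)) N
    rw [h1] at h2
    have h3 : g ((N : ℤ) + n) = g (((0 : ℕ) : ℤ) + n) := by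
      rw [add_comm, hg]; simp
    rw [h3] at h2
    rw [add_right_cancel h2]
    refine Finset.sum_congr rfl fun m _ => ?_
    congr 1; push_cast; ring
  induction n using Int.induction_on with
  | zero => simp
  | succ i ih => rw [step, ih]
  | pred i ih => rw [← ih, ← step]; simp

/-- quadratic phase -/
noncomputable def g (N : ℕ) (n : ℤ) : ℂ := cexp (π * I * n ^ 2 / N)

lemma g_period (N : ℕ) (hN : 0 < N) (h2 : Even N) (n : ℤ) : g N (n + N) = g N n := by
  obtain ⟨k, rfl⟩ := h2
  have hN' : (k : ℂ) ≠ 0 := by norm_cast; omega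
  unfold g
  have : (π * I * ((n + (k + k : ℕ) : ℤ) : ℂ) ^ 2 / ((k + k : ℕ) : ℂ)) =
      π * I * n ^ 2 / ((k + k : ℕ) : ℂ) + ((n + k : ℤ) : ℂ) * (2 * π * I) := by
    push_cast
    field_simp
    ring
  rw [this, Complex.exp_add, Complex.exp_int_mul_two_pi_mul_I, mul_one]

lemma g_period' (N : ℕ) (hN : 0 < N) (h2 : Even N) (m j : ℤ) : g N (j * N + m) = g N m := by
  induction j using Int.induction_on with
  | zero => simp
  | succ i ih => rw [← ih, ← g_period N hN h2 (i * N + m)]; congr 1; ring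
  | pred i ih => rw [← ih, ← g_period N hN h2 ((-i - 1) * N + m)]; congr 1; ring

lemma theta_ne (t : ℝ) (ht : 0 < t) : jacobiTheta₂ 0 (I * t) ≠ 0 := by
  have hs := (summable_jacobiTheta₂_term_iff 0 (I * t)).2 (by simpa using ht)
  have e : ∀ n : ℤ, jacobiTheta₂_term n 0 (I * t) = ((Real.exp (-π * n ^ 2 * t) : ℝ) : ℂ) := by
    intro n
    rw [jacobiTheta₂_term, Complex.ofReal_exp]
    congr 1
    push_cast
    linear_combination (π * n ^ 2 * t : ℂ) * I_mul_I
  unfold jacobiTheta₂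
  simp_rw [e] at hs ⊢
  rw [← Complex.ofReal_tsum]
  have hs' := Complex.summable_ofReal.1 hs
  exact_mod_cast (hs'.tsum_pos (fun n => (Real.exp_pos _).le) 0 (Real.exp_pos _)).ne'

lemma theta_add_even (N : ℕ) (h2 : Even N) (z τ : ℂ) : jacobiTheta₂ z (τ + N) = jacobiTheta₂ z τ := by
  obtain ⟨k, rfl⟩ := h2
  induction k with
  | zero => simp
  | succ k ih =>
    rw [← ih, ← jacobiTheta₂_add_right z (τ + ((k + k : ℕ) : ℂ))]
    congr 1; push_cast; ring

lemma stepA (N : ℕ) (hN : 0 < N) (h2 : Even N) :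
    ∑ m ∈ Finset.range N, g N m * jacobiTheta₂ ((m : ℂ) / N) ((1 + I) / N) =
      (∑ m ∈ Finset.range N, g N m) * jacobiTheta₂ 0 (I * ((1 / N : ℝ) : ℂ)) := by
  have hNr : (0 : ℝ) < N := by exact_mod_cast hN
  have hNc : (N : ℂ) ≠ 0 := by exact_mod_cast hN.ne'
  have him : 0 < ((1 + I) / (N : ℂ)).im := by
    rw [Complex.div_natCast_im]; simp; exact hN
  unfold jacobiTheta₂
  simp_rw [← tsum_mul_left]
  rw [← Summable.tsum_finsetSum]
  · refine tsum_congr fun n => ?_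
    rw [← sum_shift N (g N) (g_period N hN h2) n, Finset.sum_mul]
    refine Finset.sum_congr rfl fun m _ => ?_
    unfold g jacobiTheta₂_term
    rw [← Complex.exp_add, ← Complex.exp_add]
    congr 1
    push_cast
    field_simp
    ring
  · intro m _
    exact ((summable_jacobiTheta₂_term_iff _ _).2 him).mul_left _

lemma stepB (N : ℕ) (hN : 0 < N) (h2 : Even N) :
    jacobiTheta₂ 0 ((1 + I) / (2 * N)) = ((1 - I) / N) ^ (1 / 2 : ℂ) *
     ∑ m ∈ Finset.range N, g N m * jacobiTheta₂ ((m : ℂ) / N) ((1 + I) / N) := by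
  have hNr : (0 : ℝ) < N := by exact_mod_cast hN
  have hNc : (N : ℂ) ≠ 0 := by exact_mod_cast hN.ne'
  have hI : (1 + I) ≠ 0 := by intro h; simpa using congrArg Complex.re h
  have hI' : (1 - I) ≠ 0 := by intro h; simpa using congrArg Complex.re h
  have h11 : (1 + I) * (1 - I) = 2 := by linear_combination -I_mul_I
  have hinv : (1 + I)⁻¹ = (1 - I) / 2 := by
    field_simp; exact h11.symm
  have him : 0 < ((1 + I) / (2 * N : ℂ)).im := by
    rw [show (2 * N : ℂ) = ((2 * N : ℕ) : ℂ) by push_cast; ring, Complex.div_natCast_im]; simp; exact hN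
  rw [jacobiTheta₂, tsum_split N hN _ ((summable_jacobiTheta₂_term_iff _ _).2 him), Finset.mul_sum]
  refine Finset.sum_congr rfl fun m _ => ?_
  have hT : -I * ((1 + I) / N) = (1 - I) / N := by
    field_simp; linear_combination -I_mul_I
  rw [jacobiTheta₂_functional_equation ((m : ℂ) / N) ((1 + I) / N), hT]
  have hv : ((1 - I) / N) ^ (1 / 2 : ℂ) ≠ 0 := by
    rw [Ne, cpow_eq_zero_iff]; 
    rintro ⟨h, _⟩
    exact (div_ne_zero hI' hNc) h
  have e1 : (m : ℂ) / N / ((1 + I) / N) = -(m * (I - 1) / 2) := by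
    rw [div_div_div_cancel_right₀ hNc, div_eq_mul_inv, hinv]; ring
  have e2 : -1 / ((1 + I) / N) = N * (I - 1) / 2 := by
    rw [div_div_eq_mul_div, div_eq_mul_inv, hinv]; ring
  have e3 : -π * I * ((m : ℂ) / N) ^ 2 / ((1 + I) / N) = π * I * m ^ 2 * (I - 1) / (2 * N) := by
    rw [div_div_eq_mul_div, div_eq_mul_inv, hinv]; field_simp; ring
  rw [e1, e2, e3, jacobiTheta₂_neg_left]
  rw [show ∀ a b c d : ℂ, a * (b * (1 / a * c * d)) = (a * (1 / a)) * (b * c * d) by intros; ring,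
    mul_one_div_cancel hv, one_mul, jacobiTheta₂, ← tsum_mul_left]
  refine tsum_congr fun j => ?_
  rw [← g_period' N hN h2 m j]
  unfold g jacobiTheta₂_term
  rw [← Complex.exp_add, ← Complex.exp_add]
  congr 1
  push_cast
  field_simp
  ring

lemma gauss (N : ℕ) (hN : 0 < N) (h2 : Even N) :
    ∑ m ∈ Finset.range N, g N m = (Real.sqrt N : ℂ) * (1 + I) / (Real.sqrt 2 : ℂ) := by
  have hNr : (0 : ℝ) < N := by exact_mod_cast hN
  have hNc : (N : ℂ) ≠ 0 := by exact_mod_cast hN.ne'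
  have hI : (1 + I) ≠ 0 := by intro h; simpa using congrArg Complex.re h
  have hI' : (1 - I) ≠ 0 := by intro h; simpa using congrArg Complex.re h
  have h11 : (1 + I) * (1 - I) = 2 := by linear_combination -I_mul_I
  have hsN : (Real.sqrt N : ℂ) ≠ 0 := by exact_mod_cast (Real.sqrt_pos.2 hNr).ne'
  have hs2 : (Real.sqrt 2 : ℂ) ≠ 0 := by exact_mod_cast (Real.sqrt_pos.2 two_pos).ne'
  have hB := stepB N hN h2
  rw [stepA N hN h2] at hB
  set G := ∑ m ∈ Finset.range N, g N m
  have hθ := theta_ne (1 / N) (by positivity)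
  set θ := jacobiTheta₂ 0 (I * ((1 / N : ℝ) : ℂ)) with hθd
  -- theta at I * N
  have f1 := jacobiTheta₂_functional_equation 0 (I * N)
  have f2 := jacobiTheta₂_functional_equation 0 (I * N - N)
  rw [← theta_add_even N h2 0 (I * N - N), sub_add_cancel, f1] at f2
  have a1 : -I * (I * N) = ((N : ℝ) : ℂ) := by push_cast; linear_combination -(N : ℂ) * I_mul_I
  have a2 : -I * (I * N - N) = ((N : ℝ) : ℂ) * (1 + I) := by
    push_cast; linear_combination -(N : ℂ) * I_mul_I
  have a3 : -1 / (I * N) = I * ((1 / N : ℝ) : ℂ) := by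
    push_cast; field_simp; linear_combination -I_mul_I
  have hne : I * N - N ≠ 0 := by
    intro h
    rw [h] at a2
    simp only [mul_zero] at a2
    exact (mul_ne_zero (by exact_mod_cast hN.ne') hI) a2.symm
  have a4 : -1 / (I * N - N) = (1 + I) / (2 * N) := by
    rw [div_eq_div_iff hne (by simpa using hNc)]
    linear_combination -(N : ℂ) * I_mul_I
  rw [a1, a2, a3, a4, sqrt_mul hNr _ hI, sqrt_real hNr] at f2
  simp only [zero_div, ne_eq, OfNat.ofNat_ne_zero, not_false_eq_true, zero_pow, mul_zero,
    Complex.exp_zero, mul_one] at f2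
  rw [← hθd, hB] at f2
  have b1 : ((1 - I) / N) = ((1 / N : ℝ) : ℂ) * (1 - I) := by push_cast; ring
  rw [b1, sqrt_mul (by positivity) _ hI'] at f2
  have harg : (1 + I).arg ≠ π := by
    intro h
    have := (Complex.arg_eq_pi_iff.1 h).2
    simp at this
  set v := (1 + I) ^ (1 / 2 : ℂ) with hv
  have hc : (1 - I) ^ (1 / 2 : ℂ) = (starRingEnd ℂ) v := by
    have := Complex.conj_cpow (1 + I) (1 / 2) harg
    simp only [map_add, map_one, conj_I, map_div₀, map_ofNat] at this
    rw [hv, ← this, sub_eq_add_neg]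
  have hv2 : v * v = 1 + I := by
    rw [hv, ← Complex.cpow_add _ _ hI]; norm_num
  have hvn : v * (starRingEnd ℂ) v = (Real.sqrt 2 : ℂ) := by
    rw [Complex.mul_conj, Complex.normSq_eq_norm_sq, sq, ← norm_mul, hv2]
    congr 1
    rw [Complex.norm_def]
    congr 1
    simp [Complex.normSq_apply]; norm_num
  have hv0 : v ≠ 0 := by rintro h; rw [h] at hv2; exact hI (by simpa using hv2.symm)
  rw [hc] at f2
  have hsq : (Real.sqrt (1 / N) : ℂ) = 1 / (Real.sqrt N : ℂ) := by
    rw [Real.sqrt_div zero_le_one]; simp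
  rw [hsq] at f2
  field_simp at f2
  rw [eq_div_iff hs2, ← hvn, ← hv2]
  linear_combination (-v) * f2


/-- the alternating summand -/
noncomputable def f (k : ℕ) (n : ℕ) : ℝ := (-1 : ℝ) ^ n * Real.cos (π * (n : ℝ) ^ 2 / (4 * k))

lemma g_shift (k : ℕ) (hk : 0 < k) (m : ℕ) :
    g (4 * k) ((m : ℤ) + (2 * k : ℕ)) = (((-1 : ℝ) ^ k * (-1 : ℝ) ^ m : ℝ) : ℂ) *
      cexp ((π * (m : ℝ) ^ 2 / (4 * k) : ℝ) * I) := by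
  have hk' : (k : ℂ) ≠ 0 := by exact_mod_cast hk.ne'
  unfold g
  have : (π * I * (((m : ℤ) + (2 * k : ℕ) : ℤ) : ℂ) ^ 2 / ((4 * k : ℕ) : ℂ)) =
      (k : ℂ) * (π * I) + (m : ℂ) * (π * I) + (π * (m : ℝ) ^ 2 / (4 * k) : ℝ) * I := by
    push_cast
    field_simp
    ring
  rw [this, Complex.exp_add, Complex.exp_add, Complex.exp_nat_mul, Complex.exp_nat_mul,
    Complex.exp_pi_mul_I]
  push_cast
  rfl

lemma full_sum (k : ℕ) (hk : 0 < k) :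
    ∑ m ∈ Finset.range (4 * k), f k m = (-1 : ℝ) ^ k * Real.sqrt (2 * k) := by
  have hev : Even (4 * k) := ⟨2 * k, by ring⟩
  have hN : 0 < 4 * k := by omega
  have h := gauss (4 * k) hN hev
  rw [← sum_shift (4 * k) (g (4 * k)) (g_period _ hN hev) ((2 * k : ℕ) : ℤ)] at h
  have h' := congrArg Complex.re h
  rw [Complex.re_sum] at h'
  have e : ∀ m : ℕ, (g (4 * k) ((m : ℤ) + (2 * k : ℕ))).re = (-1 : ℝ) ^ k * f k m := by
    intro m
    rw [g_shift k hk m, Complex.re_ofReal_mul, Complex.exp_ofReal_mul_I_re, f]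
    ring
  simp_rw [e] at h'
  rw [← Finset.mul_sum] at h'
  have e2 : ((Real.sqrt (4 * k : ℕ) : ℂ) * (1 + I) / (Real.sqrt 2 : ℂ)).re = Real.sqrt (2 * k) := by
    rw [Complex.div_ofReal_re, Complex.re_ofReal_mul]
    simp only [add_re, one_re, I_re, add_zero, mul_one]
    rw [← Real.sqrt_div (by positivity)]
    congr 1
    push_cast
    ring
  rw [e2] at h'
  rw [← h', ← mul_assoc, ← mul_pow]
  norm_num

lemma f_reflect (k : ℕ) (hk : 0 < k) (n : ℕ) (hn : n ≤ 4 * k) : f k (4 * k - n) = f k n := by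
  have hk' : (k : ℝ) ≠ 0 := by exact_mod_cast hk.ne'
  obtain ⟨d, hd⟩ := Nat.exists_eq_add_of_le hn
  have hd' : 4 * k - n = d := by omega
  rw [hd']
  unfold f
  have hdr : (d : ℝ) = 4 * k - n := by
    have : ((4 * k : ℕ) : ℝ) = ((n + d : ℕ) : ℝ) := by rw [hd]
    push_cast at this
    linarith
  have hp : (-1 : ℝ) ^ d = (-1 : ℝ) ^ n := by
    apply neg_one_pow_congr
    grind
  have ha : π * (d : ℝ) ^ 2 / (4 * k) =
      π * (n : ℝ) ^ 2 / (4 * k) + ((2 * k - n : ℤ) : ℝ) * (2 * π) := by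
    rw [hdr]
    push_cast
    field_simp
    ring
  rw [hp, ha, Real.cos_add_int_mul_two_pi]

end AQC

theorem alternating_quadratic_cosine_sum_even (k : ℕ) (hk : 0 < k) :
    ∑ n ∈ Finset.Icc 1 (2 * k), (-1 : ℝ) ^ n * Real.cos (π * (n : ℝ) ^ 2 / (4 * k)) =
      (-1 + (-1 : ℝ) ^ k + Real.sqrt (2 * (k : ℝ)) * (-1 : ℝ) ^ k) / 2 := by
  have hk' : (k : ℝ) ≠ 0 := by exact_mod_cast hk.ne'
  have h := AQC.full_sum k hk
  have hS : ∑ n ∈ Finset.Icc 1 (2 * k), (-1 : ℝ) ^ n * Real.cos (π * (n : ℝ) ^ 2 / (4 * k)) =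
      ∑ m ∈ Finset.range (2 * k), AQC.f k (m + 1) := by
    rw [Finset.range_eq_Ico, Finset.sum_Ico_add' (AQC.f k) 0 (2 * k) 1]
    rfl
  have h0 : AQC.f k 0 = 1 := by simp [AQC.f]
  have h2k : AQC.f k (2 * k) = (-1 : ℝ) ^ k := by
    unfold AQC.f
    have : π * ((2 * k : ℕ) : ℝ) ^ 2 / (4 * k) = k * π := by
      push_cast
      field_simp
      ring
    rw [this, Real.cos_nat_mul_pi, pow_mul]
    norm_num
  have hfirst := Finset.sum_range_succ (AQC.f k) (2 * k)
  rw [Finset.sum_range_succ', h0, h2k] at hfirst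
  have hsecond : ∑ m ∈ Finset.range (2 * k), AQC.f k (2 * k + m) =
      ∑ m ∈ Finset.range (2 * k), AQC.f k (m + 1) := by
    rw [← Finset.sum_range_reflect]
    refine Finset.sum_congr rfl fun m hm => ?_
    have hm' := Finset.mem_range.1 hm
    rw [← AQC.f_reflect k hk (m + 1) (by omega)]
    congr 1
    omega
  rw [show 4 * k = 2 * k + 2 * k by ring, Finset.sum_range_add, hsecond] at h
  rw [hS]
  linarith
end

section
/- For every positive integer k, ∑_{n=1}^{2k-1} (-1)^n * cos(π n² / (4k-1)) = -1/2. -/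
open Finset Real

/-- Gaussian binomial coefficients, evaluated at a complex number. -/
noncomputable def qB (q : ℂ) : ℕ → ℕ → ℂ
  | _, 0 => 1
  | 0, _ + 1 => 0
  | n + 1, j + 1 => qB q n j + q ^ (j + 1) * qB q n (j + 1)

lemma qB_zero (q : ℂ) (n : ℕ) : qB q n 0 = 1 := by cases n <;> rfl

lemma qB_succ (q : ℂ) (n j : ℕ) :
    qB q (n + 1) (j + 1) = qB q n j + q ^ (j + 1) * qB q n (j + 1) := rfl

lemma qB_gt (q : ℂ) (n : ℕ) : ∀ j, n < j → qB q n j = 0 := by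
  induction n with
  | zero =>
    intro j hj
    obtain ⟨i, rfl⟩ : ∃ i, j = i + 1 := ⟨j - 1, by omega⟩
    rfl
  | succ n ih =>
    intro j hj
    obtain ⟨i, rfl⟩ : ∃ i, j = i + 1 := ⟨j - 1, by omega⟩
    rw [qB_succ, ih _ (by omega), ih _ (by omega)]
    simp

lemma qB_absorb (q : ℂ) (n : ℕ) : ∀ j,
    (1 - q ^ (j + 1)) * qB q (n + 1) (j + 1) = (1 - q ^ (n + 1)) * qB q n j := by
  induction n with
  | zero =>
    intro j
    cases j with
    | zero => simp [qB]
    | succ i => simp [qB]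
  | succ n ih =>
    intro j
    cases j with
    | zero =>
      have h := ih 0
      rw [qB_succ, qB_zero]
      rw [qB_zero] at h
      linear_combination q * h
    | succ i =>
      have h1 := ih i
      have h2 := ih (i + 1)
      have h3 := qB_succ q n i
      rw [qB_succ q (n + 1) (i + 1)]
      linear_combination q ^ (i + 2) * h2 + q * h1 - q * (1 - q ^ (n + 1)) * h3

lemma qB_alt_step (q : ℂ) (n : ℕ) :
    ∑ j ∈ range (n + 3), (-1 : ℂ) ^ j * qB q (n + 2) j =
      (1 - q ^ (n + 1)) * ∑ j ∈ range (n + 1), (-1 : ℂ) ^ j * qB q n j := by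
  have e1 : ∑ j ∈ range (n + 2), (-1 : ℂ) ^ j * qB q (n + 1) j
      = ∑ j ∈ range (n + 2), (-1 : ℂ) ^ (j + 1) * qB q (n + 1) (j + 1) + 1 := by
    have a := Finset.sum_range_succ' (fun j => (-1 : ℂ) ^ j * qB q (n + 1) j) (n + 2)
    rw [Finset.sum_range_succ, qB_gt q (n + 1) (n + 2) (by omega), qB_zero] at a
    simpa using a
  have e2 : ∑ j ∈ range (n + 2), (-1 : ℂ) ^ j * qB q n j
      = ∑ j ∈ range (n + 1), (-1 : ℂ) ^ j * qB q n j := by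
    rw [Finset.sum_range_succ, qB_gt q n (n + 1) (by omega)]
    simp
  rw [← e2, Finset.sum_range_succ', qB_zero, Finset.mul_sum]
  have e3 : ∀ j, (-1 : ℂ) ^ (j + 1) * qB q (n + 2) (j + 1) =
      (1 - q ^ (n + 1)) * ((-1 : ℂ) ^ j * qB q n j) - (-1 : ℂ) ^ j * qB q (n + 1) j
      + (-1 : ℂ) ^ (j + 1) * qB q (n + 1) (j + 1) := by
    intro j
    rw [qB_succ q (n + 1) j]
    linear_combination (-1 : ℂ) ^ j * qB_absorb q n j
  rw [Finset.sum_congr rfl (fun j _ => e3 j), Finset.sum_add_distrib, Finset.sum_sub_distrib, e1]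
  ring

lemma qB_alt (q : ℂ) (m : ℕ) :
    ∑ j ∈ range (2 * m + 1), (-1 : ℂ) ^ j * qB q (2 * m) j =
      ∏ i ∈ range m, (1 - q ^ (2 * i + 1)) := by
  induction m with
  | zero => simp [qB]
  | succ m ih =>
    rw [Finset.prod_range_succ, ← ih, mul_comm (∑ j ∈ _, _), ← qB_alt_step]
    rfl

lemma qB_root (q : ℂ) (M : ℕ) (h1 : q ^ (M + 1) = 1)
    (h2 : ∀ j, j < M → q ^ (j + 1) ≠ 1) (c : ℕ → ℂ) (c0 : c 0 = 1)
    (hc : ∀ j, q ^ (j + 1) * c (j + 1) = c j) (j : ℕ) (hj : j ≤ M) :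
    (-1 : ℂ) ^ j * qB q M j = c j := by
  induction j with
  | zero => simp [qB_zero, c0]
  | succ j ih =>
    have h := ih (by omega)
    have ha := qB_absorb q M j
    rw [h1, sub_self, zero_mul] at ha
    have hne : 1 - q ^ (j + 1) ≠ 0 := sub_ne_zero.mpr (h2 j (by omega)).symm
    have hz := (mul_eq_zero.mp ha).resolve_left hne
    rw [qB_succ] at hz
    have hq : q ^ (j + 1) ≠ 0 := by
      intro h0
      have : q = 0 := by simpa using h0
      rw [this] at h1
      simp at h1
    apply mul_left_cancel₀ hq
    rw [hc, ← h]
    linear_combination -(-1 : ℂ) ^ j * hz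

lemma sum_sym (h : ℕ → ℂ) (m : ℕ) :
    ∑ j ∈ range (2 * m + 1), h j = h m + ∑ n ∈ Icc 1 m, (h (m + n) + h (m - n)) := by
  have hI : ∀ g : ℕ → ℂ, ∑ n ∈ Icc 1 m, g n = ∑ i ∈ range m, g (i + 1) := by
    intro g
    rw [Finset.range_eq_Ico, Finset.sum_Ico_add' g 0 m 1]
    rfl
  have e : 2 * m + 1 = m + (m + 1) := by ring
  rw [e, Finset.sum_range_add, Finset.sum_range_succ' (fun i => h (m + i)),
    ← Finset.sum_range_reflect, hI, Finset.sum_add_distrib]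
  have e2 : ∀ j, m - 1 - j = m - (j + 1) := by intro j; omega
  simp only [e2, add_zero]
  ring

theorem alternating_cosine_sum_4k_sub_one (k : ℕ) (hk : 0 < k) :
    ∑ n ∈ Finset.Icc 1 (2 * k - 1), (-1 : ℝ) ^ n *
        Real.cos (π * (n : ℝ) ^ 2 / (4 * (k : ℝ) - 1)) = -1 / 2 := by
  obtain ⟨l, rfl⟩ : ∃ l, k = l + 1 := ⟨k - 1, by omega⟩
  have em : 2 * (l + 1) - 1 = 2 * l + 1 := by omega
  rw [em]
  obtain ⟨m, hm⟩ : ∃ m, m = 2 * l + 1 := ⟨_, rfl⟩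
  have eN : (4 * ((l + 1 : ℕ) : ℝ) - 1) = 2 * m + 1 := by rw [hm]; push_cast; ring
  rw [eN, ← hm]
  have hN : (2 * (m : ℂ) + 1) ≠ 0 := by exact_mod_cast (by omega : 2 * m + 1 ≠ 0)
  have hinv : (2 * (m : ℂ) + 1) * (2 * (m : ℂ) + 1)⁻¹ = 1 := mul_inv_cancel₀ hN
  set q : ℂ := Complex.exp (-(2 * π * Complex.I / (2 * m + 1))) with hq
  set c : ℕ → ℂ := fun j => Complex.exp (π * Complex.I * (j * (j + 1)) / (2 * m + 1)) with hcdef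
  have hprim : IsPrimitiveRoot q (2 * m + 1) := by
    have := (Complex.isPrimitiveRoot_exp (2 * m + 1) (by omega)).inv
    rw [← Complex.exp_neg] at this
    push_cast at this
    exact this
  have hsum : ∑ j ∈ range (2 * m + 1), c j = ∏ i ∈ range m, (1 - q ^ (2 * i + 1)) := by
    rw [← qB_alt]
    apply Finset.sum_congr rfl
    intro j hj
    symm
    apply qB_root q (2 * m) hprim.pow_eq_one
    · intro j hj
      exact hprim.pow_ne_one_of_pos_of_lt (by omega) (by omega)
    · simp [hcdef]
    · intro j
      simp only [hcdef, hq]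
      rw [← Complex.exp_nat_mul, ← Complex.exp_add]
      congr 1
      push_cast
      field_simp
      ring
    · have := Finset.mem_range.mp hj
      omega
  set D : ℂ := Complex.exp (-(π * Complex.I * (m * (m + 1)) / (2 * m + 1))) with hD
  have hneg : ∀ n : ℕ, Complex.exp (n * (π * Complex.I)) = (-1) ^ n := by
    intro n
    rw [Complex.exp_nat_mul, Complex.exp_pi_mul_I]
  have hneg' : ∀ n : ℕ, Complex.exp (-(n * (π * Complex.I))) = (-1) ^ n := by
    intro n
    rw [Complex.exp_neg, hneg, ← inv_pow]
    norm_num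
  have hplus : ∀ n : ℕ, D * c (m + n) =
      (-1) ^ n * Complex.exp ((π * (n : ℝ) ^ 2 / (2 * m + 1) : ℝ) * Complex.I) := by
    intro n
    rw [← hneg]
    simp only [hD, hcdef]
    rw [← Complex.exp_add, ← Complex.exp_add]
    congr 1
    push_cast
    linear_combination (π * Complex.I * n) * hinv
  have hminus : ∀ n : ℕ, n ≤ m → D * c (m - n) =
      (-1) ^ n * Complex.exp ((π * (n : ℝ) ^ 2 / (2 * m + 1) : ℝ) * Complex.I) := by
    intro n hn
    rw [← hneg']
    simp only [hD, hcdef]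
    rw [← Complex.exp_add, ← Complex.exp_add]
    congr 1
    push_cast [Nat.cast_sub hn]
    linear_combination (-(π * Complex.I * n)) * hinv
  have hterm : ∀ i : ℕ, 1 - q ^ (2 * i + 1) =
      ((2 * Real.sin (π * (2 * i + 1) / (2 * m + 1)) : ℝ) : ℂ) * (Complex.I *
        Complex.exp (-(π * Complex.I * (2 * i + 1) / (2 * m + 1)))) := by
    intro i
    have e1 : q ^ (2 * i + 1) = Complex.exp (-(π * Complex.I * (2 * i + 1) / (2 * m + 1))) *
        Complex.exp (-(π * Complex.I * (2 * i + 1) / (2 * m + 1))) := by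
      rw [hq, ← Complex.exp_nat_mul, ← Complex.exp_add]
      congr 1
      push_cast
      field_simp
      ring
    have e2 : Complex.exp (π * Complex.I * (2 * i + 1) / (2 * m + 1)) *
        Complex.exp (-(π * Complex.I * (2 * i + 1) / (2 * m + 1))) = 1 := by
      rw [← Complex.exp_add, add_neg_cancel, Complex.exp_zero]
    have e3 : (π * (2 * i + 1) / (2 * m + 1) : ℂ) * Complex.I =
        π * Complex.I * (2 * i + 1) / (2 * m + 1) := by ring
    push_cast
    rw [Complex.sin, neg_mul, e3, e1]
    linear_combination (-1 : ℂ) * e2 + (Complex.exp (π * Complex.I * (2 * i + 1) / (2 * m + 1)) *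
        Complex.exp (-(π * Complex.I * (2 * i + 1) / (2 * m + 1))) -
        Complex.exp (-(π * Complex.I * (2 * i + 1) / (2 * m + 1))) ^ 2) * Complex.I_sq
  have hexp : ∀ M : ℕ, ∏ i ∈ range M,
      Complex.exp (-(π * Complex.I * (2 * i + 1) / (2 * m + 1))) =
      Complex.exp (-(π * Complex.I * M ^ 2 / (2 * m + 1))) := by
    intro M
    induction M with
    | zero => simp
    | succ M ih =>
      rw [Finset.prod_range_succ, ih, ← Complex.exp_add]
      congr 1
      push_cast
      field_simp
      ring
  have hDe : D * Complex.exp (-(π * Complex.I * m ^ 2 / (2 * m + 1))) = (-1) ^ m := by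
    rw [← hneg', hD, ← Complex.exp_add]
    congr 1
    linear_combination (-(π * Complex.I * m)) * hinv
  have hI : Complex.I ^ m = (((-1) ^ l : ℝ) : ℂ) * Complex.I := by
    rw [hm, pow_succ, pow_mul, Complex.I_sq]
    push_cast
    rfl
  have hprod : D * ∏ i ∈ range m, (1 - q ^ (2 * i + 1)) =
      (((∏ i ∈ range m, (2 * Real.sin (π * (2 * i + 1) / (2 * m + 1)))) *
        ((-1) ^ l * (-1) ^ m) : ℝ) : ℂ) * Complex.I := by
    rw [Finset.prod_congr rfl (fun i _ => hterm i), Finset.prod_mul_distrib,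
      Finset.prod_mul_distrib, hexp, Finset.prod_const, Finset.card_range, hI,
      ← Complex.ofReal_prod]
    rw [Complex.ofReal_mul, Complex.ofReal_mul, Complex.ofReal_pow _ m, Complex.ofReal_neg,
      Complex.ofReal_one, ← hDe]
    ring
  have hre : (D * ∑ j ∈ range (2 * m + 1), c j).re = 0 := by
    rw [hsum, hprod, Complex.re_ofReal_mul, Complex.I_re, mul_zero]
  have hS : D * ∑ j ∈ range (2 * m + 1), c j = 1 + ∑ n ∈ Icc 1 m,
      (((2 * (-1) ^ n : ℝ) : ℂ) *
        Complex.exp ((π * (n : ℝ) ^ 2 / (2 * m + 1) : ℝ) * Complex.I)) := by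
    rw [sum_sym, mul_add, Finset.mul_sum]
    congr 1
    · have := hplus 0
      simpa using this
    · apply Finset.sum_congr rfl
      intro n hn
      rw [mul_add, hplus, hminus n (Finset.mem_Icc.mp hn).2]
      push_cast
      ring
  rw [hS, Complex.add_re, Complex.re_sum, Complex.one_re] at hre
  simp only [Complex.re_ofReal_mul, Complex.exp_ofReal_mul_I_re, mul_assoc] at hre
  rw [← Finset.mul_sum] at hre
  linarith
end

section
/- For every positive integer k, ∑_{n=1}^{2k-1} (-1)^n * sin(π n² / (4k-1)) = (-1)^k * √(4k-1)/2. -/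
open Finset Real

/-- Gaussian binomial coefficients, by the Pascal recursion. -/
def qb (q : ℂ) : ℕ → ℕ → ℂ
  | _, 0 => 1
  | 0, _ + 1 => 0
  | m + 1, j + 1 => qb q m j + q ^ (j + 1) * qb q m (j + 1)

lemma qb_zero_right (q : ℂ) (m : ℕ) : qb q m 0 = 1 := by cases m <;> simp [qb]

lemma qb_succ (q : ℂ) (m j : ℕ) :
    qb q (m + 1) (j + 1) = qb q m j + q ^ (j + 1) * qb q m (j + 1) := by simp [qb]

lemma qb_gt (q : ℂ) (m : ℕ) : ∀ j, m < j → qb q m j = 0 := by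
  induction m with
  | zero => intro j hj; cases j with
    | zero => omega
    | succ j => simp [qb]
  | succ m ih => intro j hj; cases j with
    | zero => omega
    | succ j => rw [qb_succ, ih j (by omega), ih (j + 1) (by omega)]; simp

lemma qb_absorb (q : ℂ) (m : ℕ) : ∀ j,
    (1 - q ^ (j + 1)) * qb q (m + 1) (j + 1) = (1 - q ^ (m + 1)) * qb q m j := by
  induction m with
  | zero => intro j; cases j with
    | zero => simp [qb]
    | succ j => simp [qb]
  | succ m ih =>
    intro j
    have h1 := ih j
    rw [qb_succ q (m + 1) j]
    cases j with
    | zero =>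
      simp only [qb_zero_right] at *
      linear_combination q ^ (0 + 1) * h1
    | succ j =>
      have h2 := ih j
      have h3 := qb_succ q m j
      linear_combination q ^ (j + 2) * h1 + q * h2 - q * (1 - q ^ (m + 1)) * h3

lemma gauss_step (q : ℂ) (m : ℕ) :
    ∑ j ∈ range (m + 3), (-1) ^ j * qb q (m + 2) j =
      (1 - q ^ (m + 1)) * ∑ j ∈ range (m + 1), (-1) ^ j * qb q m j := by
  have key : ∀ j, (-1 : ℂ) ^ (j + 1) * qb q (m + 2) (j + 1) =
      ((-1) ^ (j + 1) * qb q (m + 1) (j + 1) - (-1) ^ j * qb q (m + 1) j)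
        + (1 - q ^ (m + 1)) * ((-1) ^ j * qb q m j) := by
    intro j
    have h := qb_absorb q m j
    rw [qb_succ q (m + 1) j]
    linear_combination (-1) ^ j * h
  rw [sum_range_succ', sum_congr rfl (fun j _ => key j), sum_add_distrib,
    sum_range_sub (fun j => (-1 : ℂ) ^ j * qb q (m + 1) j), ← mul_sum,
    sum_range_succ _ (m + 1), qb_gt q (m + 1) (m + 2) (by omega), qb_gt q m (m + 1) (by omega)]
  simp [qb_zero_right]

lemma gauss_prod (q : ℂ) (m : ℕ) :
    ∑ j ∈ range (2 * m + 1), (-1) ^ j * qb q (2 * m) j =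
      ∏ i ∈ range m, (1 - q ^ (2 * i + 1)) := by
  induction m with
  | zero => simp [qb]
  | succ m ih =>
    rw [prod_range_succ, ← ih, mul_comm _ (1 - _)]
    exact gauss_step q (2 * m)

/-- `E N x = exp (i π x / N)`. -/
noncomputable def E (N : ℕ) (x : ℤ) : ℂ := Complex.exp (π * Complex.I * x / N)

lemma E_add (N : ℕ) (x y : ℤ) : E N (x + y) = E N x * E N y := by
  unfold E; rw [← Complex.exp_add]; congr 1; push_cast; ring

lemma E_pow (N : ℕ) (x : ℤ) (n : ℕ) : E N x ^ n = E N (n * x) := by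
  unfold E; rw [← Complex.exp_nat_mul]; congr 1; push_cast; ring

lemma E_zero (N : ℕ) : E N 0 = 1 := by simp [E]

lemma E_N (N : ℕ) (hN : 0 < N) : E N N = -1 := by
  unfold E
  have : (N : ℂ) ≠ 0 := by exact_mod_cast hN.ne'
  push_cast
  rw [mul_div_assoc, div_self this, mul_one, Complex.exp_pi_mul_I]

lemma E_mul_N (N : ℕ) (hN : 0 < N) (n : ℕ) : E N (n * N) = (-1) ^ n := by
  rw [← E_pow, E_N N hN]

lemma E_prim (N : ℕ) (hN : 0 < N) : IsPrimitiveRoot (E N 2) N := by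
  have := Complex.isPrimitiveRoot_exp N hN.ne'
  convert this using 1
  unfold E; congr 1; push_cast; ring

lemma E_neg_mul (N : ℕ) (x : ℤ) : E N (-x) * E N x = 1 := by
  rw [← E_add]; simp [E_zero]

lemma E_prim_neg (N : ℕ) (hN : 0 < N) : IsPrimitiveRoot (E N (-2)) N := by
  have := (E_prim N hN).inv
  rwa [← eq_inv_of_mul_eq_one_left (E_neg_mul N 2)] at this

lemma qb_val (m : ℕ) : ∀ j, j ≤ 2 * m →
    (-1) ^ j * qb (E (2 * m + 1) (-2)) (2 * m) j = E (2 * m + 1) (j * (j + 1)) := by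
  intro j
  have hp := E_prim_neg (2 * m + 1) (by omega)
  induction j with
  | zero => intro _; simp [qb_zero_right, E_zero]
  | succ j ih =>
    intro hj
    have ih := ih (by omega)
    have h := qb_absorb (E (2 * m + 1) (-2)) (2 * m) j
    rw [hp.pow_eq_one, sub_self, zero_mul] at h
    have h0 : 1 - E (2 * m + 1) (-2) ^ (j + 1) ≠ 0 := by
      rw [sub_ne_zero]; exact (hp.pow_ne_one_of_pos_of_lt (by omega) (by omega)).symm
    have h1 := (mul_eq_zero.mp h).resolve_left h0
    rw [qb_succ, E_pow] at h1
    have e1 : E (2 * m + 1) (((j + 1 : ℕ) : ℤ) * (((j + 1 : ℕ) : ℤ) + 1)) =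
        E (2 * m + 1) (j * (j + 1)) * E (2 * m + 1) (((j + 1 : ℕ) : ℤ) * 2) := by
      rw [← E_add]; congr 1; push_cast; ring
    have e2 := E_neg_mul (2 * m + 1) (((j + 1 : ℕ) : ℤ) * 2)
    rw [← mul_neg] at e2
    rw [e1, ← ih]
    linear_combination (-(-1) ^ j * E (2 * m + 1) (((j + 1 : ℕ) : ℤ) * 2)) * h1
      + (-1) ^ j * qb (E (2 * m + 1) (-2)) (2 * m) (j + 1) * e2

lemma sum_E (m : ℕ) :
    ∑ j ∈ range (2 * m + 1), E (2 * m + 1) (j * (j + 1)) =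
      ∏ i ∈ range m, (1 - E (2 * m + 1) (-2) ^ (2 * i + 1)) := by
  rw [← gauss_prod]
  exact sum_congr rfl fun j hj => (qb_val m j (by have := mem_range.mp hj; omega)).symm

lemma sin_E (N r : ℕ) :
    1 - E N (-2) ^ r = E N (-r) * (Complex.I * ((2 * Real.sin (π * r / N) : ℝ) : ℂ)) := by
  have h : ((2 * Real.sin (π * r / N) : ℝ) : ℂ) * Complex.I = E N r - E N (-r) := by
    push_cast
    rw [Complex.sin]
    unfold E
    have a1 : -((π : ℂ) * r / N) * Complex.I = π * Complex.I * ((-r : ℤ) : ℂ) / N := by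
      push_cast; ring
    have a2 : ((π : ℂ) * r / N) * Complex.I = π * Complex.I * ((r : ℤ) : ℂ) / N := by
      push_cast; ring
    rw [a1, a2]
    linear_combination (Complex.exp (π * Complex.I * ((-r : ℤ) : ℂ) / N)
      - Complex.exp (π * Complex.I * ((r : ℤ) : ℂ) / N)) * Complex.I_mul_I
  rw [mul_comm Complex.I, h, mul_sub, E_neg_mul, ← E_add, E_pow]
  congr 2; ring

noncomputable def P (m : ℕ) : ℝ :=
  ∏ i ∈ range m, (2 * Real.sin (π * ((2 * i + 1 : ℕ) : ℝ) / ((2 * m + 1 : ℕ) : ℝ)))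

lemma P_nonneg (m : ℕ) : 0 ≤ P m := by
  refine prod_nonneg fun i hi => ?_
  have hi := mem_range.mp hi
  have h : ((2 * i + 1 : ℕ) : ℝ) ≤ ((2 * m + 1 : ℕ) : ℝ) := by exact_mod_cast (by omega)
  have h0 : (0 : ℝ) < ((2 * m + 1 : ℕ) : ℝ) := by positivity
  refine mul_nonneg (by norm_num) (Real.sin_nonneg_of_nonneg_of_le_pi (by positivity) ?_)
  rw [div_le_iff₀ h0]
  exact mul_le_mul_of_nonneg_left h pi_pos.le

lemma prod_eq (m : ℕ) : ∀ l, l ≤ m → 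
    ∏ i ∈ range l, (1 - E (2 * m + 1) (-2) ^ (2 * i + 1)) =
    E (2 * m + 1) (-(l * l)) * Complex.I ^ l *
    ((∏ i ∈ range l, (2 * Real.sin (π * ((2 * i + 1 : ℕ) : ℝ) / ((2 * m + 1 : ℕ) : ℝ))) : ℝ) : ℂ) := by
  intro l
  induction l with
  | zero => intro _; simp [E_zero]
  | succ l ih =>
    intro hl
    rw [prod_range_succ, ih (by omega), sin_E, prod_range_succ,
      Complex.ofReal_mul (∏ i ∈ range l, _)]
    have : E (2 * m + 1) (-(((l + 1 : ℕ) : ℤ) * ((l + 1 : ℕ) : ℤ))) =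
        E (2 * m + 1) (-(l * l)) * E (2 * m + 1) (-((2 * l + 1 : ℕ) : ℤ)) := by
      rw [← E_add]; congr 1; push_cast; ring
    rw [this]; ring

lemma prod_pair (f : ℕ → ℂ) (m : ℕ) :
    ∏ r ∈ range (2 * m), f r = ∏ i ∈ range m, (f (2 * i) * f (2 * i + 1)) := by
  induction m with
  | zero => simp
  | succ m ih => rw [prod_range_succ, ← ih, mul_add, prod_range_succ, prod_range_succ]; ring

lemma P_sq (m : ℕ) : P m ^ 2 = 2 * m + 1 := by
  have hp := E_prim_neg (2 * m + 1) (by omega)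
  have h := hp.prod_one_sub_pow_eq_order
  rw [prod_pair, prod_mul_distrib, ← prod_range_reflect (fun i => 1 - E (2*m+1) (-2) ^ (2 * i + 1 + 1)),
    ← prod_mul_distrib] at h
  have : (((P m) ^ 2 : ℝ) : ℂ) = 2 * m + 1 := by
    rw [Complex.ofReal_pow]
    rw [Nat.cast_mul, Nat.cast_ofNat] at h
    rw [← h]
    unfold P
    rw [Complex.ofReal_prod, ← prod_pow]
    refine prod_congr rfl fun i hi => ?_
    have hi := mem_range.mp hi
    have e : E (2*m+1) (-2) ^ (2 * (m - 1 - i) + 1 + 1) = E (2*m+1) ((2 * i + 1 : ℕ) * 2) := by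
      have h1 : E (2*m+1) (-2) ^ (2 * (m - 1 - i) + 1 + 1) * E (2*m+1) (-2) ^ (2 * i + 1) = 1 := by
        rw [← pow_add, show 2 * (m - 1 - i) + 1 + 1 + (2 * i + 1) = 2 * m + 1 by omega]
        exact hp.pow_eq_one
      have h2 := E_neg_mul (2*m+1) ((2 * i + 1 : ℕ) * 2)
      rw [E_pow _ _ (2 * i + 1), mul_neg] at h1
      linear_combination E (2*m+1) ((2 * i + 1 : ℕ) * 2) * h1
        - E (2 * m + 1) (-2) ^ (2 * (m - 1 - i) + 1 + 1) * h2
    rw [e]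
    have hs := sin_E (2*m+1) (2*i+1)
    have e3 : E (2*m+1) ((2 * i + 1 : ℕ) * 2) * E (2*m+1) (-2) ^ (2*i+1) = 1 := by
      rw [E_pow, ← E_add]; convert E_zero _ using 2; ring
    have e4 : E (2*m+1) ((2 * i + 1 : ℕ) * 2) * E (2*m+1) (-(2 * i + 1 : ℕ)) ^ 2 = 1 := by
      rw [E_pow, ← E_add]; convert E_zero _ using 2; push_cast; ring
    set s := ((2 * Real.sin (π * ((2 * i + 1 : ℕ) : ℝ) / ((2 * m + 1 : ℕ) : ℝ)) : ℝ) : ℂ) with hsd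
    have goal1 : s ^ 2 = (1 - E (2*m+1) (-2) ^ (2*i+1)) * (1 - E (2*m+1) ((2 * i + 1 : ℕ) * 2)) := by
      have x1 : (1 - E (2*m+1) (-2) ^ (2*i+1)) * (1 - E (2*m+1) ((2 * i + 1 : ℕ) * 2))
         = - E (2*m+1) ((2 * i + 1 : ℕ) * 2) * (1 - E (2*m+1) (-2) ^ (2*i+1)) ^ 2 := by
        linear_combination (-1 + E (2*m+1) (-2) ^ (2*i+1)) * e3
      rw [x1, hs]
      linear_combination (- s ^ 2) * e4 + (s ^ 2 * E (2*m+1) ((2 * i + 1 : ℕ) * 2) * E (2*m+1) (-(2 * i + 1 : ℕ)) ^ 2) * Complex.I_mul_I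
    rw [← goal1]
  exact_mod_cast this

lemma sum_fold (f : ℕ → ℂ) (m : ℕ) :
    ∑ j ∈ range (2 * m + 1), f j =
      f m + ∑ n ∈ range m, (f (m + (n + 1)) + f (m - 1 - n)) := by
  rw [show 2 * m + 1 = m + (m + 1) by ring, sum_range_add, ← sum_range_reflect, sum_range_succ',
    sum_add_distrib]
  simp; ring

lemma gauss_main (m : ℕ) :
    1 + 2 * ∑ n ∈ range m, (-1) ^ (n + 1) * E (2 * m + 1) ((n + 1) ^ 2) =
      (-Complex.I) ^ m * (P m : ℂ) := by
  have h := sum_E m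
  rw [prod_eq m m le_rfl, sum_fold] at h
  have hterm : ∀ n ∈ range m, E (2*m+1) ((m + (n + 1) : ℕ) * ((m + (n + 1) : ℕ) + 1))
      + E (2*m+1) ((m - 1 - n : ℕ) * ((m - 1 - n : ℕ) + 1)) =
      E (2*m+1) (m * (m + 1)) * (2 * ((-1) ^ (n + 1) * E (2 * m + 1) ((n + 1) ^ 2))) := by
    intro n hn
    have hn := mem_range.mp hn
    have hN := E_mul_N (2*m+1) (by omega) (n + 1)
    have hinv := E_neg_mul (2*m+1) ((n + 1 : ℕ) * (2 * m + 1 : ℕ))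
    have hsq : ((-1 : ℂ) ^ (n + 1)) * (-1) ^ (n + 1) = 1 := by
      rw [← mul_pow]; simp
    have hN' : E (2*m+1) (-((n + 1 : ℕ) * (2 * m + 1 : ℕ))) = (-1) ^ (n + 1) := by
      rw [hN] at hinv
      linear_combination (-1) ^ (n + 1) * hinv - E (2*m+1) (-((n + 1 : ℕ) * (2 * m + 1 : ℕ))) * hsq
    have a : E (2*m+1) ((m + (n + 1) : ℕ) * ((m + (n + 1) : ℕ) + 1)) =
        E (2*m+1) (m * (m + 1)) * E (2 * m + 1) ((n + 1) ^ 2) * (-1) ^ (n + 1) := by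
      rw [← hN, ← E_add, ← E_add]; congr 1; push_cast; ring
    have b : E (2*m+1) ((m - 1 - n : ℕ) * ((m - 1 - n : ℕ) + 1)) =
        E (2*m+1) (m * (m + 1)) * E (2 * m + 1) ((n + 1) ^ 2) * (-1) ^ (n + 1) := by
      rw [← hN', ← E_add, ← E_add]; congr 1
      have : ((m - 1 - n : ℕ) : ℤ) = m - 1 - n := by omega
      rw [this]; push_cast; ring
    rw [a, b]; ring
  rw [sum_congr rfl hterm, ← mul_sum, ← mul_sum] at h
  have e1 := E_mul_N (2*m+1) (by omega) m
  have e2 : E (2*m+1) (m * (m + 1)) = E (2*m+1) (-(m * m)) * (-1) ^ m := by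
    rw [← e1, ← E_add]; congr 1; push_cast; ring
  have hne : E (2*m+1) (-(m * m)) ≠ 0 := Complex.exp_ne_zero _
  have hsq : ((-1 : ℂ) ^ m) * (-1) ^ m = 1 := by
    rw [← mul_pow]; simp
  rw [e2] at h
  apply mul_left_cancel₀ hne
  rw [neg_pow]
  change _ = E (2*m+1) (-(m * m)) * Complex.I ^ m * (P m : ℂ) at h
  linear_combination (-1) ^ m * h - E (2*m+1) (-(m * m)) * (1 + 2 * ∑ n ∈ range m, (-1) ^ (n + 1) * E (2 * m + 1) ((n + 1) ^ 2)) * hsq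

theorem alternating_sine_sum_4k_sub_one (k : ℕ) (hk : 0 < k) :
    ∑ n ∈ Finset.Icc 1 (2 * k - 1), (-1 : ℝ) ^ n *
        Real.sin (π * (n : ℝ) ^ 2 / (4 * (k : ℝ) - 1)) =
      (-1 : ℝ) ^ k * Real.sqrt (4 * (k : ℝ) - 1) / 2 := by
  obtain ⟨l, rfl⟩ : ∃ l, k = l + 1 := ⟨k - 1, by omega⟩
  have h := gauss_main (2 * l + 1)
  have hP : P (2 * l + 1) = Real.sqrt (4 * ((l + 1 : ℕ) : ℝ) - 1) := by
    rw [eq_comm, Real.sqrt_eq_iff_eq_sq _ (P_nonneg _), P_sq]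
    · push_cast; ring
    · push_cast; linarith [(Nat.cast_nonneg l : (0 : ℝ) ≤ l)]
  have hI : (-Complex.I) ^ (2 * l + 1) = (((-1 : ℝ) ^ (l + 1) : ℝ) : ℂ) * Complex.I := by
    rw [pow_succ, pow_mul]; simp [pow_succ]
  rw [hI, hP] at h
  have h2 := congrArg Complex.im h
  have hE : ∀ n ∈ range (2 * l + 1),
      (-1 : ℂ) ^ (n + 1) * E (2 * (2 * l + 1) + 1) ((n + 1) ^ 2) =
      (((-1 : ℝ) ^ (n + 1) : ℝ) : ℂ) * Complex.exp (((π * ((n + 1 : ℕ) : ℝ) ^ 2 /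
        (4 * ((l + 1 : ℕ) : ℝ) - 1) : ℝ) : ℂ) * Complex.I) := by
    intro n _
    unfold E
    push_cast
    congr 2
    rw [show (2 * (2 * (l : ℂ) + 1) + 1) = 4 * (l + 1) - 1 by ring]; ring
  rw [sum_congr rfl hE] at h2
  have h3 : ∑ n ∈ Finset.Icc 1 (2 * (l + 1) - 1), (-1 : ℝ) ^ n *
        Real.sin (π * (n : ℝ) ^ 2 / (4 * ((l + 1 : ℕ) : ℝ) - 1)) =
      ∑ n ∈ range (2 * l + 1), (-1 : ℝ) ^ (n + 1) *
        Real.sin (π * ((n + 1 : ℕ) : ℝ) ^ 2 / (4 * ((l + 1 : ℕ) : ℝ) - 1)) := by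
    rw [show 2 * (l + 1) - 1 = 2 * l + 1 by omega, range_eq_Ico,
      sum_Ico_add' (fun n : ℕ => (-1 : ℝ) ^ n *
        Real.sin (π * (n : ℝ) ^ 2 / (4 * ((l + 1 : ℕ) : ℝ) - 1))) 0 (2 * l + 1) 1]
    rfl
  rw [h3]
  rw [show (2 : ℂ) = ((2 : ℝ) : ℂ) by norm_num, Complex.add_im, Complex.one_im, Complex.im_ofReal_mul, Complex.im_sum] at h2
  simp only [Complex.im_ofReal_mul, Complex.exp_ofReal_mul_I_im, Complex.im_mul_ofReal, Complex.I_im] at h2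
  linarith
end

section
/- For every positive integer k, ∑_{n=1}^{2k-2} (-1)^n * cos(π n² / (4k-3)) = -1/2 - (-1)^k * √(4k-3)/2. -/
open Finset Real

/-- Theta tends to one at the cusp. -/
lemma aux_theta_tendsto (s c : ℝ) :
    Filter.Tendsto (fun t : ℝ => jacobiTheta₂ (s : ℂ) (Complex.I * t + c)) Filter.atTop
      (nhds 1) := by
  have h1 : (1 : ℂ) = ∑' n : ℤ, (if n = 0 then (1 : ℂ) else 0) := by simp
  rw [h1]
  unfold jacobiTheta₂
  have hb := summable_pow_mul_jacobiTheta₂_term_bound 0 (T := 1) one_pos 0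
  refine tendsto_tsum_of_dominated_convergence hb ?_ ?_
  · intro n
    by_cases hn : n = 0
    · subst hn
      simp [jacobiTheta₂_term]
    · rw [if_neg hn, tendsto_zero_iff_norm_tendsto_zero]
      simp only [norm_jacobiTheta₂_term]
      refine Real.tendsto_exp_atBot.comp ?_
      have hn2 : (0 : ℝ) < (n : ℝ) ^ 2 := by positivity
      have : (fun t : ℝ => -π * (n : ℝ) ^ 2 * (Complex.I * t + c).im - 2 * π * n * (s : ℂ).im)
          = fun t : ℝ => (-π * (n : ℝ) ^ 2) * t := by
        funext t; simp
      rw [this]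
      exact Filter.tendsto_id.const_mul_atTop_of_neg (by nlinarith [Real.pi_pos])
  · filter_upwards [Filter.eventually_ge_atTop 1] with t ht n
    have := norm_jacobiTheta₂_term_le (S := 0) (T := 1) one_pos (z := (s : ℂ))
      (τ := Complex.I * t + c) (by simp) (by simpa using ht) n
    simpa using this

/-- Modular transformation. -/
lemma aux_modular (m : ℕ) (hm : 0 < m) (t : ℝ) (ht : 0 < t) :
    jacobiTheta₂ (1 / 2) (1 / m + Complex.I / (m ^ 2 * t)) =
      1 / (-Complex.I * (1 / m + Complex.I / (m ^ 2 * t))) ^ (1 / 2 : ℂ)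
        * Complex.exp (-π * Complex.I * m / 4)
        * (-Complex.I * (Complex.I * t - 1 / m)) ^ (1 / 2 : ℂ)
        * jacobiTheta₂ (1 / 2) (Complex.I * t - 1 / m) := by
  have hmC : (m : ℂ) ≠ 0 := by exact_mod_cast hm.ne'
  have htC : (t : ℂ) ≠ 0 := by exact_mod_cast ht.ne'
  set τ : ℂ := 1 / m + Complex.I / (m ^ 2 * t) with hτ
  set σ : ℂ := Complex.I * t - 1 / m with hσ
  have hσ0 : σ ≠ 0 := by
    intro h
    have := congrArg Complex.im h
    have h2 : σ.im = t := by
      rw [hσ]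
      have : (1 / (m : ℂ)) = ((1 / m : ℝ) : ℂ) := by push_cast; rfl
      rw [this]
      simp only [Complex.sub_im, Complex.ofReal_im]
      simp
    rw [h2] at this
    simp at this
    exact ht.ne' this
  have e1 : σ * Complex.I = - (m * t * τ) := by
    rw [hσ, hτ]; field_simp; ring_nf; rw [Complex.I_sq]; ring
  have hτ0 : τ ≠ 0 := by
    intro h; rw [h] at e1; simp [hσ0] at e1
  have hinv : 1 / τ = m + 1 / σ := by
    rw [eq_comm, add_div' _ _ _ hσ0, div_eq_div_iff hσ0 hτ0]
    have e2 : m * σ + 1 = m * t * Complex.I := by rw [hσ]; field_simp; ring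
    rw [e2]
    linear_combination Complex.I * e1 - σ * Complex.I_sq
  have hpow : (-Complex.I * σ) ^ (1 / 2 : ℂ) ≠ 0 := by
    rw [Ne, Complex.cpow_eq_zero_iff, not_and_or]
    exact Or.inl (mul_ne_zero (neg_ne_zero.mpr Complex.I_ne_zero) hσ0)
  rw [jacobiTheta₂_functional_equation (1 / 2) τ, jacobiTheta₂_functional_equation (1 / 2) σ]
  have hth : jacobiTheta₂ (1 / 2 / τ) (-1 / τ) = jacobiTheta₂ (1 / 2 / σ) (-1 / σ) := by
    unfold jacobiTheta₂ jacobiTheta₂_term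
    refine tsum_congr fun n => ?_
    obtain ⟨l, hl⟩ := Int.even_mul_succ_self (n - 1)
    have hlc : ((n : ℂ) - 1) * n = 2 * l := by
      have : (n - 1) * n = 2 * l := by linarith [hl, show (n - 1) * (n - 1 + 1) = (n - 1) * n by ring]
      exact_mod_cast this
    rw [Complex.exp_eq_exp_iff_exists_int]
    refine ⟨-l * m, ?_⟩
    have a1 : (1 / 2 / τ : ℂ) = 1 / 2 * (1 / τ) := by ring
    have a2 : (-1 / τ : ℂ) = - (1 / τ) := by ring
    rw [a1, a2, hinv]
    push_cast
    linear_combination (-π * Complex.I * m) * hlc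
  have hexp : Complex.exp (-π * Complex.I * (1 / 2) ^ 2 / τ) =
      Complex.exp (-π * Complex.I * m / 4) * Complex.exp (-π * Complex.I * (1 / 2) ^ 2 / σ) := by
    rw [← Complex.exp_add]
    congr 1
    have a1 : (-π * Complex.I * (1 / 2) ^ 2 / τ : ℂ) = -π * Complex.I * (1 / 2) ^ 2 * (1 / τ) := by
      ring
    rw [a1, hinv]; ring
  rw [hth, hexp]
  field_simp

/-- Splitting into residue classes. -/
lemma aux_split (m : ℕ) (hm : 0 < m) (t : ℝ) (ht : 0 < t) :
    jacobiTheta₂ (1 / 2) (1 / m + Complex.I / (m ^ 2 * t)) =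
      ∑ r ∈ Finset.range m, Complex.exp (π * Complex.I * (r + r ^ 2 / m)) *
        ((t : ℂ) ^ (1 / 2 : ℂ) *
          jacobiTheta₂ ((-(r / m : ℝ) : ℝ) : ℂ) (Complex.I * t + (0 : ℝ))) := by
  have hmC : (m : ℂ) ≠ 0 := by exact_mod_cast hm.ne'
  have htC : (t : ℂ) ≠ 0 := by exact_mod_cast ht.ne'
  have : NeZero m := ⟨hm.ne'⟩
  have hpow : (t : ℂ) ^ (1 / 2 : ℂ) ≠ 0 := by
    rw [Ne, Complex.cpow_eq_zero_iff, not_and_or]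
    exact Or.inl htC
  have him : 0 < (1 / m + Complex.I / (m ^ 2 * t) : ℂ).im := by
    have : (1 / m + Complex.I / (m ^ 2 * t) : ℂ) =
        ((1 / m : ℝ) : ℂ) + ((1 / (m ^ 2 * t) : ℝ) : ℂ) * Complex.I := by
      push_cast; ring
    rw [this]
    simp only [Complex.add_im, Complex.ofReal_im, Complex.im_ofReal_mul,
      Complex.I_im]
    positivity
  have hsum := ((Int.divModEquiv m).symm.hasSum_iff.mpr
    (hasSum_jacobiTheta₂_term (1 / 2) him)).summable
  have h1 : jacobiTheta₂ (1 / 2) (1 / m + Complex.I / (m ^ 2 * t)) =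
      ∑' p : Fin m × ℤ, jacobiTheta₂_term (p.2 * m + (p.1 : ℕ)) (1 / 2)
        (1 / m + Complex.I / (m ^ 2 * t)) := by
    unfold jacobiTheta₂
    rw [← ((Equiv.prodComm _ _).trans (Int.divModEquiv m).symm).tsum_eq]
    rfl
  have hsum2 : Summable (fun p : Fin m × ℤ => jacobiTheta₂_term (p.2 * m + (p.1 : ℕ)) (1 / 2)
        (1 / m + Complex.I / (m ^ 2 * t))) :=
    ((Equiv.prodComm (Fin m) ℤ).summable_iff.mpr hsum)
  rw [h1, hsum2.tsum_prod, tsum_fintype, Finset.sum_range]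
  refine Finset.sum_congr rfl fun r _ => ?_
  rw [jacobiTheta₂_functional_equation]
  have b1 : -Complex.I * (Complex.I * t + (0 : ℝ)) = t := by
    push_cast; linear_combination (-(t : ℂ)) * Complex.I_sq
  rw [b1]
  unfold jacobiTheta₂
  rw [← mul_assoc ((t : ℂ) ^ (1 / 2 : ℂ)), ← mul_assoc ((t : ℂ) ^ (1 / 2 : ℂ)),
    mul_one_div_cancel hpow, one_mul, ← mul_assoc, ← tsum_mul_left]
  refine tsum_congr fun j => ?_
  unfold jacobiTheta₂_term
  rw [← Complex.exp_add, ← Complex.exp_add, Complex.exp_eq_exp_iff_exists_int]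
  obtain ⟨l, hl⟩ := Int.even_mul_succ_self j
  have hlc : (j : ℂ) * (j + 1) = 2 * l := by
    have : j * (j + 1) = 2 * l := by linarith
    exact_mod_cast this
  refine ⟨m * l + j * (r : ℕ), ?_⟩
  have hI : (1 : ℂ) / (Complex.I * t) = -Complex.I / t := by
    rw [div_eq_div_iff (mul_ne_zero Complex.I_ne_zero htC) htC]
    linear_combination (t : ℂ) * Complex.I_sq
  have c1 : ∀ x : ℂ, x / (Complex.I * t + (0 : ℝ)) = x * (-Complex.I / t) := by
    intro x; rw [← hI]; push_cast; ring
  simp only [c1]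
  push_cast
  field_simp
  ring_nf
  linear_combination (m : ℂ) ^ 3 * t * hlc

/-- The reciprocal square root occurring in the limit. -/
lemma aux_sqrt (m : ℕ) (hm : 0 < m) :
    1 / (-Complex.I * (1 / m)) ^ (1 / 2 : ℂ) =
      ((Real.sqrt m : ℝ) : ℂ) * Complex.exp (π * Complex.I / 4) := by
  have hmR : (0 : ℝ) < m := by exact_mod_cast hm
  have e : (-Complex.I * (1 / m) : ℂ) = ((1 / m : ℝ) : ℂ) * (-Complex.I) := by push_cast; ring
  have hne : (-Complex.I * (1 / m) : ℂ) ≠ 0 := by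
    simp [hm.ne']
  rw [Complex.cpow_def_of_ne_zero hne, e, Complex.log_ofReal_mul (by positivity) (by simp),
    Complex.log_neg_I, one_div, ← Complex.exp_neg, Real.sqrt_eq_rpow, Real.rpow_def_of_pos hmR,
    Complex.ofReal_exp, ← Complex.exp_add]
  congr 1
  rw [one_div, Real.log_inv]
  push_cast
  ring

/-- The complete Gauss-type sum. -/
lemma aux_gauss (m : ℕ) (hm : 0 < m) :
    ∑ r ∈ Finset.range m, Complex.exp (π * Complex.I * (r + r ^ 2 / m)) =
      ((Real.sqrt m : ℝ) : ℂ) * Complex.exp (π * Complex.I / 4) *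
        Complex.exp (-π * Complex.I * m / 4) := by
  have hmC : (m : ℂ) ≠ 0 := by exact_mod_cast hm.ne'
  have hl : Filter.Tendsto (fun t : ℝ => ∑ r ∈ Finset.range m,
      Complex.exp (π * Complex.I * (r + r ^ 2 / m)) *
        jacobiTheta₂ ((-(r / m : ℝ) : ℝ) : ℂ) (Complex.I * t + (0 : ℝ))) Filter.atTop
      (nhds (∑ r ∈ Finset.range m, Complex.exp (π * Complex.I * (r + r ^ 2 / m)) * 1)) :=
    tendsto_finsetSum _ fun r _ => (aux_theta_tendsto _ _).const_mul _
  have hinv : Filter.Tendsto (fun t : ℝ => ((t⁻¹ : ℝ) : ℂ)) Filter.atTop (nhds 0) := by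
    have := (Complex.continuous_ofReal.tendsto 0).comp tendsto_inv_atTop_zero
    simpa [Function.comp_def] using this
  have h1 : Filter.Tendsto (fun t : ℝ =>
      (-Complex.I * (1 / m + Complex.I / (m ^ 2 * t)) : ℂ) ^ (1 / 2 : ℂ)) Filter.atTop
      (nhds ((-Complex.I * (1 / m)) ^ (1 / 2 : ℂ))) := by
    have hc : ContinuousAt (fun z : ℂ => z ^ (1 / 2 : ℂ)) (-Complex.I * (1 / m)) := by
      apply continuousAt_cpow_const
      right
      simp [hm.ne']
    refine hc.tendsto.comp ?_
    have := ((hinv.const_mul (Complex.I / m ^ 2)).const_add ((1 : ℂ) / m)).const_mul (-Complex.I)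
    simp only [mul_zero, add_zero] at this
    refine this.congr fun t => ?_
    push_cast; ring
  have h2 : Filter.Tendsto (fun t : ℝ =>
      (1 + Complex.I / m * ((t⁻¹ : ℝ) : ℂ)) ^ (1 / 2 : ℂ)) Filter.atTop (nhds 1) := by
    have hc : ContinuousAt (fun z : ℂ => z ^ (1 / 2 : ℂ)) 1 :=
      continuousAt_cpow_const (by simp)
    have := (hinv.const_mul (Complex.I / m)).const_add (1 : ℂ)
    simp only [mul_zero, add_zero] at this
    simpa [Function.comp_def] using hc.tendsto.comp this
  have hne : (-Complex.I * (1 / m) : ℂ) ^ (1 / 2 : ℂ) ≠ 0 := by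
    rw [Ne, Complex.cpow_eq_zero_iff, not_and_or]
    left
    simp [hm.ne']
  have h3 := aux_theta_tendsto (1 / 2) (-(1 / m))
  have hr := ((((tendsto_const_nhds (x := (1 : ℂ))).div h1 hne).mul_const (Complex.exp (-π * Complex.I * m / 4))).mul h2).mul h3
  rw [aux_sqrt m hm, mul_one, mul_one] at hr
  simp only [mul_one] at hl
  refine tendsto_nhds_unique hl (hr.congr' ?_)
  filter_upwards [Filter.eventually_gt_atTop 0] with t ht
  have htC : (t : ℂ) ≠ 0 := by exact_mod_cast ht.ne'
  have hpow : (t : ℂ) ^ (1 / 2 : ℂ) ≠ 0 := by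
    rw [Ne, Complex.cpow_eq_zero_iff, not_and_or]
    exact Or.inl htC
  have key := (aux_split m hm t ht).symm.trans (aux_modular m hm t ht)
  have hq : (-Complex.I * (Complex.I * t - 1 / m) : ℂ) ^ (1 / 2 : ℂ) =
      (t : ℂ) ^ (1 / 2 : ℂ) * (1 + Complex.I / m * ((t⁻¹ : ℝ) : ℂ)) ^ (1 / 2 : ℂ) := by
    have e : (-Complex.I * (Complex.I * t - 1 / m) : ℂ) =
        t * (1 + Complex.I / m * ((t⁻¹ : ℝ) : ℂ)) := by
      push_cast; field_simp; ring_nf; rw [Complex.I_sq]; ring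
    have hx : (1 + Complex.I / m * ((t⁻¹ : ℝ) : ℂ)) ≠ 0 := by
      intro h
      have hh : (t : ℂ) * m + Complex.I = 0 := by
        push_cast at h; field_simp at h; linear_combination h
      have := congrArg Complex.im hh
      simp at this
    rw [e, Complex.cpow_def_of_ne_zero (mul_ne_zero htC hx), Complex.log_ofReal_mul ht hx,
      Complex.cpow_def_of_ne_zero htC, Complex.cpow_def_of_ne_zero hx, ← Complex.exp_add,
      Complex.ofReal_log ht.le]
    congr 1; ring
  rw [hq] at key
  have hs : ∑ r ∈ Finset.range m, Complex.exp (π * Complex.I * (r + r ^ 2 / m)) *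
        ((t : ℂ) ^ (1 / 2 : ℂ) *
          jacobiTheta₂ ((-(r / m : ℝ) : ℝ) : ℂ) (Complex.I * t + (0 : ℝ))) =
      (t : ℂ) ^ (1 / 2 : ℂ) * ∑ r ∈ Finset.range m,
        Complex.exp (π * Complex.I * (r + r ^ 2 / m)) *
          jacobiTheta₂ ((-(r / m : ℝ) : ℝ) : ℂ) (Complex.I * t + (0 : ℝ)) := by
    rw [Finset.mul_sum]
    exact Finset.sum_congr rfl fun r _ => by ring
  rw [hs] at key
  apply mul_left_cancel₀ hpow
  rw [key]
  have e3 : (Complex.I * t + ((-(1 / m) : ℝ) : ℂ)) = Complex.I * t - 1 / m := by push_cast; ring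
  have e4 : (((1 / 2 : ℝ)) : ℂ) = 1 / 2 := by push_cast; rfl
  rw [e3, e4]
  simp only [Pi.div_apply]
  ring

/-- Real form of the complete sum for modulus `4p+1`. -/
lemma aux_real (p : ℕ) :
    ∑ r ∈ Finset.range (4 * p + 1), (-1 : ℝ) ^ r * Real.cos (π * (r : ℝ) ^ 2 / (4 * p + 1)) =
      (-1 : ℝ) ^ p * Real.sqrt (4 * p + 1) := by
  have h := aux_gauss (4 * p + 1) (by omega)
  have hr : ((Real.sqrt ((4 * p + 1 : ℕ) : ℝ) : ℝ) : ℂ) * Complex.exp (π * Complex.I / 4) *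
        Complex.exp (-π * Complex.I * ((4 * p + 1 : ℕ) : ℂ) / 4) =
      (((-1 : ℝ) ^ p * Real.sqrt (4 * p + 1) : ℝ) : ℂ) := by
    rw [mul_assoc, ← Complex.exp_add]
    have e : (π * Complex.I / 4 + -π * Complex.I * ((4 * p + 1 : ℕ) : ℂ) / 4 : ℂ) =
        -(p * (π * Complex.I)) := by push_cast; ring
    rw [e, Complex.exp_neg, Complex.exp_nat_mul, Complex.exp_pi_mul_I, ← inv_pow]
    push_cast
    rw [inv_neg, inv_one]
    ring
  rw [hr] at h
  have h2 := congrArg Complex.re h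
  rw [Complex.ofReal_re, Complex.re_sum] at h2
  rw [← h2]
  refine Finset.sum_congr rfl fun r _ => ?_
  have e : (π * Complex.I * (r + r ^ 2 / ((4 * p + 1 : ℕ) : ℂ)) : ℂ) =
      ((π * (r : ℝ) ^ 2 / (4 * p + 1) + r * π : ℝ) : ℂ) * Complex.I := by
    push_cast; ring
  rw [e, Complex.exp_ofReal_mul_I_re, Real.cos_add_nat_mul_pi]

theorem alternating_cosine_sum_4k_sub_three (k : ℕ) (hk : 0 < k) :
    ∑ n ∈ Finset.Icc 1 (2 * k - 2), (-1 : ℝ) ^ n *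
        Real.cos (π * (n : ℝ) ^ 2 / (4 * (k : ℝ) - 3)) =
      -1 / 2 - (-1 : ℝ) ^ k * Real.sqrt (4 * (k : ℝ) - 3) / 2 := by
  obtain ⟨p, rfl⟩ : ∃ p, k = p + 1 := ⟨k - 1, by omega⟩
  have e1 : (4 * ((p + 1 : ℕ) : ℝ) - 3) = 4 * p + 1 := by push_cast; ring
  have e2 : 2 * (p + 1) - 2 = 2 * p := by omega
  rw [e1, e2]
  have h := aux_real p
  set g : ℕ → ℝ := fun r => (-1 : ℝ) ^ r * Real.cos (π * (r : ℝ) ^ 2 / (4 * p + 1)) with hg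
  have hI : ∑ n ∈ Finset.Icc 1 (2 * p), g n = ∑ j ∈ Finset.range (2 * p), g (j + 1) := by
    rw [Finset.range_eq_Ico, Finset.sum_Ico_add' g 0 (2 * p) 1]
    rfl
  have hrefl : ∀ j ∈ Finset.range (2 * p), g (2 * p + (2 * p - 1 - j) + 1) = g (j + 1) := by
    intro j hj
    have hj := Finset.mem_range.mp hj
    obtain ⟨i, hi⟩ : ∃ i, i = 2 * p + (2 * p - 1 - j) + 1 := ⟨_, rfl⟩
    have hi2 : i + (j + 1) = 4 * p + 1 := by omega
    rw [← hi]
    have hiR : (i : ℝ) = (4 * p + 1) - ((j + 1 : ℕ) : ℝ) := by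
      have : ((i + (j + 1) : ℕ) : ℝ) = ((4 * p + 1 : ℕ) : ℝ) := by rw [hi2]
      push_cast at this ⊢
      linarith
    have hpos : (4 * (p : ℝ) + 1) ≠ 0 := by positivity
    have hang : π * (i : ℝ) ^ 2 / (4 * p + 1) =
        π * ((j + 1 : ℕ) : ℝ) ^ 2 / (4 * p + 1) + π + (2 * (p : ℤ) - (j + 1 : ℕ) : ℤ) * (2 * π) := by
      rw [hiR]; push_cast; field_simp; ring
    simp only [hg]
    rw [hang, Real.cos_add_int_mul_two_pi, Real.cos_add_pi]
    have hsgn : (-1 : ℝ) ^ i = - (-1 : ℝ) ^ (j + 1) := by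
      have h1 : (-1 : ℝ) ^ i * (-1 : ℝ) ^ (j + 1) = -1 := by
        rw [← pow_add, hi2]
        exact Odd.neg_one_pow ⟨2 * p, by ring⟩
      rcases neg_one_pow_eq_or ℝ (j + 1) with h2 | h2 <;> rw [h2] at h1 ⊢ <;> linarith
    rw [hsgn]; ring
  have htot : ∑ r ∈ Finset.range (4 * p + 1), g r =
      2 * ∑ j ∈ Finset.range (2 * p), g (j + 1) + 1 := by
    have g0 : g 0 = 1 := by simp [hg]
    rw [Finset.sum_range_succ', g0, show 4 * p = 2 * p + 2 * p by ring,
      Finset.sum_range_add, ← Finset.sum_range_reflect (fun x => g (2 * p + x + 1)),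
      Finset.sum_congr rfl hrefl]
    ring
  rw [htot] at h
  rw [hI, pow_succ]
  linarith
end

section
/- For every positive integer k, ∑_{n=1}^{2k-2} (-1)^n * sin(π n² / (4k-3)) = 0. -/
open Finset Real

/-- Additive character `exp (2 π i j / m)`. -/
noncomputable def ee (m : ℕ) (j : ℤ) : ℂ := Complex.exp (2 * π * Complex.I * ((j : ℂ) / (m : ℂ)))

/-- Quadratic Gauss sum. -/
noncomputable def GG (m : ℕ) (a : ℤ) : ℂ := ∑ n ∈ range m, ee m (a * (n : ℤ) ^ 2)

lemma ee_add (m : ℕ) (i j : ℤ) : ee m (i + j) = ee m i * ee m j := by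
  unfold ee
  rw [← Complex.exp_add]
  congr 1
  push_cast
  ring

lemma ee_mul_self (m : ℕ) (hm : m ≠ 0) (j : ℤ) : ee m (m * j) = 1 := by
  unfold ee
  rw [Complex.exp_eq_one_iff]
  refine ⟨j, ?_⟩
  have : (m : ℂ) ≠ 0 := by exact_mod_cast hm
  push_cast
  field_simp

lemma ee_congr (m : ℕ) (hm : m ≠ 0) (i j : ℤ) (h : (m : ℤ) ∣ i - j) : ee m i = ee m j := by
  obtain ⟨c, hc⟩ := h
  have : i = j + m * c := by linarith
  rw [this, ee_add, ee_mul_self m hm, mul_one]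

lemma ee_mul (m n : ℕ) (hm : m ≠ 0) (j : ℤ) : ee (m * n) (m * j) = ee n j := by
  unfold ee
  have : (m : ℂ) ≠ 0 := by exact_mod_cast hm
  congr 2
  push_cast
  rw [mul_div_mul_left _ _ this]

lemma sum_perm (m : ℕ) (hm : m ≠ 0) (g : ℤ → ℂ)
    (hg : ∀ i j : ℤ, (m : ℤ) ∣ i - j → g i = g j) (c : ℤ) (hc : IsCoprime c (m : ℤ)) :
    ∑ n ∈ range m, g (c * n) = ∑ n ∈ range m, g n := by
  have hm0 : (m : ℤ) ≠ 0 := by exact_mod_cast hm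
  have hcast : ∀ x : ℕ, (((c * x % m).toNat : ℕ) : ℤ) = c * x % m := fun x =>
    Int.toNat_of_nonneg (Int.emod_nonneg _ hm0)
  have hmaps : Set.MapsTo (fun x : ℕ => (c * x % m).toNat) (range m) (range m) := by
    intro x _
    have h1 := Int.emod_lt_of_pos (c * x) (by omega : (0 : ℤ) < m)
    have h2 := hcast x
    simp only [coe_range, Set.mem_Iio]
    omega
  have hinj : Set.InjOn (fun x : ℕ => (c * x % m).toNat) (range m : Set ℕ) := by
    intro x hx y hy hxy
    simp only [coe_range, Set.mem_Iio] at hx hy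
    have h1 : c * x % m = c * y % m := by
      rw [← hcast x, ← hcast y]
      exact_mod_cast hxy
    have h2 : (m : ℤ) ∣ c * (x - y) := by
      rw [mul_sub]; exact Int.ModEq.dvd (Int.ModEq.symm h1)
    have h3 : (m : ℤ) ∣ (x : ℤ) - y := hc.symm.dvd_of_dvd_mul_left h2
    have h4 := Int.eq_zero_of_abs_lt_dvd h3 (by rw [abs_lt]; constructor <;> omega)
    omega
  refine Finset.sum_nbij (fun x : ℕ => (c * x % m).toNat) hmaps hinj
    (Finset.surjOn_of_injOn_of_card_le _ hmaps hinj le_rfl) ?_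
  intro x _
  apply hg
  rw [hcast]
  exact Int.dvd_self_sub_emod

lemma sum_split_s7 (m n : ℕ) (f : ℤ → ℂ) :
    ∑ x ∈ range (m * n), f x = ∑ u ∈ range m, ∑ v ∈ range n, f (u + m * v) := by
  rw [Finset.sum_comm]
  induction n with
  | zero => simp
  | succ n ih =>
    rw [Nat.mul_succ, Finset.sum_range_add, ih, Finset.sum_range_succ]
    congr 1
    apply Finset.sum_congr rfl
    intro x _
    push_cast
    congr 1
    ring

lemma ee_sum (p : ℕ) (hp : p.Prime) (c : ℤ) (hc : ¬ (p : ℤ) ∣ c) :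
    ∑ v ∈ range p, ee p (c * v) = 0 := by
  have hcop : IsCoprime c (p : ℤ) :=
    ((Nat.prime_iff_prime_int.mp hp).irreducible.coprime_iff_not_dvd.mpr hc).symm
  rw [sum_perm p hp.ne_zero (ee p) (ee_congr p hp.ne_zero) c hcop]
  rw [← (Complex.isPrimitiveRoot_exp p hp.ne_zero).geom_sum_eq_zero hp.one_lt]
  apply Finset.sum_congr rfl
  intro x _
  rw [← Complex.exp_nat_mul]
  unfold ee
  congr 1
  push_cast
  ring

lemma GG_coprime (m n : ℕ) (hm : m ≠ 0) (hn : n ≠ 0) (h : m.Coprime n) (a : ℤ) :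
    GG (m * n) a = GG m (a * n) * GG n (a * m) := by
  have hmn : IsCoprime (n : ℤ) (m : ℤ) := (Nat.isCoprime_iff_coprime.mpr h).symm
  have hmn0 : m * n ≠ 0 := mul_ne_zero hm hn
  unfold GG
  rw [sum_split_s7 m n (fun x => ee (m * n) (a * x ^ 2))]
  have hper : ∀ i j : ℤ, (m : ℤ) ∣ i - j →
      (fun u : ℤ => ∑ v ∈ range n, ee (m * n) (a * (u + m * v) ^ 2)) i =
      (fun u : ℤ => ∑ v ∈ range n, ee (m * n) (a * (u + m * v) ^ 2)) j := by
    rintro i j ⟨c, hc⟩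
    have hi : i = j + m * c := by linarith
    subst hi
    -- shift of v by c: both equal a sum over residues
    have key : ∀ (g : ℤ → ℂ), (∀ i j : ℤ, (n : ℤ) ∣ i - j → g i = g j) → ∀ c : ℤ,
        ∑ v ∈ range n, g (v + c) = ∑ v ∈ range n, g v := by
      intro g hg c
      have step : ∀ c : ℤ, ∑ v ∈ range n, g (v + (c + 1)) = ∑ v ∈ range n, g (v + c) := by
        intro c
        have h1 := Finset.sum_range_succ (fun v : ℕ => g (v + c)) n
        have h2 := Finset.sum_range_succ' (fun v : ℕ => g (v + c)) n
        have h3 : g ((n : ℤ) + c) = g (((0 : ℕ) : ℤ) + c) := hg _ _ (by simp)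
        rw [h1, h3] at h2
        have h4 := add_right_cancel h2
        rw [h4]
        apply Finset.sum_congr rfl
        intro x _
        congr 1
        push_cast
        ring
      induction c using Int.induction_on with
      | zero => simp
      | succ i ih => rw [step, ih]
      | pred i ih =>
        rw [← ih, ← step]
        simp
    have := key (fun v => ee (m * n) (a * (j + m * v) ^ 2)) (by
      rintro x y ⟨d, hd⟩
      apply ee_congr _ hmn0
      have : x = y + n * d := by linarith
      subst this
      refine ⟨a * (2 * (j + m * y) * d + m * n * d ^ 2), ?_⟩
      push_cast
      ring) c
    simp only
    rw [← this]
    apply Finset.sum_congr rfl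
    intro x _
    congr 2
    ring
  have hs := sum_perm m hm _ hper n hmn
  refine Eq.trans hs.symm ?_
  rw [Finset.sum_mul_sum]
  apply Finset.sum_congr rfl
  intro x _
  apply Finset.sum_congr rfl
  intro y _
  rw [← ee_mul n m hn, ← ee_mul m n hm, mul_comm n m, ← ee_add]
  apply ee_congr _ hmn0
  refine ⟨2 * a * x * y, ?_⟩
  push_cast
  ring

lemma GG_sq (p m : ℕ) (hp : p.Prime) (hp2 : p ≠ 2) (hm : m ≠ 0) (a : ℤ) (ha : ¬ (p : ℤ) ∣ a) :
    GG (p * (p * m)) a = p * GG m a := by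
  have hp0 := hp.ne_zero
  have hpi := Nat.prime_iff_prime_int.mp hp
  have hN : p * (p * m) ≠ 0 := mul_ne_zero hp0 (mul_ne_zero hp0 hm)
  unfold GG
  have e1 := sum_split_s7 (p * m) p (fun x => ee (p * (p * m)) (a * x ^ 2))
  rw [mul_comm (p * m) p] at e1
  rw [e1]
  have inner : ∀ u : ℤ, ∑ v ∈ range p, ee (p * (p * m)) (a * (u + (p * m : ℕ) * v) ^ 2) =
      ee (p * (p * m)) (a * u ^ 2) * (if (p : ℤ) ∣ u then (p : ℂ) else 0) := by
    intro u
    have : ∀ v ∈ range p, ee (p * (p * m)) (a * (u + (p * m : ℕ) * v) ^ 2) =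
        ee (p * (p * m)) (a * u ^ 2) * ee p ((2 * a * u) * v) := by
      intro v _
      rw [← ee_mul (p * m) p (mul_ne_zero hp0 hm), mul_comm (p * m) p, ← ee_add]
      apply ee_congr _ hN
      refine ⟨a * m * v ^ 2, ?_⟩
      push_cast
      ring
    rw [Finset.sum_congr rfl this, ← Finset.mul_sum]
    congr 1
    split_ifs with h
    · obtain ⟨w, rfl⟩ := h
      have : ∀ v ∈ range p, ee p ((2 * a * (p * w)) * v) = 1 := by
        intro v _
        rw [← ee_mul_self p hp0 (2 * a * w * v)]
        congr 1
        ring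
      rw [Finset.sum_congr rfl this]
      simp
    · apply ee_sum p hp
      intro hd
      rcases hpi.dvd_or_dvd hd with hd | hd
      · rcases hpi.dvd_or_dvd hd with hd | hd
        · have : p ∣ 2 := by exact_mod_cast hd
          exact hp2 ((Nat.prime_dvd_prime_iff_eq hp Nat.prime_two).mp this)
        · exact ha hd
      · exact h hd
  rw [Finset.sum_congr rfl (fun (u : ℕ) _ => inner (u : ℤ))]
  rw [sum_split_s7 p m (fun u => ee (p * (p * m)) (a * u ^ 2) * (if (p : ℤ) ∣ u then (p : ℂ) else 0))]
  rw [Finset.sum_eq_single 0]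
  · rw [Finset.mul_sum]
    apply Finset.sum_congr rfl
    intro v _
    rw [if_pos (by simp), mul_comm]
    congr 1
    rw [← ee_mul p m hp0, ← ee_mul p (p * m) hp0]
    congr 1
    push_cast
    ring
  · intro u hu hu0
    apply Finset.sum_eq_zero
    intro v _
    rw [if_neg, mul_zero]
    intro hd
    have h1 : (p : ℤ) ∣ u := (Int.dvd_add_left (Dvd.intro _ rfl)).mp hd
    have h2 : p ∣ u := by exact_mod_cast h1
    have := Nat.le_of_dvd (Nat.pos_of_ne_zero hu0) h2
    have := Finset.mem_range.mp hu
    omega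
  · intro h
    exact absurd (Finset.mem_range.mpr hp.pos) h

lemma sum_zmod (p : ℕ) [NeZero p] (F : ZMod p → ℂ) :
    ∑ n ∈ range p, F (n : ZMod p) = ∑ x : ZMod p, F x := by
  refine Finset.sum_nbij' (fun n : ℕ => (n : ZMod p)) (fun x => x.val) ?_ ?_ ?_ ?_ ?_
  · simp
  · intro x _; simpa using ZMod.val_lt x
  · intro x hx; exact ZMod.val_cast_of_lt (Finset.mem_range.mp hx)
  · intro x _; simp
  · simp

lemma GG_prime_three (p : ℕ) (hp : p.Prime) (h3 : p % 4 = 3) (a : ℤ) (ha : ¬ (p : ℤ) ∣ a) :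
    GG p (-a) = - GG p a := by
  have : Fact p.Prime := ⟨hp⟩
  have hp0 := hp.ne_zero
  have hp2 : ringChar (ZMod p) ≠ 2 := by
    rw [ZMod.ringChar_zmod_n]; omega
  let F : ZMod p → ℂ := fun t => ee p (a * t.val)
  have hF : ∀ x : ℤ, ee p (a * x) = F (x : ZMod p) := by
    intro x
    apply ee_congr p hp0
    rw [← mul_sub]
    apply Dvd.dvd.mul_left
    rw [ZMod.val_intCast]
    exact Int.dvd_self_sub_emod
  have e1 : GG p a = ∑ x : ZMod p, F (x ^ 2) := by
    rw [← sum_zmod p (fun x => F (x ^ 2))]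
    apply Finset.sum_congr rfl
    intro n _
    rw [hF]; push_cast; rfl
  have e2 : GG p (-a) = ∑ x : ZMod p, F (-x ^ 2) := by
    rw [← sum_zmod p (fun x => F (-x ^ 2))]
    apply Finset.sum_congr rfl
    intro n _
    rw [neg_mul, ← mul_neg, hF]; push_cast; rfl
  have e0 : ∑ x : ZMod p, F x = 0 := by
    rw [← sum_zmod p F, ← ee_sum p hp a ha]
    apply Finset.sum_congr rfl
    intro n _
    rw [hF]; push_cast; rfl
  have count : ∀ H : ZMod p → ℂ, ∑ x : ZMod p, H (x ^ 2) =
      ∑ t : ZMod p, ((quadraticChar (ZMod p) t : ℤ) + 1 : ℂ) * H t := by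
    intro H
    rw [← Finset.sum_fiberwise (s := Finset.univ) (g := fun x : ZMod p => x ^ 2)]
    apply Finset.sum_congr rfl
    intro t _
    have h1 := quadraticChar_card_sqrts hp2 t
    have h2 : ∀ x ∈ Finset.univ.filter (fun x : ZMod p => x ^ 2 = t), H (x ^ 2) = H t := by
      intro x hx
      rw [(Finset.mem_filter.mp hx).2]
    rw [Finset.sum_congr rfl h2, Finset.sum_const, nsmul_eq_mul]
    congr 1
    have h3 : ((Finset.univ.filter (fun x : ZMod p => x ^ 2 = t)).card : ℤ) =
        quadraticChar (ZMod p) t + 1 := by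
      rw [← h1]
      congr 2
      ext x
      simp
    exact_mod_cast h3
  have hneg : ∀ t : ZMod p, quadraticChar (ZMod p) (-t) = - quadraticChar (ZMod p) t := by
    intro t
    rw [← neg_one_mul, map_mul, quadraticChar_neg_one hp2, ZMod.card,
      ZMod.χ₄_nat_three_mod_four h3]
    ring
  rw [eq_neg_iff_add_eq_zero, e1, e2, count F, count (fun t => F (-t)),
    ← Equiv.sum_comp (Equiv.neg (ZMod p)), ← Finset.sum_add_distrib]
  have : ∀ t ∈ (Finset.univ : Finset (ZMod p)),
      ((quadraticChar (ZMod p) (Equiv.neg (ZMod p) t) : ℤ) + 1 : ℂ) * F (-(Equiv.neg (ZMod p) t)) +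
      ((quadraticChar (ZMod p) t : ℤ) + 1 : ℂ) * F t = 2 * F t := by
    intro t _
    simp only [Equiv.neg_apply, neg_neg, hneg]
    push_cast
    ring
  rw [Finset.sum_congr rfl this, ← Finset.mul_sum, e0, mul_zero]

lemma GG_prime_one (p : ℕ) (hp : p.Prime) (h1 : p % 4 = 1) (a : ℤ) :
    GG p (-a) = GG p a := by
  have : Fact p.Prime := ⟨hp⟩
  have hp0 := hp.ne_zero
  obtain ⟨i, hi⟩ := (ZMod.exists_sq_eq_neg_one_iff (p := p)).mpr (by omega)
  have hd : (p : ℤ) ∣ (i.val : ℤ) * i.val + 1 := by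
    rw [← ZMod.intCast_zmod_eq_zero_iff_dvd]
    push_cast
    rw [ZMod.natCast_zmod_val, ← hi]
    ring
  obtain ⟨d, hd⟩ := hd
  have hc : IsCoprime (i.val : ℤ) (p : ℤ) := ⟨-i.val, d, by linarith⟩
  unfold GG
  rw [← sum_perm p hp0 (fun x => ee p (a * x ^ 2)) _ (i.val : ℤ) hc]
  · apply Finset.sum_congr rfl
    intro x _
    apply ee_congr p hp0
    refine ⟨-a * x ^ 2 * d, ?_⟩
    linear_combination (-a * x ^ 2) * hd
  · rintro x y ⟨c, hc⟩
    apply ee_congr p hp0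
    refine ⟨a * c * (x + y), ?_⟩
    linear_combination (a * (x + y)) * hc

lemma GG_neg (m : ℕ) (hm : m % 2 = 1) (a : ℤ) (ha : IsCoprime a (m : ℤ)) :
    GG m (-a) = ((ZMod.χ₄ (m : ZMod 4) : ℤ) : ℂ) * GG m a := by
  induction m using Nat.strong_induction_on generalizing a with
  | _ m ih =>
  rcases eq_or_ne m 1 with rfl | h1
  · simp [GG]
  obtain ⟨p, hp, q, rfl⟩ := Nat.exists_prime_and_dvd h1
  have hq2 : q % 2 = 1 := by
    rcases Nat.mod_two_eq_zero_or_one q with h | h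
    · simp [Nat.mul_mod, h] at hm
    · exact h
  have hpodd : p % 2 = 1 := by
    rcases Nat.mod_two_eq_zero_or_one p with h | h
    · simp [Nat.mul_mod, h] at hm
    · exact h
  have hp2 : p ≠ 2 := by rintro rfl; simp at hpodd
  have hpi := Nat.prime_iff_prime_int.mp hp
  push_cast at ha
  have hap : IsCoprime a (p : ℤ) := ha.of_mul_right_left
  have haq : IsCoprime a (q : ℤ) := ha.of_mul_right_right
  have nd : ∀ b : ℤ, IsCoprime b (p : ℤ) → ¬ (p : ℤ) ∣ b := fun b hb =>
    hpi.irreducible.coprime_iff_not_dvd.mp hb.symm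
  have hprime : ∀ b : ℤ, IsCoprime b (p : ℤ) →
      GG p (-b) = ((ZMod.χ₄ (p : ZMod 4) : ℤ) : ℂ) * GG p b := by
    intro b hb
    rcases (by omega : p % 4 = 1 ∨ p % 4 = 3) with h | h
    · rw [ZMod.χ₄_nat_one_mod_four h, GG_prime_one p hp h]; simp
    · rw [ZMod.χ₄_nat_three_mod_four h, GG_prime_three p hp h b (nd b hb)]; simp
  by_cases hpq : p ∣ q
  · obtain ⟨r, rfl⟩ := hpq
    have hr2 : r % 2 = 1 := by
      rcases Nat.mod_two_eq_zero_or_one r with h | h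
      · simp [Nat.mul_mod, h] at hq2
      · exact h
    push_cast at haq
    have har := haq.of_mul_right_right
    rw [GG_sq p r hp hp2 (by omega) a (nd a hap),
      GG_sq p r hp hp2 (by omega) (-a) (nd _ hap.neg_left),
      ih r (by
        have h5 : 0 < r := by omega
        have h6 : r < p * r := by nlinarith [hp.two_le]
        nlinarith [hp.two_le]) hr2 a har]
    have hs : ZMod.χ₄ (p : ZMod 4) * ZMod.χ₄ (p : ZMod 4) = 1 := by
      rcases (by omega : p % 4 = 1 ∨ p % 4 = 3) with h | h
      · rw [ZMod.χ₄_nat_one_mod_four h]; simp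
      · rw [ZMod.χ₄_nat_three_mod_four h]; simp
    push_cast
    rw [map_mul, map_mul, ← mul_assoc (ZMod.χ₄ (p : ZMod 4)), hs]
    push_cast
    ring
  · have hcop : p.Coprime q := (Nat.Prime.coprime_iff_not_dvd hp).mpr hpq
    have hcopi : IsCoprime (p : ℤ) (q : ℤ) := Nat.isCoprime_iff_coprime.mpr hcop
    have hq0 : q ≠ 0 := by omega
    rw [GG_coprime p q hp.ne_zero hq0 hcop, GG_coprime p q hp.ne_zero hq0 hcop,
      neg_mul, neg_mul, hprime _ (hap.mul_left hcopi.symm),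
      ih q (by nlinarith [hp.two_le, (by omega : 0 < q)]) hq2 _ (haq.mul_left hcopi)]
    push_cast
    rw [map_mul]
    push_cast
    ring

lemma ee_conj (m : ℕ) (j : ℤ) : (starRingEnd ℂ) (ee m j) = ee m (-j) := by
  unfold ee
  rw [← Complex.exp_conj]
  congr 1
  simp [Complex.conj_ofNat]
  ring

lemma ee_im (k : ℕ) (n : ℕ) : (ee (4 * k + 1) ((2 * k + 1 : ℤ) * (n : ℤ) ^ 2)).im =
    (-1 : ℝ) ^ n * Real.sin (π * (n : ℝ) ^ 2 / (4 * (k : ℝ) + 1)) := by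
  have h0 : (4 * (k : ℝ) + 1) ≠ 0 := by positivity
  have : (2 * π * Complex.I * ((((2 * k + 1 : ℤ) * (n : ℤ) ^ 2 : ℤ) : ℂ) / ((4 * k + 1 : ℕ) : ℂ)))
      = ((π * (n : ℝ) ^ 2 / (4 * (k : ℝ) + 1) + (n ^ 2 : ℕ) * π : ℝ) : ℂ) * Complex.I := by
    have h0' : (4 * (k : ℂ) + 1) ≠ 0 := by exact_mod_cast h0
    have h2 := mul_inv_cancel₀ h0'
    push_cast
    simp only [div_eq_mul_inv]
    linear_combination (π * Complex.I * (n : ℂ) ^ 2) * h2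
  unfold ee
  rw [this, Complex.exp_ofReal_mul_I_im, Real.sin_add_nat_mul_pi]
  congr 1
  rcases Nat.even_or_odd n with h | h
  · rw [h.neg_one_pow, (h.pow_of_ne_zero two_ne_zero).neg_one_pow]
  · rw [h.neg_one_pow, h.pow.neg_one_pow]

theorem alternating_sine_sum_4k_sub_three (k : ℕ) (hk : 0 < k) :
    ∑ n ∈ Finset.Icc 1 (2 * k - 2), (-1 : ℝ) ^ n *
        Real.sin (π * (n : ℝ) ^ 2 / (4 * (k : ℝ) - 3)) = 0 := by
  obtain ⟨k, rfl⟩ := Nat.exists_eq_add_of_le' hk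
  have hr : (4 * ((k + 1 : ℕ) : ℝ) - 3) = 4 * (k : ℝ) + 1 := by push_cast; ring
  have hi : 2 * (k + 1) - 2 = 2 * k := by omega
  rw [hr, hi]
  have hG := GG_neg (4 * k + 1) (by omega) (2 * k + 1) ⟨2, -1, by push_cast; ring⟩
  rw [ZMod.χ₄_nat_one_mod_four (by omega)] at hG
  have hconj : (starRingEnd ℂ) (GG (4 * k + 1) (2 * k + 1)) = GG (4 * k + 1) (-(2 * k + 1)) := by
    unfold GG
    rw [map_sum]
    apply Finset.sum_congr rfl
    intro n _
    rw [ee_conj, neg_mul]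
  rw [hG] at hconj
  have him : (GG (4 * k + 1) (2 * k + 1)).im = 0 := by
    apply Complex.conj_eq_iff_im.mp
    simpa using hconj
  set T : ℕ → ℝ := fun n => (ee (4 * k + 1) ((2 * k + 1 : ℤ) * (n : ℤ) ^ 2)).im with hT
  have hsum : ∑ n ∈ range (4 * k + 1), T n = 0 := by
    rw [← him, GG, Complex.im_sum]
  have hT0 : T 0 = 0 := by simp [hT, ee]
  have hgoal : ∑ n ∈ Finset.Icc 1 (2 * k), (-1 : ℝ) ^ n *
      Real.sin (π * (n : ℝ) ^ 2 / (4 * (k : ℝ) + 1)) = ∑ n ∈ range (2 * k), T (n + 1) := by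
    rw [Finset.sum_congr rfl (fun n _ => (ee_im k n).symm), Finset.range_eq_Ico,
      Finset.sum_Ico_add' T 0 (2 * k) 1]
    rfl
  rw [hgoal]
  rw [Finset.sum_range_succ', hT0, add_zero, show 4 * k = 2 * k + 2 * k by ring,
    Finset.sum_range_add, ← Finset.sum_range_reflect (fun x => T (2 * k + x + 1))] at hsum
  have hrefl : ∑ j ∈ range (2 * k), T (2 * k + (2 * k - 1 - j) + 1) =
      ∑ n ∈ range (2 * k), T (n + 1) := by
    apply Finset.sum_congr rfl
    intro j hj
    have hj' := Finset.mem_range.mp hj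
    have hc : ((2 * k + (2 * k - 1 - j) + 1 : ℕ) : ℤ) = (4 * k + 1) - (j + 1) := by omega
    simp only [hT]
    rw [hc]
    congr 1
    apply ee_congr _ (by omega)
    refine ⟨(2 * k + 1) * ((4 * k + 1) - 2 * (j + 1)), ?_⟩
    push_cast
    ring
  rw [hrefl] at hsum
  linarith
end

section
/- For every positive integer k, the odd-indexed quadratic Gauss cosine sum satisfies ∑_{n=1}^{2k-1} cos(π (2n-1)² / (4(2k-1))) = √(k - 1/2). -/
open Finset Real

/-- Gaussian binomial coefficients, by the q-Pascal rule. -/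
noncomputable def qBin (q : ℂ) : ℕ → ℕ → ℂ
  | _, 0 => 1
  | 0, _ + 1 => 0
  | n + 1, j + 1 => qBin q n j + q ^ (j + 1) * qBin q n (j + 1)

lemma qBin_zero (q : ℂ) (n : ℕ) : qBin q n 0 = 1 := by
  cases n <;> simp [qBin]

lemma qBin_succ (q : ℂ) (n j : ℕ) :
    qBin q (n + 1) (j + 1) = qBin q n j + q ^ (j + 1) * qBin q n (j + 1) := by
  simp [qBin]

lemma qBin_lt (q : ℂ) (n j : ℕ) (h : n < j) : qBin q n j = 0 := by
  induction n generalizing j with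
  | zero =>
    obtain ⟨j, rfl⟩ : ∃ i, j = i + 1 := ⟨j - 1, by omega⟩
    simp [qBin]
  | succ n ih =>
    obtain ⟨j, rfl⟩ : ∃ i, j = i + 1 := ⟨j - 1, by omega⟩
    rw [qBin_succ, ih _ (by omega), ih _ (by omega)]
    ring

lemma qBin_absorb (q : ℂ) (n j : ℕ) :
    (1 - q ^ (j + 1)) * qBin q (n + 1) (j + 1) = (1 - q ^ (n + 1)) * qBin q n j := by
  induction n generalizing j with
  | zero =>
    rw [qBin_succ]
    cases j with
    | zero => simp [qBin]
    | succ j => simp [qBin]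
  | succ n ih =>
    cases j with
    | zero =>
      have h := ih 0
      rw [qBin_succ, qBin_zero]
      rw [qBin_zero] at h
      linear_combination q * h
    | succ j =>
      have h1 := ih (j + 1)
      have h2 := ih j
      have h3 := qBin_succ q n j
      rw [qBin_succ q (n + 1) (j + 1)]
      linear_combination q ^ (j + 2) * h1 + q * h2 - q * (1 - q ^ (n + 1)) * h3

/-- Alternating sum. -/
noncomputable def qAlt (q : ℂ) (n : ℕ) : ℂ := ∑ j ∈ range (n + 1), (-1) ^ j * qBin q n j

lemma qAlt_step (q : ℂ) (n : ℕ) : qAlt q (n + 2) = (1 - q ^ (n + 1)) * qAlt q n := by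
  have e1 : qAlt q (n + 2) = 1 + ∑ j ∈ range (n + 2), (-1) ^ (j + 1) *
      (qBin q (n + 1) j + q ^ (j + 1) * qBin q (n + 1) (j + 1)) := by
    unfold qAlt
    rw [sum_range_succ']
    simp only [qBin_succ, qBin_zero]
    ring
  have e2 : ∑ j ∈ range (n + 2), (-1) ^ (j + 1) * (q ^ (j + 1) * qBin q (n + 1) (j + 1))
      = ∑ j ∈ range (n + 1), (-1) ^ (j + 1) * (q ^ (j + 1) * qBin q (n + 1) (j + 1)) := by
    rw [sum_range_succ, qBin_lt q (n + 1) (n + 1 + 1) (by omega)]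
    simp
  have e3 : ∑ j ∈ range (n + 2), (-1) ^ (j + 1) * qBin q (n + 1) j
      = (∑ j ∈ range (n + 1), (-1) ^ (j + 1 + 1) * qBin q (n + 1) (j + 1)) - 1 := by
    rw [sum_range_succ', qBin_zero]
    ring
  rw [e1]
  simp only [mul_add, sum_add_distrib]
  rw [e2, e3]
  unfold qAlt
  rw [mul_sum]
  have e4 : ∑ j ∈ range (n + 1), (1 - q ^ (n + 1)) * ((-1) ^ j * qBin q n j)
      = ∑ j ∈ range (n + 1), ((-1) ^ (j + 1 + 1) * qBin q (n + 1) (j + 1)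
        + (-1) ^ (j + 1) * (q ^ (j + 1) * qBin q (n + 1) (j + 1))) := by
    refine sum_congr rfl fun j _ => ?_
    linear_combination -(-1) ^ j * qBin_absorb q n j
  rw [e4, sum_add_distrib]
  ring

lemma qAlt_prod (q : ℂ) (m : ℕ) :
    qAlt q (2 * m) = ∏ i ∈ range m, (1 - q ^ (2 * i + 1)) := by
  induction m with
  | zero => simp [qAlt, qBin]
  | succ m ih =>
    rw [prod_range_succ, ← ih, show 2 * (m + 1) = 2 * m + 2 by ring, qAlt_step]
    ring

lemma qBin_root (q : ℂ) (n : ℕ) (hq : IsPrimitiveRoot q (n + 1)) (j : ℕ) (hj : j < n) :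
    qBin q n j = -(q ^ (j + 1) * qBin q n (j + 1)) := by
  have h := qBin_absorb q n j
  rw [hq.pow_eq_one, sub_self, zero_mul] at h
  have hne : (1 - q ^ (j + 1)) ≠ 0 := by
    have := hq.pow_ne_one_of_pos_of_lt (l := j + 1) (by omega) (by omega)
    exact sub_ne_zero.mpr (Ne.symm this)
  have h0 := (mul_eq_zero.mp h).resolve_left hne
  rw [qBin_succ] at h0
  linear_combination h0

lemma one_sub_root (x : ℝ) : (1 : ℂ) - Complex.exp (-(2 * x * Complex.I)) =
    ((2 * Real.sin x : ℝ) : ℂ) * Complex.exp ((π / 2 - x) * Complex.I) := by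
  have h1 : Complex.exp ((π / 2 - x) * Complex.I)
      = Complex.I * Complex.exp (-(x * Complex.I)) := by
    rw [show ((π : ℂ) / 2 - x) * Complex.I = π / 2 * Complex.I + -(x * Complex.I) by ring,
      Complex.exp_add, Complex.exp_pi_div_two_mul_I]
  have h2 : Complex.exp (-(2 * x * Complex.I)) = Complex.exp (-(x * Complex.I)) ^ 2 := by
    rw [← Complex.exp_nat_mul]; congr 1; push_cast; ring
  have h3 : Complex.exp (x * Complex.I) * Complex.exp (-(x * Complex.I)) = 1 := by
    rw [← Complex.exp_add]; simp
  rw [h1, h2]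
  push_cast
  rw [Complex.sin, neg_mul]
  linear_combination (-1 : ℂ) * h3 + (Complex.exp (-(x * Complex.I)) *
    (Complex.exp (-(x * Complex.I)) - Complex.exp (x * Complex.I))) * (-1) * Complex.I_sq

lemma prod_double (g : ℕ → ℝ) (m : ℕ) : ∏ j ∈ range (2 * m), g (j + 1) =
    (∏ i ∈ range m, g (2 * i + 1)) * ∏ i ∈ range m, g (2 * i + 2) := by
  induction m with
  | zero => simp
  | succ m ih =>
    rw [show 2 * (m + 1) = 2 * m + 1 + 1 by ring, prod_range_succ, prod_range_succ, ih,
      prod_range_succ, prod_range_succ]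
    ring

lemma main_sum (m : ℕ) :
    ∑ j ∈ range (2 * m + 1), Complex.exp (π * (2 * (j : ℂ) + 1) ^ 2 / (4 * (2 * m + 1)) * Complex.I)
      = (Real.sqrt (2 * m + 1) : ℂ) * Complex.exp (π / 4 * Complex.I) := by
  have hN : (2 * (m : ℂ) + 1) ≠ 0 := by exact_mod_cast (by omega : 2 * m + 1 ≠ 0)
  have hNR : (0 : ℝ) < 2 * (m : ℝ) + 1 := by positivity
  obtain ⟨q, hqdef⟩ : ∃ q : ℂ, q = Complex.exp (-(2 * π * Complex.I / (2 * m + 1))) := ⟨_, rfl⟩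
  have hq : IsPrimitiveRoot q (2 * m + 1) := by
    have h := (Complex.isPrimitiveRoot_exp (2 * m + 1) (by omega)).inv
    rw [← Complex.exp_neg] at h
    push_cast at h
    rwa [hqdef]
  obtain ⟨g, hg⟩ : ∃ g : ℕ → ℝ, ∀ j, g j = 2 * Real.sin (π * j / (2 * m + 1)) := ⟨_, fun _ => rfl⟩
  have hgj : ∀ j : ℕ, 1 - q ^ j =
      (g j : ℂ) * Complex.exp ((π / 2 - π * j / (2 * m + 1)) * Complex.I) := by
    intro j
    have h := one_sub_root (π * j / (2 * m + 1))
    rw [hg, hqdef, ← Complex.exp_nat_mul]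
    push_cast at h ⊢
    rw [← h]
    congr 2
    ring
  have hgpos : ∀ j : ℕ, j ≤ 2 * m + 1 → 0 ≤ g j := by
    intro j hj
    rw [hg]
    have hj' : (j : ℝ) ≤ 2 * m + 1 := by exact_mod_cast hj
    have := Real.sin_nonneg_of_nonneg_of_le_pi (x := π * j / (2 * m + 1)) (by positivity)
      (by rw [div_le_iff₀ hNR]; exact mul_le_mul_of_nonneg_left hj' Real.pi_pos.le)
    linarith
  have hnorm : ∀ j : ℕ, j ≤ 2 * m + 1 → ‖1 - q ^ j‖ = g j := by
    intro j hj
    rw [hgj, norm_mul, Complex.norm_real, Real.norm_of_nonneg (hgpos j hj)]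
    have := Complex.norm_exp_ofReal_mul_I (π / 2 - π * j / (2 * m + 1))
    push_cast at this
    rw [this, mul_one]
  have hprodN : ∏ j ∈ range (2 * m), g (j + 1) = 2 * m + 1 := by
    have h := congrArg norm hq.prod_one_sub_pow_eq_order
    rw [norm_prod] at h
    rw [prod_congr rfl fun j hj => (hnorm (j + 1) (by have := mem_range.mp hj; omega)).symm, h]
    have h2 : ((2 * m : ℕ) : ℂ) + 1 = ((2 * m + 1 : ℝ) : ℂ) := by push_cast; ring
    rw [h2, Complex.norm_real, Real.norm_of_nonneg hNR.le]
  have hrefl : ∏ i ∈ range m, g (2 * i + 2) = ∏ i ∈ range m, g (2 * i + 1) := by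
    rw [← prod_range_reflect]
    refine prod_congr rfl fun i hi => ?_
    have hi := mem_range.mp hi
    rw [hg, hg, ← Real.sin_pi_sub]
    congr 2
    have : 2 * (m - 1 - i) + 2 = 2 * m - 2 * i := by omega
    rw [this, Nat.cast_sub (by omega)]
    push_cast
    field_simp
    ring
  have hP : ∏ i ∈ range m, g (2 * i + 1) = Real.sqrt (2 * m + 1) := by
    rw [prod_double, hrefl] at hprodN
    rw [← hprodN, Real.sqrt_mul_self]
    exact prod_nonneg fun i hi => hgpos _ (by have := mem_range.mp hi; omega)
  have hprod : ∀ l : ℕ, ∏ i ∈ range l, (1 - q ^ (2 * i + 1)) =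
      ((∏ i ∈ range l, g (2 * i + 1) : ℝ) : ℂ) *
        Complex.exp ((l * π / 2 - π * l ^ 2 / (2 * m + 1)) * Complex.I) := by
    intro l
    induction l with
    | zero => simp
    | succ l ih =>
      rw [prod_range_succ, prod_range_succ, ih, hgj]
      have : Complex.exp (((l + 1 : ℕ) * π / 2 - π * (l + 1 : ℕ) ^ 2 / (2 * m + 1)) * Complex.I)
        = Complex.exp ((l * π / 2 - π * l ^ 2 / (2 * m + 1)) * Complex.I) *
          Complex.exp ((π / 2 - π * (2 * l + 1 : ℕ) / (2 * m + 1)) * Complex.I) := by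
        rw [← Complex.exp_add]
        congr 1
        push_cast
        ring
      rw [this]
      push_cast
      ring
  have hbin : ∀ j : ℕ, j ≤ 2 * m → (-1) ^ j * qBin q (2 * m) j =
      Complex.exp (π * (j * (j + 1)) / (2 * m + 1) * Complex.I) := by
    intro j
    induction j with
    | zero => intro _; simp [qBin_zero]
    | succ j ih =>
      intro hj
      have h := qBin_root q (2 * m) hq j (by omega)
      have ih := ih (by omega)
      have hqq : Complex.exp (2 * π * (j + 1) / (2 * m + 1) * Complex.I) * q ^ (j + 1) = 1 := by
        rw [hqdef, ← Complex.exp_nat_mul, ← Complex.exp_add]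
        refine (congrArg Complex.exp ?_).trans Complex.exp_zero
        push_cast
        ring
      have he : Complex.exp (π * ((j + 1 : ℕ) * ((j + 1 : ℕ) + 1)) / (2 * m + 1) * Complex.I)
        = Complex.exp (π * (j * (j + 1)) / (2 * m + 1) * Complex.I) *
          Complex.exp (2 * π * (j + 1) / (2 * m + 1) * Complex.I) := by
        rw [← Complex.exp_add]
        congr 1
        push_cast
        ring
      rw [he, ← ih, h]
      linear_combination ((-1) ^ j * qBin q (2 * m) (j + 1)) * hqq
  have hfin := qAlt_prod q m
  rw [hprod, hP] at hfin
  unfold qAlt at hfin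
  rw [sum_congr rfl fun j hj => hbin j (by have := mem_range.mp hj; omega)] at hfin
  have hterm : ∀ j : ℕ, Complex.exp (π * (2 * (j : ℂ) + 1) ^ 2 / (4 * (2 * m + 1)) * Complex.I) =
      Complex.exp (π / (4 * (2 * m + 1)) * Complex.I) *
        Complex.exp (π * (j * (j + 1)) / (2 * m + 1) * Complex.I) := by
    intro j
    rw [← Complex.exp_add]
    congr 1
    field_simp
    ring
  simp only [hterm]
  rw [← mul_sum, hfin, mul_left_comm, ← Complex.exp_add]
  congr 2
  field_simp
  ring

theorem odd_indexed_quadratic_gauss_cosine_sum (k : ℕ) (hk : 0 < k) :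
    ∑ n ∈ Finset.Icc 1 (2 * k - 1),
        Real.cos (π * (2 * (n : ℝ) - 1) ^ 2 / (4 * (2 * (k : ℝ) - 1))) =
      Real.sqrt ((k : ℝ) - 1 / 2) := by
  obtain ⟨m, rfl⟩ : ∃ m, k = m + 1 := ⟨k - 1, by omega⟩
  have h := congrArg Complex.re (main_sum m)
  rw [Complex.re_sum] at h
  have hR : ((Real.sqrt (2 * m + 1) : ℂ) * Complex.exp (π / 4 * Complex.I)).re
      = Real.sqrt (2 * m + 1) * Real.cos (π / 4) := by
    rw [Complex.re_ofReal_mul]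
    have := Complex.exp_ofReal_mul_I_re (π / 4)
    push_cast at this
    rw [this]
  rw [hR] at h
  have hs : Real.sqrt (((m + 1 : ℕ) : ℝ) - 1 / 2) = Real.sqrt (2 * m + 1) * Real.cos (π / 4) := by
    rw [Real.cos_pi_div_four, Real.sqrt_eq_iff_mul_self_eq_of_pos]
    · have h1 := Real.mul_self_sqrt (show (0 : ℝ) ≤ 2 * m + 1 by positivity)
      have h2 := Real.mul_self_sqrt (show (0 : ℝ) ≤ 2 by norm_num)
      push_cast
      linear_combination (Real.sqrt 2 * Real.sqrt 2 / 4) * h1 + ((2 * m + 1) / 4) * h2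
    · positivity
  rw [hs, ← h, show 2 * (m + 1) - 1 = 2 * m + 1 by omega, ← Finset.Ico_add_one_right_eq_Icc,
    Finset.sum_Ico_eq_sum_range]
  refine sum_congr (by simp) fun j _ => ?_
  rw [← Complex.exp_ofReal_mul_I_re]
  congr 2
  push_cast
  ring_nf
end

section
/- For every positive integer k, the symmetric alternating cosine sum satisfies ∑_{n=-2k}^{2k} (-1)^n * cos(π n² / (4k+1)) = (-1)^k * √(4k+1). -/
open Finset Real

noncomputable def uu (q : ℂ) (i : ℕ) : ℂ := (∏ l ∈ Finset.range i, (1 - q ^ (l + 1)))⁻¹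

noncomputable def ss (q : ℂ) (m : ℕ) : ℂ :=
  ∑ j ∈ Finset.range (m + 1), (-1 : ℂ) ^ j * uu q j * uu q (m - j)

lemma uu_succ (q : ℂ) (i : ℕ) (h : q ^ (i + 1) ≠ 1) :
    (1 - q ^ (i + 1)) * uu q (i + 1) = uu q i := by
  have h1 : (1 - q ^ (i + 1)) ≠ 0 := fun h' => h (sub_eq_zero.mp h').symm
  unfold uu
  rw [Finset.prod_range_succ, mul_inv]
  field_simp

lemma ss_rec (q : ℂ) (m : ℕ) (h : ∀ i, i < m + 2 → q ^ (i + 1) ≠ 1) :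
    (1 - q ^ (m + 2)) * ss q (m + 2) = ss q m := by
  -- first sum
  have e1 : ∑ j ∈ Finset.range (m + 3), (-1 : ℂ) ^ j * ((1 - q ^ j) * uu q j) * uu q (m + 2 - j)
      = - ss q (m + 1) := by
    rw [Finset.sum_range_succ']
    simp only [Nat.sub_self, pow_zero, sub_self, zero_mul, mul_zero, add_zero, ss]
    rw [← Finset.sum_neg_distrib]
    refine Finset.sum_congr rfl fun j hj => ?_
    have hj := Finset.mem_range.mp hj
    rw [uu_succ q j (h j (by omega)), show m + 2 - (j + 1) = m + 1 - j by omega]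
    ring
  have e2 : ∑ j ∈ Finset.range (m + 3), (-1 : ℂ) ^ j * uu q j *
      ((1 - q ^ (m + 2 - j)) * uu q (m + 2 - j)) = ss q (m + 1) := by
    rw [Finset.sum_range_succ]
    simp only [Nat.sub_self, pow_zero, sub_self, zero_mul, mul_zero, add_zero, ss]
    refine Finset.sum_congr rfl fun j hj => ?_
    have hj := Finset.mem_range.mp hj
    rw [show m + 2 - j = (m + 1 - j) + 1 by omega, uu_succ q _ (h _ (by omega))]
  have e3 : ∑ j ∈ Finset.range (m + 3), (-1 : ℂ) ^ j * ((1 - q ^ j) * uu q j) *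
      ((1 - q ^ (m + 2 - j)) * uu q (m + 2 - j)) = - ss q m := by
    rw [Finset.sum_range_succ, Finset.sum_range_succ']
    simp only [Nat.sub_self, pow_zero, sub_self, zero_mul, mul_zero, add_zero, ss]
    rw [← Finset.sum_neg_distrib]
    refine Finset.sum_congr rfl fun j hj => ?_
    have hj := Finset.mem_range.mp hj
    rw [uu_succ q j (h j (by omega)), show m + 2 - (j + 1) = (m - j) + 1 by omega,
      uu_succ q _ (h _ (by omega))]
    ring
  have e : (1 - q ^ (m + 2)) * ss q (m + 2) =
      - ss q (m + 1) + ss q (m + 1) - (- ss q m) := by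
    rw [← e3]; nth_rewrite 1 [← e1]; rw [← e2, ← Finset.sum_add_distrib,
      ← Finset.sum_sub_distrib, ss, Finset.mul_sum]
    refine Finset.sum_congr rfl fun j hj => ?_
    have hj := Finset.mem_range.mp hj
    have : q ^ (m + 2) = q ^ j * q ^ (m + 2 - j) := by rw [← pow_add]; congr 1; omega
    rw [this]; ring
  rw [e]; ring

lemma ss_even (q : ℂ) (r : ℕ) (h : ∀ i, i < 2 * r → q ^ (i + 1) ≠ 1) :
    (∏ i ∈ Finset.range r, (1 - q ^ (2 * (i + 1)))) * ss q (2 * r) = 1 := by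
  induction r with
  | zero => simp [ss, uu]
  | succ r ih =>
    rw [Finset.prod_range_succ, mul_assoc, show 2 * (r + 1) = 2 * r + 2 by ring,
      ss_rec q _ (fun i hi => h i (by omega))]
    exact ih fun i hi => h i (by omega)

lemma term_eq (g q : ℂ) (M : ℕ) (hg : g ^ 2 * q = 1) (hq : IsPrimitiveRoot q (M + 1))
    (j : ℕ) (hj : j ≤ M) :
    ((M + 1 : ℕ) : ℂ) * ((-1 : ℂ) ^ j * uu q j * uu q (M - j)) = g ^ (j * (j + 1)) := by
  have hne : ∀ i, i < M → q ^ (i + 1) ≠ 1 := fun i hi =>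
    hq.pow_ne_one_of_pos_of_lt (by omega) (by omega)
  induction j with
  | zero =>
    have := hq.prod_one_sub_pow_eq_order
    have h0 : ((M + 1 : ℕ) : ℂ) ≠ 0 := by exact_mod_cast Nat.succ_ne_zero M
    simp only [uu, Nat.sub_zero, Finset.range_zero, Finset.prod_empty]
    rw [this]
    push_cast at h0 ⊢
    simp [h0]
  | succ j ih =>
    have ih := ih (by omega)
    have a1 := uu_succ q j (hne j (by omega))
    have a2 := uu_succ q (M - (j + 1)) (hne _ (by omega))
    rw [show M - (j + 1) + 1 = M - j by omega] at a2
    have h1 : (1 - q ^ (j + 1)) ≠ 0 := fun h' => hne j (by omega) (sub_eq_zero.mp h').symm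
    have hG : g ^ (2 * (j + 1)) * q ^ (j + 1) = 1 := by
      rw [pow_mul, ← mul_pow, hg, one_pow]
    have hQ : q ^ (M - j) * q ^ (j + 1) = 1 := by
      rw [← pow_add, show M - j + (j + 1) = M + 1 by omega, hq.pow_eq_one]
    have hQ' : q ^ (M - j) = g ^ (2 * (j + 1)) := by
      have : q ^ (j + 1) ≠ 0 := right_ne_zero_of_mul_eq_one hG
      exact mul_right_cancel₀ this (hQ.trans hG.symm)
    rw [show (j + 1) * (j + 1 + 1) = j * (j + 1) + 2 * (j + 1) by ring, pow_add g, ← ih, ← a1, ← a2,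
      hQ', pow_succ (-1 : ℂ) j]
    linear_combination ((M + 1 : ℕ) : ℂ) * (-1) ^ j * uu q (j + 1) * uu q (M - j) * hG

lemma gauss_sum_aux (g q : ℂ) (k : ℕ) (hg : g ^ 2 * q = 1) (hq : IsPrimitiveRoot q (4 * k + 1)) :
    (∏ i ∈ Finset.range (2 * k), (1 - q ^ (2 * (i + 1)))) *
      ∑ j ∈ Finset.range (4 * k + 1), g ^ (j * (j + 1)) = (4 * k + 1 : ℕ) := by
  have h := ss_even q (2 * k) (fun i hi => hq.pow_ne_one_of_pos_of_lt (by omega) (by omega))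
  rw [← Finset.sum_congr rfl (fun j hj => term_eq g q (4 * k) hg hq j
    (by have := Finset.mem_range.mp hj; omega)), ← Finset.mul_sum]
  rw [show 2 * (2 * k) = 4 * k by ring, ss] at h
  linear_combination ((4 * k + 1 : ℕ) : ℂ) * h

lemma prod_sq_aux (q p : ℂ) (k : ℕ) (hpq : p * q = 1) (hq : IsPrimitiveRoot q (4 * k + 1)) :
    (∏ i ∈ Finset.range (2 * k), (1 - q ^ (2 * (i + 1)))) *
      (∏ i ∈ Finset.range (2 * k), (1 - p ^ (2 * (i + 1)))) = (4 * k + 1 : ℕ) := by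
  have hr : IsPrimitiveRoot (q ^ 2) (4 * k + 1) :=
    hq.pow_of_coprime 2 (by
      rw [Nat.coprime_two_left]; exact ⟨2 * k, by ring⟩)
  have h := hr.prod_one_sub_pow_eq_order
  rw [show Finset.range (4 * k) = Finset.range (2 * k + 2 * k) by congr 1; ring,
    Finset.prod_range_add,
    ← Finset.prod_range_reflect (fun x => 1 - (q ^ 2) ^ (2 * k + x + 1)) (2 * k)] at h
  push_cast at h ⊢
  rw [← h]
  congr 1
  · exact Finset.prod_congr rfl fun i _ => by rw [pow_mul]
  · refine Finset.prod_congr rfl fun i hi => ?_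
    have hi := Finset.mem_range.mp hi
    congr 1
    have hz : (q ^ 2) ^ (i + 1) ≠ 0 := pow_ne_zero _ (hr.ne_zero (by omega))
    apply mul_right_cancel₀ hz
    rw [← pow_add, show 2 * k + (2 * k - 1 - i) + 1 + (i + 1) = 4 * k + 1 by omega,
      hr.pow_eq_one, ← pow_mul, ← mul_pow, hpq, one_pow]

lemma main_aux (k : ℕ) (g : ℂ) (hgdef : g = -Complex.exp (π * Complex.I / (4 * k + 1))) :
    ∑ j ∈ Finset.range (4 * k + 1), g ^ (4 * k ^ 2) * g ^ (j * (j + 1)) =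
      (-1 : ℂ) ^ k * (Real.sqrt (4 * (k : ℝ) + 1) : ℝ) := by
  have hN : (4 * (k : ℂ) + 1) ≠ 0 := by exact_mod_cast Nat.succ_ne_zero (4 * k)
  have hgp : IsPrimitiveRoot g (4 * k + 1) := by
    have := Complex.isPrimitiveRoot_exp_of_coprime (2 * k + 1) (4 * k + 1) (by omega) (by
      have : Nat.Coprime (4 * k + 1) (2 * k + 1) := by
        apply Nat.isCoprime_iff_coprime.mp
        exact ⟨-1, 2, by push_cast; ring⟩
      exact this.symm)
    convert this using 1
    rw [hgdef, ← neg_one_mul, ← Complex.exp_pi_mul_I, ← Complex.exp_add]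
    congr 1
    push_cast
    field_simp
    ring
  have hg0 : g ≠ 0 := hgp.ne_zero (by omega)
  have hg1 := hgp.pow_eq_one
  set q : ℂ := (g ^ 2)⁻¹ with hqdef
  have hgq : g ^ 2 * q = 1 := mul_inv_cancel₀ (pow_ne_zero _ hg0)
  have hq : IsPrimitiveRoot q (4 * k + 1) := by
    refine (hgp.pow_of_coprime 2 ?_).inv
    rw [Nat.coprime_two_left]; exact ⟨2 * k, by ring⟩
  have hA := gauss_sum_aux g q k hgq hq
  have hB := prod_sq_aux q (g ^ 2) k hgq hq
  let s : ℕ → ℝ := fun i => 2 * Real.sin (2 * π * (i + 1) / (4 * k + 1))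
  have hge : ∀ i : ℕ, g ^ (2 * (i + 1)) =
      Complex.exp (((2 * π * (i + 1) / (4 * k + 1) : ℝ) : ℂ) * Complex.I) := by
    intro i
    rw [hgdef, pow_mul, neg_sq, ← pow_mul, ← Complex.exp_nat_mul]
    congr 1
    push_cast
    field_simp
  have hs1 : ∀ i : ℕ, g ^ (2 * (i + 1)) - (g ^ (2 * (i + 1)))⁻¹ = Complex.I * (s i : ℂ) := by
    intro i
    rw [hge, ← Complex.exp_neg]
    simp only [s]
    rw [Complex.ofReal_mul, Complex.ofReal_sin, Complex.sin]
    rw [neg_mul]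
    push_cast
    linear_combination ((Complex.exp (2 * π * (i + 1) / (4 * k + 1) * Complex.I)
      - Complex.exp (-(2 * π * (i + 1) / (4 * k + 1) * Complex.I)))) * Complex.I_sq
  have hqg : ∀ i : ℕ, q ^ (2 * (i + 1)) = (g ^ (2 * (i + 1)))⁻¹ * (g ^ (2 * (i + 1)))⁻¹ := by
    intro i
    rw [hqdef, inv_pow, ← mul_inv, ← pow_add, ← pow_mul]; congr 2; ring
  have hs2 : ∀ i : ℕ, (1 - q ^ (2 * (i + 1))) * g ^ (2 * (i + 1)) = Complex.I * (s i : ℂ) := by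
    intro i
    have h0 : g ^ (2 * (i + 1)) ≠ 0 := pow_ne_zero _ hg0
    rw [← hs1, hqg]
    field_simp
  have hs3 : ∀ i : ℕ, (1 - q ^ (2 * (i + 1))) * (1 - (g ^ 2) ^ (2 * (i + 1))) = (s i : ℂ) ^ 2 := by
    intro i
    have h0 : g ^ (2 * (i + 1)) ≠ 0 := pow_ne_zero _ hg0
    have : (s i : ℂ) ^ 2 = - (Complex.I * (s i : ℂ)) ^ 2 := by
      rw [mul_pow, Complex.I_sq]; ring
    rw [this, ← hs1, hqg, ← pow_mul, mul_comm 2 (2 * (i + 1)), pow_mul]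
    field_simp
    ring
  set D : ℝ := ∏ i ∈ Finset.range (2 * k), s i with hD
  have hDpos : 0 < D := by
    refine Finset.prod_pos fun i hi => ?_
    have hi : i + 1 ≤ 2 * k := Finset.mem_range.mp hi
    have hi' : (i : ℝ) + 1 ≤ 2 * k := by exact_mod_cast hi
    have : (0 : ℝ) < 4 * k + 1 := by positivity
    refine mul_pos two_pos (Real.sin_pos_of_pos_of_lt_pi (by positivity) ?_)
    rw [div_lt_iff₀ this]
    nlinarith [Real.pi_pos]
  have hD2 : D ^ 2 = 4 * k + 1 := by
    rw [← Finset.prod_mul_distrib, Finset.prod_congr rfl (fun i _ => hs3 i),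
      Finset.prod_pow] at hB
    rw [hD]
    exact_mod_cast hB
  have hDs : Real.sqrt (4 * (k : ℝ) + 1) = D := by
    rw [← hD2, Real.sqrt_sq hDpos.le]
  have hprod : (∏ i ∈ Finset.range (2 * k), (1 - q ^ (2 * (i + 1)))) * g ^ (2 * k * (2 * k + 1))
      = (-1) ^ k * (D : ℂ) := by
    have e : g ^ (2 * k * (2 * k + 1)) = ∏ i ∈ Finset.range (2 * k), g ^ (2 * (i + 1)) := by
      rw [Finset.prod_pow_eq_pow_sum]
      congr 1
      generalize 2 * k = n
      induction n with
      | zero => simp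
      | succ n ih => rw [Finset.sum_range_succ, ← ih]; ring
    rw [e, ← Finset.prod_mul_distrib, Finset.prod_congr rfl (fun i _ => hs2 i),
      Finset.prod_mul_distrib, Finset.prod_const, Finset.card_range, pow_mul, Complex.I_sq, hD]
    push_cast
    rfl
  have hph : g ^ (2 * k * (2 * k + 1)) * g ^ (4 * k ^ 2) = 1 := by
    rw [← pow_add, show 2 * k * (2 * k + 1) + 4 * k ^ 2 = (4 * k + 1) * (2 * k) by ring, pow_mul,
      hg1, one_pow]
  rw [hDs, ← Finset.mul_sum]
  have hDc : (D : ℂ) ≠ 0 := by exact_mod_cast hDpos.ne'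
  have hD2c : (D : ℂ) ^ 2 = 4 * k + 1 := by exact_mod_cast hD2
  have hkk : ((-1 : ℂ) ^ k) * (-1) ^ k = 1 := by rw [← mul_pow]; simp
  have hcan : (-1 : ℂ) ^ k * (D : ℂ) ≠ 0 := mul_ne_zero (pow_ne_zero _ (by norm_num)) hDc
  apply mul_left_cancel₀ hcan
  push_cast at hA
  generalize ∑ j ∈ Finset.range (4 * k + 1), g ^ (j * (j + 1)) = S at *
  generalize ∏ i ∈ Finset.range (2 * k), (1 - q ^ (2 * (i + 1))) = P at *
  rw [← hprod]
  calc _ = (P * S) * (g ^ (2 * k * (2 * k + 1)) * g ^ (4 * k ^ 2)) := by ring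
    _ = (D : ℂ) ^ 2 := by rw [hA, hph, hD2c]; ring
    _ = _ := by rw [hprod]; linear_combination (-(D : ℂ) ^ 2) * hkk

theorem symmetric_alternating_cosine_sum (k : ℕ) (hk : 0 < k) :
    ∑ n ∈ Finset.Icc (-(2 * (k : ℤ))) (2 * (k : ℤ)), (-1 : ℝ) ^ n *
        Real.cos (π * (n : ℝ) ^ 2 / (4 * (k : ℝ) + 1)) =
      (-1 : ℝ) ^ k * Real.sqrt (4 * (k : ℝ) + 1) := by
  have h := main_aux k _ rfl
  set g : ℂ := -Complex.exp (π * Complex.I / (4 * k + 1)) with hg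
  have hN : (4 * (k : ℂ) + 1) ≠ 0 := by exact_mod_cast Nat.succ_ne_zero (4 * k)
  have hg0 : g ≠ 0 := neg_ne_zero.mpr (Complex.exp_ne_zero _)
  have hgN : g ^ (4 * (k : ℤ) + 1) = 1 := by
    have : g ^ (4 * k + 1) = 1 := by
      rw [hg, Odd.neg_pow ⟨2 * k, by ring⟩, ← Complex.exp_nat_mul]
      push_cast
      rw [mul_div_cancel₀ _ hN, Complex.exp_pi_mul_I]; norm_num
    exact_mod_cast this
  have h1 : ∀ n : ℤ, (-1 : ℝ) ^ n * Real.cos (π * (n : ℝ) ^ 2 / (4 * (k : ℝ) + 1)) =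
      (g ^ (n ^ 2)).re := by
    intro n
    have : g ^ (n ^ 2) = (((-1 : ℝ) ^ n : ℝ) : ℂ) *
        Complex.exp (((π * (n : ℝ) ^ 2 / (4 * (k : ℝ) + 1) : ℝ) : ℂ) * Complex.I) := by
      rw [hg, ← neg_one_mul, mul_zpow, ← Complex.exp_int_mul]
      congr 1
      · rcases Int.even_or_odd n with hn | hn
        · rw [Even.neg_one_zpow hn, Even.neg_one_zpow (hn.pow_of_ne_zero two_ne_zero)]; simp
        · rw [Odd.neg_one_zpow hn, Odd.neg_one_zpow hn.pow]; simp
      · congr 1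
        push_cast
        field_simp
    rw [this, Complex.re_ofReal_mul, Complex.exp_ofReal_mul_I_re]
  rw [Finset.sum_congr rfl fun n _ => h1 n, ← Complex.re_sum]
  have h2 : ∑ n ∈ Finset.Icc (-(2 * (k : ℤ))) (2 * (k : ℤ)), g ^ (n ^ 2) =
      ∑ j ∈ Finset.range (4 * k + 1), g ^ (4 * k ^ 2) * g ^ (j * (j + 1)) := by
    symm
    refine Finset.sum_bij (fun j _ => (j : ℤ) - 2 * k) ?_ ?_ ?_ ?_
    · intro j hj
      have := Finset.mem_range.mp hj
      rw [Finset.mem_Icc]; omega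
    · intro a _ b _ hab
      simpa using hab
    · intro n hn
      rw [Finset.mem_Icc] at hn
      exact ⟨(n + 2 * k).toNat, by rw [Finset.mem_range]; omega, by omega⟩
    · intro j _
      rw [show ((j : ℤ) - 2 * k) ^ 2 = ((4 * k ^ 2 + j * (j + 1) : ℕ) : ℤ)
        + (4 * (k : ℤ) + 1) * (-j) by push_cast; ring, zpow_add₀ hg0, zpow_mul, hgN, one_zpow,
        mul_one, zpow_natCast, pow_add]
  rw [h2, h]
  have : (-1 : ℂ) ^ k * (Real.sqrt (4 * (k : ℝ) + 1) : ℝ) =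
    (((-1 : ℝ) ^ k * Real.sqrt (4 * (k : ℝ) + 1) : ℝ) : ℂ) := by push_cast; rfl
  rw [this, Complex.ofReal_re]
end

section
/- For every positive integer k, ∑_{n=1}^{k} cos(π n² / k) equals √(2k)/2 if k is even, and equals -1 if k is odd. -/
open Finset Real

open Filter Topology in
lemma qcs_cosKernel_tendsto (a : UnitAddCircle) :
    Tendsto (HurwitzZeta.cosKernel a) atTop (𝓝 1) := by
  obtain ⟨p, hp, h⟩ := HurwitzZeta.isBigO_atTop_cosKernel_sub a
  have h2 : Tendsto (fun x : ℝ => Real.exp (-p * x)) atTop (𝓝 0) := by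
    apply Real.tendsto_exp_atBot.comp
    exact tendsto_id.const_mul_atTop_of_neg (by linarith)
  have h3 := (h.trans_tendsto h2).add_const 1
  simpa using h3

open Filter Topology in
lemma qcs_theta_tendsto (c : ℝ) :
    Tendsto (fun t : ℝ => jacobiTheta ((c : ℂ) + t * Complex.I)) atTop (𝓝 1) := by
  have h2 : Tendsto (fun x : ℂ => Real.exp (-π * x.im)) (comap Complex.im atTop) (𝓝 0) := by
    apply Real.tendsto_exp_atBot.comp
    exact tendsto_comap.const_mul_atTop_of_neg (by linarith [Real.pi_pos])
  have h3 := (isBigO_at_im_infty_jacobiTheta_sub_one.trans_tendsto h2).add_const 1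
  simp only [sub_add_cancel, zero_add] at h3
  apply h3.comp
  rw [tendsto_comap_iff]
  refine tendsto_id.congr fun t => ?_
  simp

lemma qcs_theta_expand (k : ℕ) [NeZero k] (hk : Even k) (t : ℝ) (ht : 0 < t) :
    jacobiTheta (1 / k + Complex.I / (k ^ 2 * t)) =
      ∑ r : Fin k, Complex.exp (π * Complex.I * (r : ℕ) ^ 2 / k) *
        (HurwitzZeta.evenKernel (((r : ℕ) / k : ℝ) : UnitAddCircle) (1 / t) : ℂ) := by
  have hk0 : (k : ℂ) ≠ 0 := by exact_mod_cast NeZero.ne k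
  have hkR : (0 : ℝ) < k := by exact_mod_cast Nat.pos_of_ne_zero (NeZero.ne k)
  have ht0 : (t : ℂ) ≠ 0 := by exact_mod_cast ht.ne'
  set τ : ℂ := 1 / k + Complex.I / (k ^ 2 * t) with hτ
  have him : 0 < τ.im := by
    have : τ = ((1 / k : ℝ) : ℂ) + ((1 / (k ^ 2 * t) : ℝ) : ℂ) * Complex.I := by
      rw [hτ]; push_cast; ring
    rw [this]
    simp only [Complex.add_im, Complex.ofReal_im, Complex.mul_I_im, Complex.ofReal_re, zero_add]
    positivity
  have h1 := hasSum_jacobiTheta₂_term 0 him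
  rw [← jacobiTheta_eq_jacobiTheta₂] at h1
  rw [← (Int.divModEquiv k).symm.hasSum_iff, ← (Equiv.prodComm (Fin k) ℤ).hasSum_iff] at h1
  have h2 := h1.prod_fiberwise (g := fun r : Fin k =>
    Complex.exp (π * Complex.I * (r : ℕ) ^ 2 / k) *
        (HurwitzZeta.evenKernel (((r : ℕ) / k : ℝ) : UnitAddCircle) (1 / t) : ℂ)) ?_
  · exact h2.unique (hasSum_fintype _)
  intro r
  have h3 := (Complex.hasSum_ofReal.mpr (HurwitzZeta.hasSum_int_evenKernel ((r : ℕ) / k : ℝ)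
    (t := 1 / t) (by positivity))).mul_left (Complex.exp (π * Complex.I * (r : ℕ) ^ 2 / k))
  refine h3.congr_fun ?_
  intro m
  obtain ⟨j, hj⟩ := hk
  have hj' : (k : ℂ) = j + j := by exact_mod_cast hj
  simp only [Function.comp, jacobiTheta₂_term, Equiv.prodComm_apply, Prod.swap,
    Int.divModEquiv_symm_apply]
  push_cast
  rw [← Complex.exp_add, Complex.exp_eq_exp_iff_exists_int]
  refine ⟨m * (r : ℕ) + m ^ 2 * j, ?_⟩
  have hq : ∀ x : ℂ, (m * k + x) ^ 2 / k = x ^ 2 / k + 2 * m * x + m ^ 2 * (j + j) := by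
    intro x
    rw [← hj']
    field_simp
    ring
  have hs : ∀ x : ℂ, (m * k + x) ^ 2 / (k ^ 2 * t) = (m + x / k) ^ 2 * (1 / t) := by
    intro x
    field_simp
  have hsplit : ∀ x : ℂ, π * Complex.I * x ^ 2 * τ =
      π * Complex.I * (x ^ 2 / k) + π * (Complex.I * Complex.I) * (x ^ 2 / (k ^ 2 * t)) := by
    intro x
    rw [hτ]
    ring
  rw [hsplit, hq, hs, Complex.I_mul_I]
  push_cast
  ring

lemma qcs_theta_fe (k : ℕ) [NeZero k] (hk : Even k) (t : ℝ) (ht : 0 < t) :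
    jacobiTheta (1 / k + Complex.I / (k ^ 2 * t)) =
      1 / (-Complex.I * (1 / k + Complex.I / (k ^ 2 * t))) ^ (1 / 2 : ℂ) *
      ((t : ℂ) ^ (1 / 2 : ℂ) * (1 + Complex.I / (k * t)) ^ (1 / 2 : ℂ) *
        jacobiTheta (((-1 / k : ℝ) : ℂ) + t * Complex.I)) := by
  have hk0 : (k : ℂ) ≠ 0 := by exact_mod_cast NeZero.ne k
  have hkR : (0 : ℝ) < k := by exact_mod_cast Nat.pos_of_ne_zero (NeZero.ne k)
  have ht0 : (t : ℂ) ≠ 0 := by exact_mod_cast ht.ne'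
  have hadd : ∀ (j : ℕ) (τ : ℂ), jacobiTheta (τ + (j + j : ℕ)) = jacobiTheta τ := by
    intro j τ
    induction j with
    | zero => simp
    | succ j ih =>
      rw [← ih, ← jacobiTheta_two_add (τ + (j + j : ℕ))]
      congr 1
      push_cast; ring
  have hne : (k * t + Complex.I : ℂ) ≠ 0 := by
    intro h
    have := congrArg Complex.im h
    simp at this
  have hne1 : (1 + Complex.I / (k * t) : ℂ) ≠ 0 := by
    intro h
    apply hne
    have h' : (k * t + Complex.I : ℂ) = k * t * (1 + Complex.I / (k * t)) := by field_simp
    rw [h', h, mul_zero]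
  have key : ∀ τ : ℂ, jacobiTheta τ = 1 / (-Complex.I * τ) ^ (1 / 2 : ℂ) * jacobiTheta (-1 / τ) := by
    intro τ
    have := jacobiTheta₂_functional_equation 0 τ
    simpa [jacobiTheta_eq_jacobiTheta₂] using this
  rw [key]
  congr 1
  have h2 := key (((-1 / k : ℝ) : ℂ) + t * Complex.I)
  have h3 : (-Complex.I * (((-1 / k : ℝ) : ℂ) + t * Complex.I)) = t * (1 + Complex.I / (k * t)) := by
    push_cast
    field_simp
    ring_nf
    simp
    try ring
  have h4 : (t * (1 + Complex.I / (k * t)) : ℂ) ^ (1 / 2 : ℂ) =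
      (t : ℂ) ^ (1 / 2 : ℂ) * (1 + Complex.I / (k * t)) ^ (1 / 2 : ℂ) := by
    rw [Complex.cpow_def_of_ne_zero (mul_ne_zero ht0 hne1), Complex.cpow_def_of_ne_zero ht0,
      Complex.cpow_def_of_ne_zero hne1, Complex.log_ofReal_mul ht hne1, ← Complex.exp_add,
      Complex.ofReal_log ht.le]
    congr 1; ring
  have h5 : -1 / (((-1 / k : ℝ) : ℂ) + t * Complex.I) =
      -1 / (1 / k + Complex.I / (k ^ 2 * t)) + k := by
    have e1 : (((-1 / k : ℝ) : ℂ) + t * Complex.I) = Complex.I * (k * t + Complex.I) / k := by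
      push_cast
      field_simp
      ring_nf
      simp
      try ring
    have e2 : (1 / k + Complex.I / (k ^ 2 * t) : ℂ) = (k * t + Complex.I) / (k ^ 2 * t) := by
      field_simp
    rw [e1, e2]
    have := Complex.I_ne_zero
    field_simp
    ring_nf
    simp
    try ring
  obtain ⟨j, rfl⟩ := hk
  rw [h2, h3, h4, h5, hadd]
  have z1 : (t : ℂ) ^ (1 / 2 : ℂ) ≠ 0 := by simp [Complex.cpow_eq_zero_iff, ht0]
  have z2 : (1 + Complex.I / ((j + j : ℕ) * t) : ℂ) ^ (1 / 2 : ℂ) ≠ 0 := by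
    rw [Ne, Complex.cpow_eq_zero_iff]; tauto
  rw [← mul_assoc, mul_one_div, div_self (mul_ne_zero z1 z2), one_mul]

open Filter Topology in
lemma qcs_gauss (k : ℕ) [NeZero k] (hk : Even k) :
    ∑ r : Fin k, Complex.exp (π * Complex.I * (r : ℕ) ^ 2 / k) =
      1 / (-Complex.I / k : ℂ) ^ (1 / 2 : ℂ) := by
  have hk0 : (k : ℂ) ≠ 0 := by exact_mod_cast NeZero.ne k
  have hkR : (0 : ℝ) < k := by exact_mod_cast Nat.pos_of_ne_zero (NeZero.ne k)
  have hinv : Tendsto (fun t : ℝ => ((t⁻¹ : ℝ) : ℂ)) atTop (𝓝 0) := by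
    have := (Complex.continuous_ofReal.tendsto 0).comp tendsto_inv_atTop_zero
    rw [Complex.ofReal_zero] at this
    exact this
  have hL : Tendsto (fun t : ℝ => ∑ r : Fin k, Complex.exp (π * Complex.I * (r : ℕ) ^ 2 / k) *
      (HurwitzZeta.cosKernel (((r : ℕ) / k : ℝ) : UnitAddCircle) t : ℂ)) atTop
      (𝓝 (∑ r : Fin k, Complex.exp (π * Complex.I * (r : ℕ) ^ 2 / k))) := by
    apply tendsto_finsetSum
    intro r _
    have := (Complex.continuous_ofReal.tendsto 1).comp
      (qcs_cosKernel_tendsto (((r : ℕ) / k : ℝ) : UnitAddCircle))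
    have := this.const_mul (Complex.exp (π * Complex.I * (r : ℕ) ^ 2 / k))
    simpa using this
  have hsl : (-Complex.I / k : ℂ) ∈ Complex.slitPlane := by
    right
    have : (-Complex.I / k : ℂ) = ((-1 / k : ℝ) : ℂ) * Complex.I := by push_cast; ring
    rw [this, Complex.mul_I_im, Complex.ofReal_re]
    exact (div_neg_of_neg_of_pos (by norm_num) hkR).ne
  have hA : Tendsto (fun t : ℝ => 1 / (-Complex.I * (1 / k + Complex.I / (k ^ 2 * t))) ^ (1 / 2 : ℂ))
      atTop (𝓝 (1 / (-Complex.I / k : ℂ) ^ (1 / 2 : ℂ))) := by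
    apply Tendsto.div tendsto_const_nhds
    · apply ((continuousAt_cpow_const hsl).tendsto).comp
      have := (hinv.const_mul (1 / (k : ℂ) ^ 2)).const_add (-Complex.I / k)
      simp only [mul_zero, add_zero] at this
      refine this.congr fun t => ?_
      push_cast
      field_simp
      ring_nf
      simp
      try ring
    · rw [Ne, Complex.cpow_eq_zero_iff]
      simp [hk0]
  have hB : Tendsto (fun t : ℝ => (1 + Complex.I / (k * t)) ^ (1 / 2 : ℂ)) atTop (𝓝 1) := by
    have h1 : (1 : ℂ) ∈ Complex.slitPlane := by simp
    have h2 := (continuousAt_cpow_const (b := (1 / 2 : ℂ)) h1).tendsto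
    simp only [id, Complex.one_cpow] at h2
    apply h2.comp
    have := (hinv.const_mul (Complex.I / (k : ℂ))).const_add 1
    simp only [mul_zero, add_zero] at this
    refine this.congr fun t => ?_
    push_cast
    field_simp
  have hR := hA.mul (hB.mul (qcs_theta_tendsto (-1 / k)))
  simp only [mul_one] at hR
  refine tendsto_nhds_unique hL (hR.congr' ?_)
  filter_upwards [eventually_gt_atTop 0] with t ht
  have ht0 : (t : ℂ) ≠ 0 := by exact_mod_cast ht.ne'
  have z1 : (t : ℂ) ^ (1 / 2 : ℂ) ≠ 0 := by simp [Complex.cpow_eq_zero_iff, ht0]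
  have e1 := qcs_theta_expand k hk t ht
  rw [qcs_theta_fe k hk t ht] at e1
  have e2 : ∀ a : UnitAddCircle, (HurwitzZeta.evenKernel a (1 / t) : ℂ) =
      (t : ℂ) ^ (1 / 2 : ℂ) * (HurwitzZeta.cosKernel a t : ℂ) := by
    intro a
    rw [HurwitzZeta.evenKernel_functional_equation, one_div_one_div, one_div t,
      Real.inv_rpow ht.le, one_div, inv_inv, Complex.ofReal_mul, Complex.ofReal_cpow ht.le]
    norm_num
  simp only [e2] at e1
  apply mul_left_cancel₀ z1
  rw [Finset.mul_sum]
  convert e1 using 1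
  · ring
  · apply Finset.sum_congr rfl; intros; ring

lemma qcs_re (k : ℕ) (hk : 0 < k) :
    (1 / (-Complex.I / k : ℂ) ^ (1 / 2 : ℂ)).re = Real.sqrt (2 * (k : ℝ)) / 2 := by
  have hkR : (0 : ℝ) < k := by exact_mod_cast hk
  have hk0 : (k : ℂ) ≠ 0 := by exact_mod_cast hk.ne'
  have e : (-Complex.I / k : ℂ) = (((k : ℝ)⁻¹ : ℝ) : ℂ) * (-Complex.I) := by push_cast; ring
  rw [e, Complex.cpow_def_of_ne_zero (by simp [hk0]), Complex.log_ofReal_mul (by positivity) (by simp),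
    Complex.log_neg_I, one_div, ← Complex.exp_neg, Real.log_inv]
  have e2 : -((((-Real.log k : ℝ) : ℂ) + -(π / 2) * Complex.I) * (1 / 2)) =
     ((Real.log k / 2 : ℝ) : ℂ) + ((π / 4 : ℝ) : ℂ) * Complex.I := by push_cast; ring
  have e3 : Real.exp (Real.log k / 2) = Real.sqrt k := by
    rw [Real.exp_half, Real.exp_log hkR]
  rw [e2, Complex.exp_re]
  simp only [Complex.add_re, Complex.add_im, Complex.ofReal_re, Complex.ofReal_im,
    Complex.mul_I_re, Complex.mul_I_im, neg_zero, add_zero, zero_add]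
  rw [e3, Real.cos_pi_div_four,
    Real.sqrt_mul (by norm_num)]
  ring

theorem quadratic_cosine_sum (k : ℕ) (hk : 0 < k) :
    ∑ n ∈ Finset.Icc 1 k, Real.cos (π * (n : ℝ) ^ 2 / k) =
      if Even k then Real.sqrt (2 * (k : ℝ)) / 2 else -1 := by
  have hkR : (k : ℝ) ≠ 0 := by exact_mod_cast hk.ne'
  have hlast : π * (k : ℝ) ^ 2 / k = k * π := by field_simp
  have hIcc : ∑ n ∈ Finset.Icc 1 k, Real.cos (π * (n : ℝ) ^ 2 / k) =
      ∑ n ∈ Finset.range k, Real.cos (π * (n : ℝ) ^ 2 / k) + Real.cos (k * π) - 1 := by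
    rw [← hlast, ← Finset.sum_range_succ (fun n : ℕ => Real.cos (π * (n : ℝ) ^ 2 / k)),
      Finset.range_eq_Ico, Finset.sum_eq_sum_Ico_succ_bot (by omega)]
    simp
    rfl
  rw [hIcc]
  split_ifs with h
  · have : NeZero k := ⟨hk.ne'⟩
    have h1 := congrArg Complex.re (qcs_gauss k h)
    rw [qcs_re k hk, Complex.re_sum, Fin.sum_univ_eq_sum_range
      (fun r : ℕ => (Complex.exp (π * Complex.I * (r : ℂ) ^ 2 / k)).re)] at h1
    rw [← h1, Real.cos_nat_mul_pi, h.neg_one_pow, add_sub_cancel_right]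
    apply Finset.sum_congr rfl
    intro n _
    rw [show (π * Complex.I * (n : ℂ) ^ 2 / k) = ((π * (n : ℝ) ^ 2 / k : ℝ) : ℂ) * Complex.I by
      push_cast; ring, Complex.exp_ofReal_mul_I_re]
  · rw [← hIcc]
    have hodd := Nat.not_even_iff_odd.mp h
    obtain ⟨j, rfl⟩ : ∃ j, k = j + 1 := ⟨k - 1, by omega⟩
    rw [Finset.sum_Icc_succ_top (by omega), hlast, Real.cos_nat_mul_pi, hodd.neg_one_pow]
    have : ∑ n ∈ Finset.Icc 1 j, Real.cos (π * (n : ℝ) ^ 2 / (j + 1 : ℕ)) =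
        ∑ n ∈ Finset.Icc 1 j, -Real.cos (π * (n : ℝ) ^ 2 / (j + 1 : ℕ)) := by
      refine Finset.sum_bij' (fun n _ => j + 1 - n) (fun n _ => j + 1 - n) ?_ ?_ ?_ ?_ ?_
      · intro n hn; simp only [Finset.mem_Icc] at *; omega
      · intro n hn; simp only [Finset.mem_Icc] at *; omega
      · intro n hn; simp only [Finset.mem_Icc] at *; omega
      · intro n hn; simp only [Finset.mem_Icc] at *; omega
      · intro n hn
        simp only [Finset.mem_Icc] at hn
        rw [Nat.cast_sub (by omega)]
        have : π * (((j + 1 : ℕ) : ℝ) - n) ^ 2 / (j + 1 : ℕ) =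
          (π * (n : ℝ) ^ 2 / (j + 1 : ℕ) + (j + 1 : ℕ) * π) - n * (2 * π) := by
          field_simp
          ring
        rw [this, Real.cos_sub_nat_mul_two_pi, Real.cos_add_nat_mul_pi, hodd.neg_one_pow]
        ring
    rw [Finset.sum_neg_distrib] at this
    linarith
end

section
/- For every positive integer k, ∑_{n=1}^{k} sin(π (2n-1)² / (4k)) = ∑_{n=1}^{k} cos(π (2n-1)² / (4k)) = -√(2k) * ((-1)^k - 1)/4; that is, both sums vanish for even k and both equal √(2k)/2 for odd k. -/
open Finset Real

lemma oq_even (f : ℕ → ℝ) (k : ℕ) (h : ∀ n ∈ Finset.Icc 1 k, f (k + 1 - n) = - f n) :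
    ∑ n ∈ Finset.Icc 1 k, f n = 0 := by
  have h1 : ∑ n ∈ Finset.Icc 1 k, f n = ∑ n ∈ Finset.Icc 1 k, f (k + 1 - n) := by
    refine Finset.sum_nbij' (fun n => k + 1 - n) (fun n => k + 1 - n) ?_ ?_ ?_ ?_ ?_
    · intro n hn; simp only [Finset.mem_Icc] at *; omega
    · intro n hn; simp only [Finset.mem_Icc] at *; omega
    · intro n hn; simp only [Finset.mem_Icc] at *; omega
    · intro n hn; simp only [Finset.mem_Icc] at *; omega
    · intro n hn
      simp only [Finset.mem_Icc] at hn
      congr 1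
      omega
  rw [Finset.sum_congr rfl h, Finset.sum_neg_distrib] at h1
  linarith

lemma oq_angle (k n : ℕ) (hk : 0 < k) (hn : n ≤ k + 1) (j : ℕ) (hj : k = j + j) :
    π * (2 * ((k + 1 - n : ℕ) : ℝ) - 1) ^ 2 / (4 * k) =
      π * (2 * (n : ℝ) - 1) ^ 2 / (4 * k) + π + ((j - n : ℤ) : ℝ) * (2 * π) := by
  rw [Nat.cast_sub hn]
  have : (k : ℝ) = j + j := by exact_mod_cast hj
  have h0 : (k : ℝ) ≠ 0 := by positivity
  have hj0 : (j : ℝ) ≠ 0 := by intro h; simp [h] at this; omega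
  push_cast
  rw [this]
  field_simp
  ring

/-- splitting over residues -/
lemma oq_split (k : ℕ) (hk : 0 < k) (hodd : Odd k) (x : ℝ) (hx : 0 < x) (A : ℂ)
    (hA : HasSum (fun n : ℤ => Complex.exp (π * Complex.I * (n + 1/2) ^ 2 *
      ((1 + Complex.I * x / k) / k))) A) :
    A = ∑ r : Fin k, Complex.exp (π * Complex.I * ((r : ℕ) + 1/2) ^ 2 / k) *
      (HurwitzZeta.evenKernel ((((r : ℕ) + 1/2) / k : ℝ) : UnitAddCircle) x : ℂ) := by
  have : NeZero k := ⟨hk.ne'⟩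
  have hk0 : (k : ℂ) ≠ 0 := by exact_mod_cast hk.ne'
  have h1 := ((Equiv.prodComm (Fin k) ℤ).trans (Int.divModEquiv k).symm).hasSum_iff.mpr hA
  have h2 := h1.prod_fiberwise (g := fun r : Fin k => Complex.exp (π * Complex.I * ((r : ℕ) + 1/2) ^ 2 / k) *
      (HurwitzZeta.evenKernel ((((r : ℕ) + 1/2) / k : ℝ) : UnitAddCircle) x : ℂ)) ?_
  · exact h2.unique (hasSum_fintype _)
  intro r
  have h3 := (Complex.hasSum_ofReal.mpr (HurwitzZeta.hasSum_int_evenKernel (((r : ℕ) + 1/2) / k) hx)).mul_left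
    (Complex.exp (π * Complex.I * ((r : ℕ) + 1/2) ^ 2 / k))
  refine h3.congr_fun fun m => ?_
  obtain ⟨j, hj⟩ := hodd
  have hev : ∃ q : ℤ, m * (2 * r + 1) + k * m ^ 2 = 2 * q := by
    rcases Int.even_or_odd' m with ⟨c, rfl | rfl⟩
    · exact ⟨c * (2 * r + 1) + k * 2 * c^2, by ring⟩
    · exact ⟨c * (2 * r + 1) + r + 1 + j + k * (2 * c^2 + 2 * c), by
        have hj' : (k : ℤ) = 2 * j + 1 := by exact_mod_cast hj
        linear_combination hj'⟩
  obtain ⟨q, hq⟩ := hev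
  have hq' : (m : ℂ) * (2 * (r : ℕ) + 1) + k * m ^ 2 = 2 * q := by exact_mod_cast hq
  simp only [Function.comp, Equiv.trans_apply, Equiv.prodComm_apply, Prod.swap, Int.divModEquiv,
    Equiv.coe_fn_symm_mk]
  rw [Complex.ofReal_exp, ← Complex.exp_add, Complex.exp_eq_exp_iff_exists_int]
  refine ⟨q, ?_⟩
  rw [show (q : ℂ) * (2 * π * Complex.I) = (2 * q) * (π * Complex.I) by ring, ← hq']
  push_cast
  field_simp
  ring_nf
  simp only [Complex.I_sq]
  ring

lemma oq_theta (k : ℕ) (hk : 0 < k) (hodd : Odd k) (x : ℝ) (hx : 0 < x) :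
    HasSum (fun n : ℤ => Complex.exp (π * Complex.I * (n + 1/2) ^ 2 *
      ((1 + Complex.I * x / k) / k)))
    (1 / (-Complex.I * ((1 + Complex.I * x / k) / k)) ^ (1 / 2 : ℂ) *
      (1 / (x / (1 + Complex.I * x / k)) ^ (1 / 2 : ℂ) *
        jacobiTheta (Complex.I / x - 1 / k))) := by
  have hk0 : (k : ℂ) ≠ 0 := by exact_mod_cast hk.ne'
  have hx0 : (x : ℂ) ≠ 0 := by exact_mod_cast hx.ne'
  have hkr : (0:ℝ) < k := by exact_mod_cast hk
  set u : ℂ := 1 + Complex.I * x / k with hu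
  set τ : ℂ := u / k with hτ
  have hui : u = (1:ℝ) + ((x / k : ℝ) : ℂ) * Complex.I := by rw [hu]; push_cast; ring
  have hu0 : u ≠ 0 := by
    intro h
    have := congrArg Complex.re h
    rw [hui] at this; simp at this
  have hτim : 0 < τ.im := by
    have : τ = ((1 / k : ℝ) : ℂ) + ((x / k / k : ℝ) : ℂ) * Complex.I := by
      rw [hτ, hui]; push_cast; ring
    rw [this]; simp; positivity
  have hτ0 : τ ≠ 0 := div_ne_zero hu0 hk0
  have h1 := (hasSum_jacobiTheta₂_term (τ / 2) hτim).mul_left (Complex.exp (π * Complex.I * τ / 4))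
  have e1 : jacobiTheta₂ (1 / 2) (-1 / τ) = jacobiTheta (Complex.I * x / u) := by
    rw [jacobiTheta_eq_jacobiTheta₂]
    refine tsum_congr fun n => ?_
    rw [jacobiTheta₂_term, jacobiTheta₂_term, Complex.exp_eq_exp_iff_exists_int]
    obtain ⟨j, hj⟩ := hodd
    have hev : ∃ q : ℤ, n - k * n ^ 2 = 2 * q := by
      rcases Int.even_or_odd' n with ⟨c, rfl | rfl⟩
      · exact ⟨c - k * 2 * c^2, by ring⟩
      · exact ⟨c - j - k * (2 * c^2 + 2 * c), by rw [hj]; push_cast; ring⟩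
    obtain ⟨q, hq⟩ := hev
    have hq' : (n : ℂ) - k * n ^ 2 = 2 * q := by exact_mod_cast hq
    refine ⟨q, ?_⟩
    rw [show (q : ℂ) * (2 * π * Complex.I) = (2 * q) * (π * Complex.I) by ring, ← hq']
    have : -1 / τ = Complex.I * x / u - k := by
      rw [hτ]; field_simp; rw [hu]; field_simp; ring
    rw [this]; ring
  have e2 : jacobiTheta (Complex.I * x / u) =
      1 / (x / u) ^ (1 / 2 : ℂ) * jacobiTheta (Complex.I / x - 1 / k) := by
    rw [jacobiTheta_eq_jacobiTheta₂, jacobiTheta₂_functional_equation, jacobiTheta_eq_jacobiTheta₂]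
    have a1 : -Complex.I * (Complex.I * x / u) = x / u := by
      linear_combination (-(x:ℂ) / u) * Complex.I_sq
    have a2 : -1 / (Complex.I * x / u) = Complex.I / x - 1 / k := by
      have := Complex.I_ne_zero
      field_simp
      rw [hu]; field_simp
      linear_combination (-(k:ℂ)) * Complex.I_sq
    rw [a1, a2]; simp
  rw [jacobiTheta₂_functional_equation] at h1
  have a3 : τ / 2 / τ = 1 / 2 := by field_simp
  rw [a3, e1, e2] at h1
  have hval : 1 / (-Complex.I * τ) ^ (1 / 2 : ℂ) * (1 / ((x : ℂ) / u) ^ (1 / 2 : ℂ) *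
      jacobiTheta (Complex.I / x - 1 / k)) = Complex.exp (π * Complex.I * τ / 4) *
      (1 / (-Complex.I * τ) ^ (1 / 2 : ℂ) * Complex.exp (-π * Complex.I * (τ / 2) ^ 2 / τ) *
        (1 / ((x : ℂ) / u) ^ (1 / 2 : ℂ) * jacobiTheta (Complex.I / x - 1 / k))) := by
    have : Complex.exp (π * Complex.I * τ / 4) *
        Complex.exp (-π * Complex.I * (τ / 2) ^ 2 / τ) = 1 := by
      rw [← Complex.exp_add, Complex.exp_eq_one_iff]
      exact ⟨0, by field_simp; ring⟩
    linear_combination (-(1 / (-Complex.I * τ) ^ (1 / 2 : ℂ) * (1 / ((x : ℂ) / u) ^ (1 / 2 : ℂ) *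
      jacobiTheta (Complex.I / x - 1 / k)))) * this
  rw [hval]
  refine h1.congr_fun fun n => ?_
  rw [jacobiTheta₂_term, ← Complex.exp_add]
  congr 1; ring

open Filter Topology in
lemma oq_limL (a : UnitAddCircle) :
    Tendsto (fun x : ℝ => ((x ^ (1 / 2 : ℝ) * HurwitzZeta.evenKernel a x : ℝ) : ℂ))
      (𝓝[>] 0) (𝓝 1) := by
  rw [← Complex.ofReal_one]
  refine (Complex.continuous_ofReal.tendsto 1).comp ?_
  obtain ⟨p, hp, h⟩ := HurwitzZeta.isBigO_atTop_cosKernel_sub a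
  have h1 : Tendsto (fun x : ℝ => Real.exp (-p * x)) atTop (𝓝 0) := by
    refine Real.tendsto_exp_atBot.comp ?_
    exact tendsto_id.const_mul_atTop_of_neg (by linarith)
  have h2 := (h.trans_tendsto h1).add_const 1
  simp only [sub_add_cancel, zero_add] at h2
  refine (h2.comp tendsto_inv_nhdsGT_zero).congr' ?_
  filter_upwards [self_mem_nhdsWithin] with x hx
  have hx : 0 < x := hx
  have : x ^ (1 / 2 : ℝ) ≠ 0 := by positivity
  rw [HurwitzZeta.evenKernel_functional_equation]
  simp only [Function.comp, one_div] at *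
  field_simp

open Filter Topology in
lemma oq_limT (k : ℕ) :
    Tendsto (fun x : ℝ => jacobiTheta (Complex.I / x - 1 / k)) (𝓝[>] 0) (𝓝 1) := by
  have h1 : Tendsto (fun τ : ℂ => Real.exp (-π * τ.im)) (comap Complex.im atTop) (𝓝 0) := by
    refine Real.tendsto_exp_atBot.comp ?_
    exact (tendsto_comap.const_mul_atTop_of_neg (by linarith [Real.pi_pos]))
  have h2 := (isBigO_at_im_infty_jacobiTheta_sub_one.trans_tendsto h1).add_const 1
  simp only [sub_add_cancel, zero_add] at h2
  refine h2.comp (tendsto_comap_iff.mpr ?_)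
  refine tendsto_inv_nhdsGT_zero.congr fun x => ?_
  have : Complex.I / x - 1 / k = ((-1 / k : ℝ) : ℂ) + ((x⁻¹ : ℝ) : ℂ) * Complex.I := by
    push_cast; ring
  simp only [Function.comp]
  rw [this]; simp

open Filter Topology in
lemma oq_limR (k : ℕ) (hk : 0 < k) :
    Tendsto (fun x : ℝ => ((x ^ (1 / 2 : ℝ) : ℝ) : ℂ) *
    (1 / (-Complex.I * ((1 + Complex.I * x / k) / k)) ^ (1 / 2 : ℂ) *
      (1 / (x / (1 + Complex.I * x / k)) ^ (1 / 2 : ℂ) *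
        jacobiTheta (Complex.I / x - 1 / k)))) (𝓝[>] 0)
      (𝓝 (1 / (-Complex.I / k) ^ (1 / 2 : ℂ))) := by
  have hkr : (0:ℝ) < k := by exact_mod_cast hk
  have hu : Tendsto (fun x : ℝ => 1 + Complex.I * x / k) (𝓝[>] 0) (𝓝 1) := by
    have : Continuous (fun x : ℝ => 1 + Complex.I * x / k) := by fun_prop
    have := this.tendsto 0
    simp only [Complex.ofReal_zero, mul_zero, zero_div, add_zero] at this
    exact this.mono_left nhdsWithin_le_nhds
  have hI : -Complex.I / k = ((-1 / k : ℝ) : ℂ) * Complex.I := by push_cast; ring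
  have hs : -Complex.I / k ∈ Complex.slitPlane := by
    rw [Complex.mem_slitPlane_iff]; right
    rw [hI]; simp [hkr.ne']
  have l1 : Tendsto (fun x : ℝ => (-Complex.I * ((1 + Complex.I * x / k) / k)) ^ (1 / 2 : ℂ))
      (𝓝[>] 0) (𝓝 ((-Complex.I / k) ^ (1 / 2 : ℂ))) := by
    have := (hu.div_const (k : ℂ)).const_mul (-Complex.I)
    rw [mul_one_div] at this
    exact this.cpow tendsto_const_nhds hs
  have l2 : Tendsto (fun x : ℝ => (1 / (1 + Complex.I * x / k)) ^ (1 / 2 : ℂ))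
      (𝓝[>] 0) (𝓝 1) := by
    have := ((tendsto_const_nhds (x := (1 : ℂ))).div hu one_ne_zero).cpow (tendsto_const_nhds (x := (1 / 2 : ℂ)))
      (by simp)
    simpa using this
  have hne : (-Complex.I / k) ^ (1 / 2 : ℂ) ≠ 0 := by
    rw [Complex.cpow_ne_zero_iff]
    exact Or.inl (Complex.slitPlane_ne_zero hs)
  have l3 := ((tendsto_const_nhds (x := (1 : ℂ))).div l1 hne).mul (((tendsto_const_nhds (x := (1 : ℂ))).div l2 one_ne_zero).mul (oq_limT k))
  simp only [div_one, mul_one] at l3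
  refine l3.congr' ?_
  filter_upwards [self_mem_nhdsWithin] with x hx
  have hx : 0 < x := hx
  have hxp : ((x ^ (1 / 2 : ℝ) : ℝ) : ℂ) ≠ 0 := by
    have : x ^ (1 / 2 : ℝ) ≠ 0 := by positivity
    exact_mod_cast this
  have hu0 : 1 / (1 + Complex.I * x / k) ≠ 0 := by
    apply one_div_ne_zero
    intro h
    have h := congrArg Complex.re h
    rw [show 1 + Complex.I * x / k = (1:ℝ) + ((x / k : ℝ) : ℂ) * Complex.I by push_cast; ring] at h
    simp at h
  have key : ((x : ℂ) / (1 + Complex.I * x / k)) ^ (1 / 2 : ℂ) =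
      ((x ^ (1 / 2 : ℝ) : ℝ) : ℂ) * (1 / (1 + Complex.I * x / k)) ^ (1 / 2 : ℂ) := by
    have hx0 : (x : ℂ) ≠ 0 := by exact_mod_cast hx.ne'
    rw [div_eq_mul_one_div, Complex.ofReal_cpow hx.le,
      Complex.cpow_def_of_ne_zero (mul_ne_zero hx0 hu0), Complex.log_ofReal_mul hx hu0,
      Complex.cpow_def_of_ne_zero hx0, Complex.cpow_def_of_ne_zero hu0, ← Complex.exp_add,
      Complex.ofReal_log hx.le]
    congr 1
    push_cast
    ring
  rw [key]
  simp only [Pi.div_apply]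
  field_simp

lemma oq_sqrt (k : ℕ) (hk : 0 < k) :
    1 / (-Complex.I / k) ^ (1 / 2 : ℂ) = ((√(2 * k) / 2 : ℝ) : ℂ) * (1 + Complex.I) := by
  have hkr : (0:ℝ) < k := by exact_mod_cast hk
  have hs : (0:ℝ) < √(2 * k) := by positivity
  have hsq : ((√(2 * k) : ℝ) : ℂ) ^ 2 = 2 * k := by
    rw [← Complex.ofReal_pow, Real.sq_sqrt (by positivity)]; push_cast; ring
  have hs0 : ((√(2 * k) : ℝ) : ℂ) ≠ 0 := by exact_mod_cast hs.ne'
  have hk0 : (k : ℂ) ≠ 0 := by exact_mod_cast hk.ne'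
  set c : ℂ := ((1 / √(2 * k) : ℝ) : ℂ) * (1 - Complex.I) with hc
  have h1 : -Complex.I / k = c ^ 2 := by
    rw [hc, mul_pow]; push_cast
    rw [div_pow, hsq]
    field_simp
    linear_combination -Complex.I_sq
  have h2 : 0 < c.re := by
    rw [hc, Complex.re_ofReal_mul]; simp; positivity
  rw [h1, one_div (2 : ℂ), Complex.sq_cpow_two_inv h2]
  have h3 : c ≠ 0 := by intro h; simp [h] at h2
  rw [div_eq_iff h3, hc]
  push_cast
  field_simp
  linear_combination Complex.I_sq

open Filter Topology in
lemma oq_odd (k : ℕ) (hk : 0 < k) (hodd : Odd k) :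
    ∑ r : Fin k, Complex.exp (π * Complex.I * ((r : ℕ) + 1/2) ^ 2 / k) =
      ((√(2 * k) / 2 : ℝ) : ℂ) * (1 + Complex.I) := by
  rw [← oq_sqrt k hk]
  have hL : Tendsto (fun x : ℝ => ∑ r : Fin k,
      Complex.exp (π * Complex.I * ((r : ℕ) + 1/2) ^ 2 / k) *
      ((x ^ (1 / 2 : ℝ) * HurwitzZeta.evenKernel
        ((((r : ℕ) + 1/2) / k : ℝ) : UnitAddCircle) x : ℝ) : ℂ)) (𝓝[>] 0)
      (𝓝 (∑ r : Fin k, Complex.exp (π * Complex.I * ((r : ℕ) + 1/2) ^ 2 / k) * 1)) :=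
    tendsto_finsetSum _ fun r _ => (oq_limL _).const_mul _
  simp only [mul_one] at hL
  refine tendsto_nhds_unique (hL.congr' ?_) (oq_limR k hk)
  filter_upwards [self_mem_nhdsWithin] with x hx
  rw [oq_split k hk hodd x hx _ (oq_theta k hk hodd x hx), Finset.mul_sum]
  refine Finset.sum_congr rfl fun r _ => ?_
  push_cast
  ring

theorem odd_indexed_quadratic_sums (k : ℕ) (hk : 0 < k) :
    (∑ n ∈ Finset.Icc 1 k, Real.sin (π * (2 * (n : ℝ) - 1) ^ 2 / (4 * k)) =
        -Real.sqrt (2 * (k : ℝ)) * ((-1 : ℝ) ^ k - 1) / 4) ∧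
    (∑ n ∈ Finset.Icc 1 k, Real.cos (π * (2 * (n : ℝ) - 1) ^ 2 / (4 * k)) =
        -Real.sqrt (2 * (k : ℝ)) * ((-1 : ℝ) ^ k - 1) / 4) := by
  rcases Nat.even_or_odd k with hev | hodd
  · rw [hev.neg_one_pow]
    obtain ⟨j, hj⟩ := hev
    simp only [sub_self, mul_zero, zero_div]
    constructor
    · refine oq_even (fun n => Real.sin (π * (2 * (n : ℝ) - 1) ^ 2 / (4 * k))) k fun n hn => ?_
      simp only [Finset.mem_Icc] at hn
      rw [oq_angle k n hk (by omega) j hj, Real.sin_add_int_mul_two_pi, Real.sin_add_pi]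
    · refine oq_even (fun n => Real.cos (π * (2 * (n : ℝ) - 1) ^ 2 / (4 * k))) k fun n hn => ?_
      simp only [Finset.mem_Icc] at hn
      rw [oq_angle k n hk (by omega) j hj, Real.cos_add_int_mul_two_pi, Real.cos_add_pi]
  · have h := oq_odd k hk hodd
    have hsum : ∀ f : ℝ → ℝ, ∑ n ∈ Finset.Icc 1 k, f (π * (2 * (n : ℝ) - 1) ^ 2 / (4 * k)) =
        ∑ r : Fin k, f (π * ((r : ℕ) + 1/2) ^ 2 / k) := by
      intro f
      rw [Fin.sum_univ_eq_sum_range (fun r => f (π * ((r : ℕ) + 1/2) ^ 2 / k)) k]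
      refine Finset.sum_nbij' (fun n => n - 1) (fun n => n + 1) ?_ ?_ ?_ ?_ ?_
      · intro n hn; simp only [Finset.mem_Icc, Finset.mem_range] at *; omega
      · intro n hn; simp only [Finset.mem_Icc, Finset.mem_range] at *; omega
      · intro n hn; simp only [Finset.mem_Icc] at *; omega
      · intro n hn; simp
      · intro n hn
        simp only [Finset.mem_Icc] at hn
        rw [Nat.cast_sub hn.1]
        have h0 : (k : ℝ) ≠ 0 := by positivity
        congr 1
        push_cast
        field_simp
        ring
    rw [hodd.neg_one_pow, hsum, hsum]
    have he : ∀ r : Fin k, Complex.exp (π * Complex.I * ((r : ℕ) + 1/2) ^ 2 / k) =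
        (Real.cos (π * ((r : ℕ) + 1/2) ^ 2 / k) : ℂ) +
        (Real.sin (π * ((r : ℕ) + 1/2) ^ 2 / k) : ℂ) * Complex.I := by
      intro r
      rw [Complex.ofReal_cos, Complex.ofReal_sin, ← Complex.exp_mul_I]
      congr 1
      push_cast
      ring
    simp only [he] at h
    rw [Finset.sum_add_distrib, ← Finset.sum_mul, ← Complex.ofReal_sum, ← Complex.ofReal_sum] at h
    have hre := congrArg Complex.re h
    have him := congrArg Complex.im h
    rw [Complex.re_ofReal_mul] at hre
    rw [Complex.im_ofReal_mul] at him
    simp only [Complex.add_re, Complex.add_im, Complex.ofReal_re, Complex.ofReal_im,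
      Complex.re_ofReal_mul, Complex.im_ofReal_mul, Complex.I_re, Complex.I_im,
      Complex.one_re, Complex.one_im] at hre him
    constructor <;> linarith
end
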